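/- arXiv:2401.06555 — 2 statements merged into one kernel-verified Lean document; each statement's English description precedes it below -/
import Mathlib

section
/- Let Δ be an integer with Δ > 10^80, and suppose that nonnegative integers x, y, x₁, y₁ satisfy 2^x·3^y − 2^{x₁}·3^{y₁} = Δ. Then 2^x·3^y < Δ · (log Δ)^{60·log log Δ}. -/
theorem Nat.log_le_log_add_factorization_choose {p k m : ℕ} (hp : p.Prime) (hm : 0 < m)
    (hkm : k ≤ m) : p.log (m + k) ≤ p.log m + ((m + k).choose k).factorization p := by
  by_cases hlog : p.log (m + k) ≤ p.log m
  · exact hlog.trans (Nat.le_add_right _ _)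
  push Not at hlog
  have h1 : p.log (m + k) ≤ p.log m + 1 := by
    rw [← Nat.log_mul_base hp.one_lt hm.ne']
    exact Nat.log_mono_right (by nlinarith [hp.two_le])
  have h2 : 1 ≤ ((m + k).choose k).factorization p := by
    rw [Nat.factorization_choose' hp (Nat.lt_succ_self _)]
    refine Finset.card_pos.mpr ⟨p.log (m + k), ?_⟩
    have hlt : m < p ^ p.log (m + k) := Nat.lt_pow_of_log_lt hp.one_lt hlog
    have hle : p ^ p.log (m + k) ≤ m + k := Nat.pow_log_le_self p (by omega)
    rw [Finset.mem_filter, Finset.mem_Ico, Nat.mod_eq_of_lt hlt,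
      Nat.mod_eq_of_lt (hkm.trans_lt hlt)]
    exact ⟨⟨by omega, Nat.lt_succ_self _⟩, by omega⟩
  omega

theorem Nat.lcmUpto_add_dvd {k m : ℕ} (hm : 0 < m) (hkm : k ≤ m) :
    (m + k).lcmUpto ∣ m.lcmUpto * (m + k).choose k := by
  have hc : (m + k).choose k ≠ 0 := (Nat.choose_pos (Nat.le_add_left k m)).ne'
  rw [← Nat.factorization_prime_le_iff_dvd (Nat.lcmUpto_ne_zero _)
    (mul_ne_zero (Nat.lcmUpto_ne_zero _) hc)]
  intro p hp
  rw [Nat.factorization_mul (Nat.lcmUpto_ne_zero _) hc, Finsupp.add_apply,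
    Nat.factorization_lcmUpto _ hp, Nat.factorization_lcmUpto _ hp]
  exact Nat.log_le_log_add_factorization_choose hp hm hkm

theorem Nat.lcmUpto_le_four_pow (n : ℕ) : n.lcmUpto ≤ 4 ^ n := by
  induction n using Nat.strong_induction_on with
  | _ n ih =>
    rcases n with _ | _ | n
    · decide
    · decide
    obtain ⟨k, hk | hk⟩ : ∃ k, n = 2 * k ∨ n = 2 * k + 1 := ⟨n / 2, by omega⟩
    · have hdvd := Nat.lcmUpto_add_dvd (k := k + 1) (m := k + 1) (by omega) le_rfl
      have hle := Nat.le_of_dvd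
        (Nat.mul_pos (Nat.lcmUpto_pos _) (Nat.choose_pos (by omega))) hdvd
      have hc : (k + 1 + (k + 1)).choose (k + 1) ≤ 4 ^ (k + 1) := by
        rw [← two_mul]
        exact Nat.centralBinom_le_four_pow (k + 1)
      calc (n + 1 + 1).lcmUpto = (k + 1 + (k + 1)).lcmUpto := by congr 1; omega
        _ ≤ _ := hle
        _ ≤ 4 ^ (k + 1) * 4 ^ (k + 1) := Nat.mul_le_mul (ih _ (by omega)) hc
        _ = 4 ^ (n + 1 + 1) := by rw [← pow_add]; congr 1; omega
    · have hdvd := Nat.lcmUpto_add_dvd (k := k + 1) (m := k + 2) (by omega) (by omega)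
      have hle := Nat.le_of_dvd
        (Nat.mul_pos (Nat.lcmUpto_pos _) (Nat.choose_pos (by omega))) hdvd
      have hc : (k + 2 + (k + 1)).choose (k + 1) ≤ 4 ^ (k + 1) := by
        have := Nat.choose_middle_le_pow (k + 1)
        rwa [show 2 * (k + 1) + 1 = k + 2 + (k + 1) by ring] at this
      calc (n + 1 + 1).lcmUpto = (k + 2 + (k + 1)).lcmUpto := by congr 1; omega
        _ ≤ _ := hle
        _ ≤ 4 ^ (k + 2) * 4 ^ (k + 1) := Nat.mul_le_mul (ih _ (by omega)) hc
        _ = 4 ^ (n + 1 + 1) := by rw [← pow_add]; congr 1; omega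

theorem kernel_bernstein_eight_nine {w z : ℝ} (hw : 0 ≤ w) (hz : 0 ≤ z) :
    1775 * (w ^ 2 * z ^ 3 * (w + 2 * z) * (3 * w + 4 * z) ^ 4) ≤
      (9 * w + 8 * z) ^ 5 * (w + z) ^ 5 := by
  have h : (9 * w + 8 * z) ^ 5 * (w + z) ^ 5 -
      1775 * (w ^ 2 * z ^ 3 * (w + 2 * z) * (3 * w + 4 * z) ^ 4) =
    32768 * z ^ 10 + 348160 * (w * z ^ 9) + 755200 * (w ^ 2 * z ^ 8) +
      1530240 * (w ^ 3 * z ^ 7) + 4319080 * (w ^ 4 * z ^ 6) + 8071217 * (w ^ 5 * z ^ 5) +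
      8788815 * (w ^ 6 * z ^ 4) + 5818635 * (w ^ 7 * z ^ 3) + 2369250 * (w ^ 8 * z ^ 2) +
      557685 * (w ^ 9 * z) + 59049 * w ^ 10 := by
    ring
  have h0 : 0 ≤ (9 * w + 8 * z) ^ 5 * (w + z) ^ 5 -
      1775 * (w ^ 2 * z ^ 3 * (w + 2 * z) * (3 * w + 4 * z) ^ 4) := by
    rw [h]
    positivity
  linarith

theorem kernel_bernstein_nine_ten {w z : ℝ} (hw : 0 ≤ w) (hz : 0 ≤ z) :
    1775 * ((2 * w + z) ^ 2 * w ^ 3 * z * (2 * w + 3 * z) ^ 4) ≤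
      (10 * w + 9 * z) ^ 5 * (w + z) ^ 5 := by
  have h : (10 * w + 9 * z) ^ 5 * (w + z) ^ 5 -
      1775 * ((2 * w + z) ^ 2 * w ^ 3 * z * (2 * w + 3 * z) ^ 4) =
    59049 * z ^ 10 + 623295 * (w * z ^ 9) + 2959740 * (w ^ 2 * z ^ 8) +
      8182215 * (w ^ 3 * z ^ 7) + 14407245 * (w ^ 4 * z ^ 6) + 16947199 * (w ^ 5 * z ^ 5) +
      13835450 * (w ^ 6 * z ^ 4) + 8035400 * (w ^ 7 * z ^ 3) + 3264800 * (w ^ 8 * z ^ 2) +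
      836400 * (w ^ 9 * z) + 100000 * w ^ 10 := by
    ring
  have h0 : 0 ≤ (10 * w + 9 * z) ^ 5 * (w + z) ^ 5 -
      1775 * ((2 * w + z) ^ 2 * w ^ 3 * z * (2 * w + 3 * z) ^ 4) := by
    rw [h]
    positivity
  linarith

theorem kernel_bernstein_ten_eleven {w z : ℝ} (hw : 0 ≤ w) (hz : 0 ≤ z) :
    1775 * ((3 * w + 2 * z) ^ 2 * (2 * w + z) ^ 3 * w * (w + 2 * z) ^ 4) ≤
      (11 * w + 10 * z) ^ 5 * (w + z) ^ 5 := by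
  have h : (11 * w + 10 * z) ^ 5 * (w + z) ^ 5 -
      1775 * ((3 * w + 2 * z) ^ 2 * (2 * w + z) ^ 3 * w * (w + 2 * z) ^ 4) =
    100000 * z ^ 10 + 936400 * (w * z ^ 9) + 3710400 * (w ^ 2 * z ^ 8) +
      8002200 * (w ^ 3 * z ^ 7) + 10037450 * (w ^ 4 * z ^ 6) + 7210001 * (w ^ 5 * z ^ 5) +
      2710055 * (w ^ 6 * z ^ 4) + 521035 * (w ^ 7 * z ^ 3) + 229510 * (w ^ 8 * z ^ 2) +
      152805 * (w ^ 9 * z) + 33251 * w ^ 10 := by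
    ring
  have h0 : 0 ≤ (11 * w + 10 * z) ^ 5 * (w + z) ^ 5 -
      1775 * ((3 * w + 2 * z) ^ 2 * (2 * w + z) ^ 3 * w * (w + 2 * z) ^ 4) := by
    rw [h]
    positivity
  linarith

theorem kernel_bernstein_eleven_twelve {w z : ℝ} (hw : 0 ≤ w) (hz : 0 ≤ z) :
    1775 * ((4 * w + 3 * z) ^ 2 * (3 * w + 2 * z) ^ 3 * (2 * w + z) * z ^ 4) ≤
      (12 * w + 11 * z) ^ 5 * (w + z) ^ 5 := by
  have h : (12 * w + 11 * z) ^ 5 * (w + z) ^ 5 -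
      1775 * ((4 * w + 3 * z) ^ 2 * (3 * w + 2 * z) ^ 3 * (2 * w + z) * z ^ 4) =
    33251 * z ^ 10 + 512215 * (w * z ^ 9) + 3464200 * (w ^ 2 * z ^ 8) +
      13068165 * (w ^ 3 * z ^ 7) + 30159085 * (w ^ 4 * z ^ 6) + 44445383 * (w ^ 5 * z ^ 5) +
      42485820 * (w ^ 6 * z ^ 4) + 26264160 * (w ^ 7 * z ^ 3) + 10281600 * (w ^ 8 * z ^ 2) +
      2384640 * (w ^ 9 * z) + 248832 * w ^ 10 := by
    ring
  have h0 : 0 ≤ (12 * w + 11 * z) ^ 5 * (w + z) ^ 5 -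
      1775 * ((4 * w + 3 * z) ^ 2 * (3 * w + 2 * z) ^ 3 * (2 * w + z) * z ^ 4) := by
    rw [h]
    positivity
  linarith

theorem abs_kernel_le {x : ℝ} (h8 : 8 ≤ x) (h12 : x ≤ 12) :
    |(8 - x) ^ 2 * (9 - x) ^ 3 * (10 - x) * (12 - x) ^ 4 / x ^ 5| ≤ 1 / 1775 := by
  have hx : 0 < x ^ 5 := by positivity
  suffices h : 1775 * |(8 - x) ^ 2 * (9 - x) ^ 3 * (10 - x) * (12 - x) ^ 4| ≤ x ^ 5 by
    rw [abs_div, abs_of_pos hx, div_le_div_iff₀ hx (by norm_num)]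
    linarith
  rcases le_total x 9 with h9 | h9
  · rw [abs_of_nonneg (mul_nonneg (mul_nonneg (mul_nonneg (sq_nonneg _)
      (pow_nonneg (by linarith) _)) (by linarith)) (pow_nonneg (by linarith) _))]
    convert kernel_bernstein_eight_nine (w := x - 8) (z := 9 - x) (by linarith) (by linarith)
      using 1 <;> ring
  have h3 : |9 - x| = x - 9 := by rw [abs_of_nonpos (by linarith)]; ring
  have h4 : |12 - x| = 12 - x := abs_of_nonneg (by linarith)
  have h2 : |8 - x| = x - 8 := by rw [abs_of_nonpos (by linarith)]; ring
  simp only [abs_mul, abs_pow, h2, h3, h4]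
  rcases le_total x 10 with h10 | h10
  · rw [abs_of_nonneg (by linarith : 0 ≤ 10 - x)]
    convert kernel_bernstein_nine_ten (w := x - 9) (z := 10 - x) (by linarith) (by linarith)
      using 1 <;> ring
  rw [abs_of_nonpos (by linarith : 10 - x ≤ 0)]
  rcases le_total x 11 with h11 | h11
  · convert kernel_bernstein_ten_eleven (w := x - 10) (z := 11 - x) (by linarith) (by linarith)
      using 1 <;> ring
  · convert kernel_bernstein_eleven_twelve (w := x - 11) (z := 12 - x) (by linarith)
      (by linarith) using 1 <;> ring

open Polynomial in
/-- An antiderivative of `x ↦ P(-x) / x ^ (e + 1)` on the positive half-line. -/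
noncomputable def laurentPrimitive (P : ℕ[X]) (e : ℕ) (x : ℝ) : ℝ :=
  (-1) ^ e * P.coeff e * Real.log x +
    ∑ k ∈ (Finset.range (P.natDegree + 1)).erase e,
      (-1) ^ k * P.coeff k * (x ^ ((k : ℤ) - e) / ((k : ℤ) - e : ℤ))

open Polynomial in
theorem hasDerivAt_laurentPrimitive {P : ℕ[X]} {e : ℕ} (he : e ≤ P.natDegree) {x : ℝ}
    (hx : 0 < x) :
    HasDerivAt (laurentPrimitive P e) (aeval (-x) P / x ^ (e + 1)) x := by
  have hterm : ∀ k ∈ (Finset.range (P.natDegree + 1)).erase e,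
      HasDerivAt (fun x : ℝ ↦ (-1) ^ k * (P.coeff k : ℝ) *
        (x ^ ((k : ℤ) - e) / ((k : ℤ) - e : ℤ)))
        ((P.coeff k : ℝ) * (-x) ^ k / x ^ (e + 1)) x := by
    intro k hk
    have hke : (((k : ℤ) - e : ℤ) : ℝ) ≠ 0 := by
      have : k ≠ e := (Finset.mem_erase.mp hk).1
      exact_mod_cast (by omega : (k : ℤ) - e ≠ 0)
    refine (((hasDerivAt_zpow ((k : ℤ) - e) x (Or.inl hx.ne')).div_const
      (((k : ℤ) - e : ℤ) : ℝ)).const_mul ((-1) ^ k * (P.coeff k : ℝ))).congr_deriv ?_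
    rw [mul_div_cancel_left₀ _ hke, neg_pow x k,
      show (k : ℤ) - e - 1 = (k : ℤ) - ((e + 1 : ℕ) : ℤ) by push_cast; ring,
      zpow_sub₀ hx.ne', zpow_natCast, zpow_natCast]
    ring
  have hlog : HasDerivAt (fun x : ℝ ↦ (-1) ^ e * (P.coeff e : ℝ) * Real.log x)
      ((P.coeff e : ℝ) * (-x) ^ e / x ^ (e + 1)) x := by
    refine ((Real.hasDerivAt_log hx.ne').const_mul
      ((-1) ^ e * (P.coeff e : ℝ))).congr_deriv ?_
    rw [neg_pow x e, pow_succ]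
    field_simp
  refine (hlog.add (HasDerivAt.fun_sum hterm)).congr_deriv ?_
  rw [Finset.add_sum_erase _ (fun k ↦ (P.coeff k : ℝ) * (-x) ^ k / x ^ (e + 1))
    (Finset.mem_range.mpr (Nat.lt_succ_of_le he)), ← Finset.sum_div, aeval_eq_sum_range]
  simp only [nsmul_eq_mul]

open Polynomial in
theorem exists_int_eq_mul_laurentPrimitive_sub {P : ℕ[X]} {e a D : ℕ} (ha : 0 < a)
    (hP : ∀ k, a ^ e ∣ P.coeff k * a ^ k)
    (hD : ∀ k ≤ P.natDegree, k ≠ e → (k : ℤ) - e ∣ D) :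
    ∃ N : ℤ, (D : ℝ) * (laurentPrimitive P e a - (-1) ^ e * P.coeff e * Real.log a) = N := by
  have hterm : ∀ k ∈ (Finset.range (P.natDegree + 1)).erase e, ∃ N : ℤ,
      (D : ℝ) * ((-1) ^ k * P.coeff k * ((a : ℝ) ^ ((k : ℤ) - e) / ((k : ℤ) - e : ℤ))) = N := by
    intro k hk
    obtain ⟨hke, hkd⟩ := Finset.mem_erase.mp hk
    obtain ⟨g, hg⟩ := hP k
    obtain ⟨d, hd⟩ := hD k (Nat.le_of_lt_succ (Finset.mem_range.mp hkd)) hke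
    have ha' : (a : ℝ) ≠ 0 := by positivity
    have hke' : (((k : ℤ) - e : ℤ) : ℝ) ≠ 0 := by
      exact_mod_cast (by omega : (k : ℤ) - e ≠ 0)
    have hd' : (D : ℝ) = (((k : ℤ) - e : ℤ) : ℝ) * d := by exact_mod_cast hd
    have hg' : (P.coeff k : ℝ) * (a : ℝ) ^ k = (a : ℝ) ^ e * g := by exact_mod_cast hg
    have hg'' : (P.coeff k : ℝ) * (a : ℝ) ^ ((k : ℤ) - e) = g := by
      rw [zpow_sub₀ ha', zpow_natCast, zpow_natCast, ← mul_div_assoc, hg',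
        mul_div_cancel_left₀ _ (pow_ne_zero _ ha')]
    refine ⟨d * ((-1) ^ k * g), ?_⟩
    push_cast at hd' hke' ⊢
    rw [hd', ← hg'']
    field_simp
  choose! N hN using hterm
  refine ⟨∑ k ∈ (Finset.range (P.natDegree + 1)).erase e, N k, ?_⟩
  rw [laurentPrimitive, add_sub_cancel_left, Finset.mul_sum, Int.cast_sum]
  exact Finset.sum_congr rfl hN

open Polynomial in
theorem coeff_mul_pos_of_coeff_pos {p q : ℕ[X]} {a b : ℕ} (hp : ∀ k ≤ a, 0 < p.coeff k)
    (hq : ∀ k ≤ b, 0 < q.coeff k) : ∀ k ≤ a + b, 0 < (p * q).coeff k := by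
  intro k hk
  rw [coeff_mul]
  exact Finset.sum_pos' (fun _ _ ↦ Nat.zero_le _) ⟨(min k a, k - min k a),
    Finset.HasAntidiagonal.mem_antidiagonal.mpr (Nat.add_sub_cancel' (min_le_left k a)),
    Nat.mul_pos (hp _ (by omega)) (hq _ (by omega))⟩

open Polynomial in
theorem coeff_X_add_C_pow_pos {a : ℕ} (ha : 0 < a) (m : ℕ) :
    ∀ k ≤ m, 0 < ((X + C a : ℕ[X]) ^ m).coeff k := by
  intro k hk
  rw [coeff_X_add_C_pow]
  exact Nat.mul_pos (pow_pos ha _) (Nat.choose_pos hk)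

open Polynomial in
theorem coeff_le_eval_one (p : ℕ[X]) (k : ℕ) : p.coeff k ≤ p.eval 1 := by
  rcases le_or_gt k p.natDegree with hk | hk
  · rw [eval_eq_sum_range]
    simp only [one_pow, mul_one]
    exact Finset.single_le_sum (f := p.coeff) (fun _ _ ↦ Nat.zero_le _)
      (Finset.mem_range.mpr (Nat.lt_succ_of_le hk))
  · rw [coeff_eq_zero_of_natDegree_lt hk]
    exact Nat.zero_le _

open Polynomial in
theorem pow_dvd_coeff_mul_pow {p : ℕ[X]} {a e : ℕ} (h : C (a ^ e) ∣ p.comp (C a * X)) (k : ℕ) :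
    a ^ e ∣ p.coeff k * a ^ k := by
  rw [← comp_C_mul_X_coeff]
  exact (C_dvd_iff_dvd_coeff _ _).mp h k

open Polynomial in
/-- The numerator, at `-x`, of the integrand defining simultaneous rational approximations to
`log (9 / 8)` and `log (4 / 3)`. -/
noncomputable def padeNumerator (n δ : ℕ) : ℕ[X] :=
  (X + C 8) ^ (4 * n + δ) * (X + C 9) ^ (6 * n + 1) * (X + C 10) ^ (2 * n) *
    (X + C 12) ^ (8 * n)

open Polynomial in
theorem aeval_padeNumerator_neg (n δ : ℕ) (x : ℝ) :
    aeval (-x) (padeNumerator n δ) =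
      (8 - x) ^ (4 * n + δ) * (9 - x) ^ (6 * n + 1) * (10 - x) ^ (2 * n) *
        (12 - x) ^ (8 * n) := by
  simp only [padeNumerator, map_mul, map_pow, map_add, aeval_X, aeval_C]
  simp only [eq_natCast, Nat.cast_ofNat, neg_add_eq_sub]

theorem natDegree_padeNumerator (n δ : ℕ) :
    (padeNumerator n δ).natDegree = 20 * n + δ + 1 := by
  have hne (a m : ℕ) : (Polynomial.X + Polynomial.C a) ^ m ≠ 0 :=
    pow_ne_zero m (Polynomial.X_add_C_ne_zero a)
  rw [padeNumerator,
    Polynomial.natDegree_mul (mul_ne_zero (mul_ne_zero (hne _ _) (hne _ _)) (hne _ _)) (hne _ _),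
    Polynomial.natDegree_mul (mul_ne_zero (hne _ _) (hne _ _)) (hne _ _),
    Polynomial.natDegree_mul (hne _ _) (hne _ _)]
  simp only [Polynomial.natDegree_pow, Polynomial.natDegree_X_add_C]
  ring

theorem coeff_padeNumerator_pos (n δ : ℕ) : 0 < (padeNumerator n δ).coeff (10 * n) :=
  coeff_mul_pos_of_coeff_pos
    (coeff_mul_pos_of_coeff_pos
      (coeff_mul_pos_of_coeff_pos (coeff_X_add_C_pow_pos (by norm_num) _)
        (coeff_X_add_C_pow_pos (by norm_num) _))
      (coeff_X_add_C_pow_pos (by norm_num) _))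
    (coeff_X_add_C_pow_pos (by norm_num) _) _ (by omega)

theorem coeff_padeNumerator_le {n δ : ℕ} (hδ : δ ≤ 1) (k : ℕ) :
    (padeNumerator n δ).coeff k ≤ 90 * (9 ^ 4 * 10 ^ 6 * 11 ^ 2 * 13 ^ 8) ^ n := by
  refine (coeff_le_eval_one _ k).trans ?_
  simp only [padeNumerator, Polynomial.eval_mul, Polynomial.eval_pow, Polynomial.eval_add,
    Polynomial.eval_X, Polynomial.eval_C]
  calc (1 + 8) ^ (4 * n + δ) * (1 + 9) ^ (6 * n + 1) * (1 + 10) ^ (2 * n) * (1 + 12) ^ (8 * n)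
      ≤ (1 + 8) ^ (4 * n + 1) * (1 + 9) ^ (6 * n + 1) * (1 + 10) ^ (2 * n) *
          (1 + 12) ^ (8 * n) := by gcongr; omega
    _ = _ := by
      simp only [mul_pow, ← pow_mul, pow_succ]
      ring

open Polynomial in
theorem pow_dvd_coeff_padeNumerator (n δ : ℕ) {a : ℕ} (ha : a = 8 ∨ a = 9 ∨ a = 12) (k : ℕ) :
    a ^ (10 * n) ∣ (padeNumerator n δ).coeff k * a ^ k := by
  have hfac (a b c u v : ℕ) (hu : a = c * u) (hv : b = c * v) (m : ℕ) :
      C (c ^ m) ∣ ((X + C b : ℕ[X]) ^ m).comp (C a * X) := by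
    refine ⟨(C u * X + C v) ^ m, ?_⟩
    rw [C_pow, ← mul_pow, pow_comp, add_comp, X_comp, C_comp, hu, hv, C_mul, C_mul]
    ring
  refine pow_dvd_coeff_mul_pow ?_ k
  simp only [padeNumerator, mul_comp]
  rcases ha with rfl | rfl | rfl
  · refine dvd_trans ?_ (mul_dvd_mul (mul_dvd_mul (mul_dvd_mul (hfac 8 8 8 1 1 rfl rfl _)
      (hfac 8 9 1 8 9 rfl rfl _)) (hfac 8 10 2 4 5 rfl rfl _)) (hfac 8 12 4 2 3 rfl rfl _))
    rw [← C_mul, ← C_mul, ← C_mul]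
    refine map_dvd C ⟨8 ^ δ, ?_⟩
    rw [show 8 = 2 ^ 3 by rfl, show 4 = 2 ^ 2 by rfl, one_pow]
    simp only [← pow_mul, ← pow_add, mul_one]
    ring
  · refine dvd_trans ?_ (mul_dvd_mul (mul_dvd_mul (mul_dvd_mul (hfac 9 8 1 9 8 rfl rfl _)
      (hfac 9 9 9 1 1 rfl rfl _)) (hfac 9 10 1 9 10 rfl rfl _)) (hfac 9 12 3 3 4 rfl rfl _))
    rw [← C_mul, ← C_mul, ← C_mul]
    refine map_dvd C ⟨9, ?_⟩
    rw [show 9 = 3 ^ 2 by rfl, one_pow, one_pow]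
    simp only [← pow_mul, ← pow_add, mul_one, one_mul]
    ring
  · refine dvd_trans ?_ (mul_dvd_mul (mul_dvd_mul (mul_dvd_mul (hfac 12 8 4 3 2 rfl rfl _)
      (hfac 12 9 3 4 3 rfl rfl _)) (hfac 12 10 2 6 5 rfl rfl _)) (hfac 12 12 12 1 1 rfl rfl _))
    rw [← C_mul, ← C_mul, ← C_mul]
    refine map_dvd C ⟨4 ^ δ * 3 * 2 ^ (6 * n) * 3 ^ (4 * n), ?_⟩
    rw [show 12 = 2 ^ 2 * 3 by rfl, show 4 = 2 ^ 2 by rfl]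
    simp only [mul_pow, ← pow_mul]
    ring

theorem padeIntegrand_eq (n δ : ℕ) {x : ℝ} (hx : x ≠ 0) :
    Polynomial.aeval (-x) (padeNumerator n δ) / x ^ (10 * n + 1) =
      ((8 - x) ^ 2 * (9 - x) ^ 3 * (10 - x) * (12 - x) ^ 4 / x ^ 5) ^ (2 * n) *
        ((8 - x) ^ δ * ((9 - x) / x)) := by
  rw [aeval_padeNumerator_neg]
  simp only [div_pow, mul_pow, ← pow_mul]
  field_simp
  ring

theorem abs_padeIntegrand_le {n δ : ℕ} (hδ : δ ≤ 1) {x : ℝ} (h8 : 8 ≤ x) (h12 : x ≤ 12) :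
    |Polynomial.aeval (-x) (padeNumerator n δ) / x ^ (10 * n + 1)| ≤ (1 / 1775) ^ (2 * n) := by
  have hx : 0 < x := by linarith
  rw [padeIntegrand_eq n δ hx.ne', abs_mul, abs_pow]
  have h1 : |(8 - x) ^ δ * ((9 - x) / x)| ≤ 1 := by
    rw [abs_mul, abs_div, abs_pow, abs_of_pos hx, ← mul_div_assoc, div_le_one hx]
    have hd : |8 - x| ^ δ ≤ 4 := by
      rcases (by omega : δ = 0 ∨ δ = 1) with rfl | rfl
      · norm_num
      · rw [pow_one, abs_le]
        constructor <;> linarith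
    have hn : |9 - x| ≤ x / 4 := by
      rw [abs_le]
      constructor <;> linarith
    calc |8 - x| ^ δ * |9 - x| ≤ 4 * (x / 4) :=
          mul_le_mul hd hn (abs_nonneg _) (by norm_num)
      _ = x := by ring
  calc _ ≤ (1 / 1775 : ℝ) ^ (2 * n) * 1 :=
        mul_le_mul (pow_le_pow_left₀ (abs_nonneg _) (abs_kernel_le h8 h12) _) h1
          (abs_nonneg _) (by positivity)
    _ = _ := mul_one _

theorem padeIntegrand_sign (n δ : ℕ) {x : ℝ} (h8 : 8 < x) :
    0 ≤ (-1) ^ δ * (9 - x) *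
      (Polynomial.aeval (-x) (padeNumerator n δ) / x ^ (10 * n + 1)) := by
  have hx : 0 < x := by linarith
  have h : (-1) ^ δ * (8 - x) ^ δ = (x - 8) ^ δ := by
    rw [← mul_pow]
    ring
  rw [padeIntegrand_eq n δ hx.ne',
    show ∀ u : ℝ, (-1) ^ δ * (9 - x) * (u * ((8 - x) ^ δ * ((9 - x) / x))) =
      ((-1) ^ δ * (8 - x) ^ δ) * u * ((9 - x) ^ 2 / x) by intro u; ring, h, pow_mul]
  have : 0 ≤ x - 8 := by linarith
  positivity

/-- Rational approximations of `log (9 / 8)` and `log (4 / 3)` with a common denominator; the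
remainders have opposite signs, governed by the parity of `δ`. -/
theorem exists_simultaneous_approx (n δ : ℕ) (hδ : δ ≤ 1) :
    ∃ q : ℕ, ∃ a b : ℤ, ∃ r₁ r₂ : ℝ,
      0 < q ∧ (q : ℝ) ≤ 1440 * 10 ^ (27 * n) ∧
      q * Real.log (9 / 8) = a + r₁ ∧ q * Real.log (4 / 3) = b + r₂ ∧
      0 ≤ (-1) ^ δ * r₁ ∧ (-1) ^ δ * r₂ ≤ 0 ∧
      |r₁| ≤ 16 / 3 ^ n ∧ |r₂| ≤ 3 * (16 / 3 ^ n) := by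
  set P := padeNumerator n δ with hPdef
  set e := 10 * n with hedef
  set D := (10 * n + 2).lcmUpto with hDdef
  set Φ := laurentPrimitive P e with hΦ
  have hdeg : P.natDegree = 20 * n + δ + 1 := natDegree_padeNumerator n δ
  have hD : ∀ k ≤ P.natDegree, k ≠ e → (k : ℤ) - e ∣ D := by
    intro k hk hke
    rw [← Int.natAbs_dvd, Int.natCast_dvd_natCast]
    have h1 : 1 ≤ ((k : ℤ) - e).natAbs := by omega
    have h2 : ((k : ℤ) - e).natAbs ≤ 10 * n + 2 := by omega
    exact Finset.dvd_lcm (f := id) (Finset.mem_Icc.mpr ⟨h1, h2⟩)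
  have hsign : (-1 : ℝ) ^ e = 1 := Even.neg_one_pow ⟨5 * n, by omega⟩
  have hint : ∀ a : ℕ, a = 8 ∨ a = 9 ∨ a = 12 →
      ∃ N : ℤ, (D : ℝ) * (Φ a - P.coeff e * Real.log a) = N := by
    intro a ha
    obtain ⟨N, hN⟩ := exists_int_eq_mul_laurentPrimitive_sub (e := e) (a := a) (by omega)
      (pow_dvd_coeff_padeNumerator n δ ha) hD
    exact ⟨N, by rw [← hN, hsign, one_mul]⟩
  obtain ⟨N₈, h₈⟩ := hint 8 (by simp)
  obtain ⟨N₉, h₉⟩ := hint 9 (by simp)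
  obtain ⟨N₁₂, h₁₂⟩ := hint 12 (by simp)
  push_cast at h₈ h₉ h₁₂
  have hderiv : ∀ x : ℝ, 0 < x →
      HasDerivAt Φ (Polynomial.aeval (-x) P / x ^ (10 * n + 1)) x := fun x hx ↦
    hasDerivAt_laurentPrimitive (by omega) hx
  have hmvt : ∀ u v : ℝ, 8 ≤ u → u < v → ∃ c ∈ Set.Ioo u v,
      Φ v - Φ u = (v - u) * (Polynomial.aeval (-c) P / c ^ (10 * n + 1)) := by
    intro u v hu huv
    obtain ⟨c, hc, h⟩ := exists_hasDerivAt_eq_slope Φ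
      (fun x ↦ Polynomial.aeval (-x) P / x ^ (10 * n + 1)) huv
      (fun x hx ↦ (hderiv x (by linarith [hx.1])).continuousAt.continuousWithinAt)
      (fun x hx ↦ hderiv x (by linarith [hx.1]))
    refine ⟨c, hc, ?_⟩
    have : v - u ≠ 0 := by linarith
    rw [h]
    field_simp
  obtain ⟨c, ⟨hc8, hc9⟩, hc⟩ := hmvt 8 9 le_rfl (by norm_num)
  obtain ⟨d, ⟨hd9, hd12⟩, hd⟩ := hmvt 9 12 (by norm_num) (by norm_num)
  have hDpos : (0 : ℝ) ≤ D := Nat.cast_nonneg _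
  have hDle : (D : ℝ) ≤ 4 ^ (10 * n + 2) := by
    exact_mod_cast Nat.lcmUpto_le_four_pow (10 * n + 2)
  have hrem : ∀ x : ℝ, 8 ≤ x → x ≤ 12 →
      |D * (Polynomial.aeval (-x) P / x ^ (10 * n + 1))| ≤ 16 / 3 ^ n := by
    intro x h8 h12
    rw [abs_mul, abs_of_nonneg hDpos]
    calc _ ≤ (4 : ℝ) ^ (10 * n + 2) * (1 / 1775) ^ (2 * n) :=
          mul_le_mul hDle (abs_padeIntegrand_le hδ h8 h12) (abs_nonneg _) (by positivity)
      _ = 16 * ((4 ^ 10) * (1 / 1775) ^ 2) ^ n := by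
          rw [pow_add, pow_mul, pow_mul, mul_pow]
          ring
      _ ≤ 16 * (1 / 3) ^ n := by
          gcongr
          norm_num
      _ = 16 / 3 ^ n := by rw [one_div, inv_pow, div_eq_mul_inv]
  have hqpos : 0 < D * P.coeff e :=
    Nat.mul_pos (Nat.lcmUpto_pos _) (coeff_padeNumerator_pos n δ)
  refine ⟨D * P.coeff e, N₈ - N₉, N₉ - N₁₂, D * (Φ 9 - Φ 8), D * (Φ 12 - Φ 9), hqpos,
    ?_, ?_, ?_, ?_, ?_, ?_, ?_⟩
  · have h1 : (P.coeff e : ℝ) ≤ 90 * (9 ^ 4 * 10 ^ 6 * 11 ^ 2 * 13 ^ 8) ^ n := by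
      exact_mod_cast coeff_padeNumerator_le hδ e
    push_cast
    calc (D : ℝ) * P.coeff e
        ≤ 4 ^ (10 * n + 2) * (90 * (9 ^ 4 * 10 ^ 6 * 11 ^ 2 * 13 ^ 8) ^ n) :=
          mul_le_mul hDle h1 (Nat.cast_nonneg _) (by positivity)
      _ = 1440 * (4 ^ 10 * (9 ^ 4 * 10 ^ 6 * 11 ^ 2 * 13 ^ 8)) ^ n := by
          rw [pow_add, pow_mul, mul_pow (4 ^ 10 : ℝ)]
          ring
      _ ≤ 1440 * (10 ^ 27) ^ n := by
          gcongr
          norm_num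
      _ = _ := by rw [pow_mul]
  · rw [Real.log_div (by norm_num) (by norm_num)]
    push_cast
    linear_combination h₈ - h₉
  · rw [show (4 / 3 : ℝ) = 12 / 9 by norm_num, Real.log_div (by norm_num) (by norm_num)]
    push_cast
    linear_combination h₉ - h₁₂
  · have h := padeIntegrand_sign n δ hc8
    rw [hc]
    have h9 : 0 < 9 - c := by linarith
    have h' : 0 ≤ (-1) ^ δ * (Polynomial.aeval (-c) P / c ^ (10 * n + 1)) := by
      refine (mul_nonneg_iff_of_pos_left h9).mp ?_
      linarith
    have := mul_nonneg hDpos h'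
    linarith
  · have h := padeIntegrand_sign n δ (by linarith : 8 < d)
    rw [hd]
    have h9 : 0 < d - 9 := by linarith
    have h' : 0 ≤ -((-1) ^ δ * (Polynomial.aeval (-d) P / d ^ (10 * n + 1))) := by
      refine (mul_nonneg_iff_of_pos_left h9).mp ?_
      linarith
    have := mul_nonneg hDpos h'
    linarith
  · have h := hrem c hc8.le (by linarith)
    rw [hc]
    convert h using 2
    ring
  · have h := hrem d (by linarith) hd12.le
    rw [hd, show (D : ℝ) * ((12 - 9) * (Polynomial.aeval (-d) P / d ^ (10 * n + 1))) =
      3 * (D * (Polynomial.aeval (-d) P / d ^ (10 * n + 1))) by ring, abs_mul,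
      abs_of_pos (by norm_num : (0 : ℝ) < 3)]
    linarith

theorem one_le_of_linear_form_pos {s t : ℤ} (hst : s < 0 ∧ 0 < t ∨ 0 < s ∧ t < 0)
    (hpos : 0 < s * Real.log (9 / 8) + t * Real.log (4 / 3)) (n : ℕ) :
    1 ≤ 16 / 3 ^ n * (|s| + 3 * |t| : ℝ) +
      1440 * 10 ^ (27 * n) * (s * Real.log (9 / 8) + t * Real.log (4 / 3)) := by
  obtain ⟨δ, hδ, hs, ht⟩ : ∃ δ ≤ 1, (-1 : ℝ) ^ δ * s ≤ 0 ∧ 0 ≤ (-1 : ℝ) ^ δ * t := by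
    rcases hst with ⟨hs, ht⟩ | ⟨hs, ht⟩
    · have hs' : (s : ℝ) < 0 := by exact_mod_cast hs
      have ht' : (0 : ℝ) < t := by exact_mod_cast ht
      exact ⟨0, by norm_num, by linarith, by linarith⟩
    · have hs' : (0 : ℝ) < s := by exact_mod_cast hs
      have ht' : (t : ℝ) < 0 := by exact_mod_cast ht
      exact ⟨1, le_rfl, by linarith, by linarith⟩
  obtain ⟨q, a, b, r₁, r₂, hq, hqle, h₁, h₂, hr₁, hr₂, hr₁', hr₂'⟩ :=
    exists_simultaneous_approx n δ hδ
  have hq' : (0 : ℝ) < q := by exact_mod_cast hq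
  set Λ := s * Real.log (9 / 8) + t * Real.log (4 / 3) with hΛ
  have hδ2 : ((-1 : ℝ) ^ δ) * (-1) ^ δ = 1 := by
    rw [← mul_pow]
    norm_num
  have hs₁ : s * r₁ ≤ 0 := by
    have h := mul_nonneg (neg_nonneg.mpr hs) hr₁
    have : (s : ℝ) * r₁ = ((-1) ^ δ * s) * ((-1) ^ δ * r₁) := by
      linear_combination -(s * r₁) * hδ2
    linarith
  have ht₂ : t * r₂ ≤ 0 := by
    have h := mul_nonneg ht (neg_nonneg.mpr hr₂)
    have : (t : ℝ) * r₂ = ((-1) ^ δ * t) * ((-1) ^ δ * r₂) := by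
      linear_combination -(t * r₂) * hδ2
    linarith
  have hint : ((s * a + t * b : ℤ) : ℝ) = q * Λ - (s * r₁ + t * r₂) := by
    push_cast
    rw [hΛ]
    linear_combination -(s : ℝ) * h₁ - t * h₂
  have hone : (1 : ℝ) ≤ q * Λ - (s * r₁ + t * r₂) := by
    have h : (0 : ℝ) < ((s * a + t * b : ℤ) : ℝ) := by
      rw [hint]
      have := mul_pos hq' hpos
      linarith
    rw [← hint]
    exact_mod_cast Int.add_one_le_of_lt (Int.cast_pos.mp h)
  have hs₁' : -(s * r₁) ≤ |(s : ℝ)| * (16 / 3 ^ n) := by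
    refine (neg_le_abs _).trans ?_
    rw [abs_mul]
    exact mul_le_mul_of_nonneg_left hr₁' (abs_nonneg _)
  have ht₂' : -(t * r₂) ≤ |(t : ℝ)| * (3 * (16 / 3 ^ n)) := by
    refine (neg_le_abs _).trans ?_
    rw [abs_mul]
    exact mul_le_mul_of_nonneg_left hr₂' (abs_nonneg _)
  have := mul_le_mul_of_nonneg_right hqle hpos.le
  rw [Int.cast_abs, Int.cast_abs]
  linarith

theorem opposite_signs_of_linear_form_small {s t : ℤ} {l₁ l₂ c : ℝ} (h₁ : c ≤ l₁) (h₂ : c ≤ l₂)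
    (hc : 0 < c) (hpos : 0 < s * l₁ + t * l₂) (hsmall : s * l₁ + t * l₂ < c) :
    s < 0 ∧ 0 < t ∨ 0 < s ∧ t < 0 := by
  have hl₁ : 0 < l₁ := hc.trans_le h₁
  have hl₂ : 0 < l₂ := hc.trans_le h₂
  rcases lt_trichotomy s 0 with hs | hs | hs <;> rcases lt_trichotomy t 0 with ht | ht | ht
  · have hs' : (s : ℝ) * l₁ < 0 := mul_neg_of_neg_of_pos (by exact_mod_cast hs) hl₁
    have ht' : (t : ℝ) * l₂ < 0 := mul_neg_of_neg_of_pos (by exact_mod_cast ht) hl₂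
    linarith
  · have hs' : (s : ℝ) * l₁ < 0 := mul_neg_of_neg_of_pos (by exact_mod_cast hs) hl₁
    simp only [ht, Int.cast_zero, zero_mul, add_zero] at hpos
    linarith
  · exact Or.inl ⟨hs, ht⟩
  · have ht' : (t : ℝ) * l₂ < 0 := mul_neg_of_neg_of_pos (by exact_mod_cast ht) hl₂
    simp only [hs, Int.cast_zero, zero_mul, zero_add] at hpos
    linarith
  · simp [hs, ht] at hpos
  · have ht' : l₂ ≤ t * l₂ := le_mul_of_one_le_left hl₂.le (by exact_mod_cast ht)
    simp only [hs, Int.cast_zero, zero_mul, zero_add] at hsmall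
    linarith
  · exact Or.inr ⟨hs, ht⟩
  · have hs' : l₁ ≤ s * l₁ := le_mul_of_one_le_left hl₁.le (by exact_mod_cast hs)
    simp only [ht, Int.cast_zero, zero_mul, add_zero] at hsmall
    linarith
  · have hs' : l₁ ≤ s * l₁ := le_mul_of_one_le_left hl₁.le (by exact_mod_cast hs)
    have ht' : l₂ ≤ t * l₂ := le_mul_of_one_le_left hl₂.le (by exact_mod_cast ht)
    linarith

theorem abs_add_three_mul_abs_le {a b M : ℝ} (ha : 0.693 * |a| ≤ M) (hb : |b| ≤ M) :
    |a + 2 * b| + 3 * |2 * a + 3 * b| ≤ 26 * M := by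
  have h1 : |a + 2 * b| ≤ |a| + 2 * |b| := by
    refine (abs_add_le _ _).trans_eq ?_
    rw [abs_mul, abs_two]
  have h2 : |2 * a + 3 * b| ≤ 2 * |a| + 3 * |b| := by
    refine (abs_add_le _ _).trans_eq ?_
    rw [abs_mul, abs_mul, abs_two, abs_of_pos (by norm_num : (0 : ℝ) < 3)]
  linarith [abs_nonneg a, abs_nonneg b]

theorem one_le_of_pow_mul_pow_lt {x y x₁ y₁ : ℕ} {X Y : ℝ} (hX : X = 2 ^ x * 3 ^ y)
    (hY : Y = 2 ^ x₁ * 3 ^ y₁) (hYX : Y < X) (hgap : 20 * (X - Y) ≤ X) (n : ℕ) :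
    1 ≤ 16 / 3 ^ n * (26 * Real.log X) + 1440 * 10 ^ (27 * n) * (2 * ((X - Y) / X)) := by
  have hY0 : 0 < Y := by rw [hY]; positivity
  have hX0 : 0 < X := hY0.trans hYX
  have hlogX : Real.log X = x * Real.log 2 + y * Real.log 3 := by
    rw [hX, Real.log_mul (by positivity) (by positivity), Real.log_pow, Real.log_pow]
  have hlogY : Real.log Y = x₁ * Real.log 2 + y₁ * Real.log 3 := by
    rw [hY, Real.log_mul (by positivity) (by positivity), Real.log_pow, Real.log_pow]
  have hlogYX : Real.log Y < Real.log X := Real.log_lt_log hY0 hYX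
  have hl2 : 0.693 < Real.log 2 := by linarith [Real.log_two_gt_d9]
  have hl3 : 1 ≤ Real.log 3 := by
    rw [Real.le_log_iff_exp_le (by norm_num)]
    linarith [Real.exp_one_lt_d9]
  have h98 : Real.log (9 / 8) = 2 * Real.log 3 - 3 * Real.log 2 := by
    rw [Real.log_div (by norm_num) (by norm_num), show (9 : ℝ) = 3 ^ 2 by norm_num,
      show (8 : ℝ) = 2 ^ 3 by norm_num, Real.log_pow, Real.log_pow]
    norm_num
  have h43 : Real.log (4 / 3) = 2 * Real.log 2 - Real.log 3 := by
    rw [Real.log_div (by norm_num) (by norm_num), show (4 : ℝ) = 2 ^ 2 by norm_num,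
      Real.log_pow]
    norm_num
  have h98pos : 1 / 9 ≤ Real.log (9 / 8) := by
    have := Real.one_sub_inv_le_log_of_pos (by norm_num : (0 : ℝ) < 9 / 8)
    norm_num at this ⊢
    exact this
  have h43pos : 1 / 9 ≤ Real.log (4 / 3) :=
    h98pos.trans (Real.log_le_log (by norm_num) (by norm_num))
  obtain ⟨a, ha⟩ : ∃ a : ℤ, (a : ℝ) = x - x₁ := ⟨x - x₁, by push_cast; rfl⟩
  obtain ⟨b, hb⟩ : ∃ b : ℤ, (b : ℝ) = y - y₁ := ⟨y - y₁, by push_cast; rfl⟩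
  have hform : ((a + 2 * b : ℤ) : ℝ) * Real.log (9 / 8) +
      ((2 * a + 3 * b : ℤ) : ℝ) * Real.log (4 / 3) = Real.log X - Real.log Y := by
    push_cast
    rw [ha, hb, h98, h43, hlogX, hlogY]
    ring
  have hsmall : Real.log X - Real.log Y ≤ 2 * ((X - Y) / X) := by
    rw [← Real.log_div hX0.ne' hY0.ne']
    calc Real.log (X / Y) ≤ X / Y - 1 := Real.log_le_sub_one_of_pos (by positivity)
      _ = (X - Y) / Y := by field_simp
      _ ≤ (X - Y) / (X / 2) := by gcongr; linarith
      _ = 2 * ((X - Y) / X) := by field_simp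
  have htenth : 2 * ((X - Y) / X) ≤ 1 / 10 := by
    have : (X - Y) / X ≤ 1 / 20 := by
      rw [div_le_iff₀ hX0]
      linarith
    linarith
  have hst := opposite_signs_of_linear_form_small h98pos h43pos (by norm_num)
    (by rw [hform]; linarith) (by rw [hform]; linarith)
  have hmain := one_le_of_linear_form_pos hst (by rw [hform]; linarith) n
  rw [hform] at hmain
  have hx0 : (0 : ℝ) ≤ x := Nat.cast_nonneg _
  have hy0 : (0 : ℝ) ≤ y := Nat.cast_nonneg _
  have hx₁0 : (0 : ℝ) ≤ x₁ := Nat.cast_nonneg _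
  have hy₁0 : (0 : ℝ) ≤ y₁ := Nat.cast_nonneg _
  have hx := mul_le_mul_of_nonneg_left hl2.le hx0
  have hy := mul_le_mul_of_nonneg_left hl3 hy0
  have hx₁ := mul_le_mul_of_nonneg_left hl2.le hx₁0
  have hy₁ := mul_le_mul_of_nonneg_left hl3 hy₁0
  have habs : ((|a + 2 * b| : ℤ) : ℝ) + 3 * ((|2 * a + 3 * b| : ℤ) : ℝ) ≤
      26 * Real.log X := by
    push_cast
    refine abs_add_three_mul_abs_le ?_ ?_
    · rw [ha, mul_comm, ← le_div_iff₀ (by norm_num), abs_le, neg_le, le_div_iff₀ (by norm_num),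
        le_div_iff₀ (by norm_num)]
      constructor <;> linarith
    · rw [hb, abs_le]
      constructor <;> linarith
  refine hmain.trans (add_le_add ?_ ?_)
  · exact mul_le_mul_of_nonneg_left habs (by positivity)
  · exact mul_le_mul_of_nonneg_left hsmall (by positivity)

theorem log_ratio_le {x y x₁ y₁ : ℕ} {X Y : ℝ} (hX : X = 2 ^ x * 3 ^ y)
    (hY : Y = 2 ^ x₁ * 3 ^ y₁) (hYX : Y < X) (hgap : 20 * (X - Y) ≤ X)
    (hlogX : 1 ≤ Real.log X) :
    Real.log (X / (X - Y)) ≤ 504 + 62.2 * Real.log (Real.log X) := by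
  have hY0 : 0 < Y := by rw [hY]; positivity
  have hX0 : 0 < X := hY0.trans hYX
  have hΔ : 0 < X - Y := sub_pos.mpr hYX
  have hl2 := Real.log_two_lt_d9
  set n := ⌈Real.log (832 * Real.log X)⌉₊ with hn
  have hloglog : 0 ≤ Real.log (Real.log X) := Real.log_nonneg hlogX
  have h832 : Real.log 832 ≤ 6.932 := by
    calc Real.log 832 ≤ Real.log (2 ^ 10) := Real.log_le_log (by norm_num) (by norm_num)
      _ = 10 * Real.log 2 := by rw [Real.log_pow]; norm_num
      _ ≤ 6.932 := by linarith
  have hn_le : (n : ℝ) ≤ 7.932 + Real.log (Real.log X) := by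
    have h1 := Nat.ceil_lt_add_one (a := Real.log (832 * Real.log X))
      (Real.log_nonneg (by linarith))
    rw [Real.log_mul (by norm_num) (by linarith)] at h1
    rw [hn, Real.log_mul (by norm_num) (by linarith)]
    linarith
  have h3n : 832 * Real.log X ≤ 3 ^ n := by
    calc 832 * Real.log X = Real.exp (Real.log (832 * Real.log X)) := by
          rw [Real.exp_log (by linarith)]
      _ ≤ Real.exp n := Real.exp_le_exp.mpr (Nat.le_ceil _)
      _ = Real.exp 1 ^ n := by rw [← Real.exp_nat_mul, mul_one]
      _ ≤ 3 ^ n := by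
          gcongr
          linarith [Real.exp_one_lt_d9]
  have hhalf : 16 / 3 ^ n * (26 * Real.log X) ≤ 1 / 2 := by
    rw [div_mul_eq_mul_div, div_le_iff₀ (by positivity)]
    linarith
  have hmain := one_le_of_pow_mul_pow_lt hX hY hYX hgap n
  have hratio : X / (X - Y) ≤ 5760 * 10 ^ (27 * n) := by
    have h1 : 1 / 2 ≤ 2880 * 10 ^ (27 * n) * (X - Y) / X := by
      rw [mul_div_assoc]
      linarith
    rw [le_div_iff₀ hX0] at h1
    rw [div_le_iff₀ hΔ]
    linarith
  have h5760 : Real.log 5760 ≤ 9.02 := by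
    calc Real.log 5760 ≤ Real.log (2 ^ 13) := Real.log_le_log (by norm_num) (by norm_num)
      _ = 13 * Real.log 2 := by rw [Real.log_pow]; norm_num
      _ ≤ 9.02 := by linarith
  have h10 : Real.log 10 ≤ 2.3032 := by
    have : 31 * Real.log 10 ≤ 103 * Real.log 2 := by
      have h := Real.log_le_log (by norm_num) (by norm_num : (10 : ℝ) ^ 31 ≤ 2 ^ 103)
      rw [Real.log_pow, Real.log_pow] at h
      exact_mod_cast h
    linarith
  have h := Real.log_le_log (by positivity) hratio
  rw [Real.log_mul (by norm_num) (by positivity), Real.log_pow] at h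
  push_cast at h
  have h2 : 27 * (n : ℝ) * Real.log 10 ≤ 27 * n * 2.3032 :=
    mul_le_mul_of_nonneg_left h10 (by positivity)
  linarith

theorem lt_of_le_add_log {L U : ℝ} (hL : 183 ≤ L)
    (hU : U ≤ 504 + 62.2 * Real.log (L + U)) : U < 60 * Real.log L ^ 2 := by
  by_contra! hlt
  have hℓ : 5 ≤ Real.log L := by
    rw [Real.le_log_iff_exp_le (by linarith)]
    calc Real.exp 5 = Real.exp 1 ^ 5 := by rw [← Real.exp_nat_mul]; norm_num
      _ ≤ 2.72 ^ 5 := by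
          gcongr
          linarith [Real.exp_one_lt_d9]
      _ ≤ L := by norm_num; linarith
  have hU0 : 1500 ≤ U := by nlinarith
  have h1 : Real.log (L + U) ≤ Real.log L + Real.log U := by
    rw [← Real.log_mul (by linarith) (by linarith)]
    exact Real.log_le_log (by linarith) (by nlinarith)
  have h2 : Real.log U ≤ 5.24 + U / 512 := by
    have h3 := Real.log_le_sub_one_of_pos (by linarith : 0 < U / 512)
    rw [Real.log_div (by linarith) (by norm_num), show (512 : ℝ) = 2 ^ 9 by norm_num,
      Real.log_pow] at h3
    norm_num at h3
    linarith [Real.log_two_lt_d9]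
  nlinarith

theorem s_unit_gap_bound (Δ : ℤ) (hΔ : (10 : ℤ) ^ 80 < Δ) (x y x₁ y₁ : ℕ)
    (h : (2 : ℤ) ^ x * 3 ^ y - 2 ^ x₁ * 3 ^ y₁ = Δ) :
    (2 : ℝ) ^ x * 3 ^ y <
      (Δ : ℝ) * Real.log Δ ^ (60 * Real.log (Real.log Δ)) := by
  by_contra! hcon
  have hΔ' : (10 : ℝ) ^ 80 < Δ := by exact_mod_cast hΔ
  have hΔ0 : (0 : ℝ) < Δ := lt_trans (by positivity) hΔ'
  set X : ℝ := 2 ^ x * 3 ^ y with hX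
  set Y : ℝ := 2 ^ x₁ * 3 ^ y₁ with hY
  have hXY : X - Y = Δ := by
    rw [hX, hY, ← h]
    push_cast
    rfl
  have hX0 : 0 < X := by rw [hX]; positivity
  have hL : 183 ≤ Real.log Δ := by
    have h1 := Real.log_le_log (by norm_num) (by norm_num : (2 : ℝ) ^ 93 ≤ 10 ^ 28)
    have h2 := Real.log_le_log (by positivity) hΔ'.le
    rw [Real.log_pow, Real.log_pow] at h1
    rw [Real.log_pow] at h2
    push_cast at h1 h2
    linarith [Real.log_two_gt_d9]
  have hratio : Real.log X = Real.log Δ + Real.log (X / Δ) := by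
    rw [Real.log_div hX0.ne' hΔ0.ne']
    ring
  have hU : 60 * Real.log (Real.log Δ) ^ 2 ≤ Real.log (X / Δ) := by
    rw [Real.le_log_iff_exp_le (by positivity), le_div_iff₀ hΔ0]
    rw [Real.rpow_def_of_pos (by linarith)] at hcon
    calc _ = (Δ : ℝ) * Real.exp
          (Real.log (Real.log Δ) * (60 * Real.log (Real.log Δ))) := by
          rw [mul_comm]
          ring_nf
      _ ≤ X := hcon
  have hℓ : 1 ≤ Real.log (Real.log Δ) := by
    rw [Real.le_log_iff_exp_le (by linarith)]
    linarith [Real.exp_one_lt_d9]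
  have hU60 : 60 ≤ Real.log (X / Δ) := by nlinarith
  have hgap : 20 * (X - Y) ≤ X := by
    have h1 : 60 ≤ X / Δ := by
      have := Real.log_le_sub_one_of_pos (by positivity : 0 < X / Δ)
      linarith
    rw [le_div_iff₀ hΔ0] at h1
    rw [hXY]
    linarith
  have hlog := log_ratio_le hX hY (by linarith) hgap (by linarith)
  rw [hXY, hratio] at hlog
  exact absurd (lt_of_le_add_log hL hlog) (not_lt.mpr hU)
end

section
/- Let c be a positive integer and suppose that c = L_n − 2^x·3^y = L_{n₁} − 2^{x₁}·3^{y₁} for nonnegative integers n, n₁, x, x₁, y, y₁ with n > n₁ and n > 1500. Then n − n₁ < 4·10^12 · log n. -/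
/-- The Lucas sequence: L 0 = 2, L 1 = 1, L (n+2) = L (n+1) + L n. -/
def lucas : ℕ → ℤ
  | 0 => 2
  | 1 => 1
  | n + 2 => lucas (n + 1) + lucas n

section

/-- `f` is divisible by `(z - r) ^ μ` in the ring of entire functions. -/
def VanishesTo (f : ℂ → ℂ) (r : ℂ) (μ : ℕ) : Prop :=
  ∃ g : ℂ → ℂ, Differentiable ℂ g ∧ ∀ z, f z = (z - r) ^ μ * g z

namespace VanishesTo

theorem add {f g : ℂ → ℂ} {r : ℂ} {μ : ℕ} (hf : VanishesTo f r μ) (hg : VanishesTo g r μ) :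
    VanishesTo (fun z => f z + g z) r μ := by
  obtain ⟨a, ha, ha'⟩ := hf
  obtain ⟨b, hb, hb'⟩ := hg
  exact ⟨fun z => a z + b z, ha.add hb, fun z => by simp only [ha', hb']; ring⟩

theorem mul {f g : ℂ → ℂ} {r : ℂ} {μ : ℕ} (hf : VanishesTo f r μ) (hg : Differentiable ℂ g) :
    VanishesTo (fun z => f z * g z) r μ := by
  obtain ⟨a, ha, ha'⟩ := hf
  exact ⟨fun z => a z * g z, ha.mul hg, fun z => by simp only [ha']; ring⟩

theorem zero (r : ℂ) (μ : ℕ) : VanishesTo (fun _ => 0) r μ :=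
  ⟨fun _ => 0, differentiable_const 0, fun z => by simp⟩

theorem sum {ι : Type*} (s : Finset ι) {f : ι → ℂ → ℂ} {r : ℂ} {μ : ℕ}
    (h : ∀ i ∈ s, VanishesTo (f i) r μ) : VanishesTo (fun z => ∑ i ∈ s, f i z) r μ := by
  classical
  induction s using Finset.induction_on with
  | empty => simpa using zero r μ
  | insert a s ha ih =>
    have := (h a (by simp)).add (ih fun i hi => h i (by simp [hi]))
    simpa [Finset.sum_insert ha] using this

theorem pow (r : ℂ) {μ j : ℕ} (h : μ ≤ j) : VanishesTo (fun z => (z - r) ^ j) r μ :=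
  ⟨fun z => (z - r) ^ (j - μ), by fun_prop, fun z => by rw [← pow_add, Nat.add_sub_cancel' h]⟩

theorem congr {f g : ℂ → ℂ} {r : ℂ} {μ : ℕ} (hf : VanishesTo f r μ) (h : ∀ z, f z = g z) :
    VanishesTo g r μ := by
  rwa [← funext h]

end VanishesTo

theorem Differentiable.dslope_entire {g : ℂ → ℂ} (hg : Differentiable ℂ g) (r : ℂ) :
    Differentiable ℂ (dslope g r) := by
  rw [← differentiableOn_univ] at hg ⊢
  exact (Complex.differentiableOn_dslope Filter.univ_mem).2 hg

theorem eq_of_mul_sub_eq {f g : ℂ → ℂ} (hf : Continuous f) (hg : Continuous g) (r : ℂ)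
    (h : ∀ z, (z - r) * f z = (z - r) * g z) : f = g := by
  refine Continuous.ext_on (dense_compl_singleton r) hf hg fun z hz => ?_
  exact mul_left_cancel₀ (sub_ne_zero.2 hz) (h z)

theorem VanishesTo.of_mul {a : ℂ → ℂ} (ha : Differentiable ℂ a) {r : ℂ} (har : a r ≠ 0) {μ : ℕ} :
    ∀ {g : ℂ → ℂ}, Differentiable ℂ g → VanishesTo (fun z => a z * g z) r μ →
      VanishesTo g r μ := by
  induction μ with
  | zero => exact fun {g} hg _ => ⟨g, hg, fun z => by simp⟩
  | succ μ ih =>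
    rintro g hg ⟨b, hb, hb'⟩
    have hgr : g r = 0 := by
      have := hb' r
      simpa [har] using this
    have hg1 : ∀ z, g z = (z - r) * dslope g r z := fun z => by
      have := sub_smul_dslope g r z
      rw [hgr, sub_zero, smul_eq_mul] at this
      exact this.symm
    have hd := hg.dslope_entire r
    have key : (fun z => a z * dslope g r z) = fun z => (z - r) ^ μ * b z := by
      refine eq_of_mul_sub_eq (ha.mul hd).continuous ?_ r fun z => ?_
      · exact (Differentiable.mul (by fun_prop) hb).continuous
      · have := hb' z
        simp only [hg1 z] at this
        rw [pow_succ] at this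
        linear_combination this
    obtain ⟨c, hc, hc'⟩ := ih hd ⟨b, hb, congrFun key⟩
    exact ⟨c, hc, fun z => by rw [hg1, hc', pow_succ]; ring⟩

theorem exists_eq_prod_mul {f : ℂ → ℂ} (hf : Differentiable ℂ f) {μ : ℕ} (s : Finset ℂ)
    (h : ∀ r ∈ s, VanishesTo f r μ) :
    ∃ g : ℂ → ℂ, Differentiable ℂ g ∧ ∀ z, f z = (∏ r ∈ s, (z - r)) ^ μ * g z := by
  classical
  induction s using Finset.induction_on with
  | empty => exact ⟨f, hf, fun z => by simp⟩
  | insert a s ha ih =>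
    obtain ⟨g, hg, hg'⟩ := ih fun r hr => h r (by simp [hr])
    have hQ : Differentiable ℂ fun z : ℂ => (∏ r ∈ s, (z - r)) ^ μ := by fun_prop
    have : VanishesTo g a μ := by
      refine VanishesTo.of_mul hQ ?_ hg ((h a (by simp)).congr hg')
      refine pow_ne_zero _ (Finset.prod_ne_zero_iff.2 fun r hr => sub_ne_zero.2 ?_)
      rintro rfl
      exact ha hr
    obtain ⟨b, hb, hb'⟩ := this
    exact ⟨b, hb, fun z => by rw [hg', hb', Finset.prod_insert ha, mul_pow]; ring⟩

/-- Schwarz lemma with multiple zeros. -/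
theorem norm_le_of_vanishesTo {f : ℂ → ℂ} (hf : Differentiable ℂ f) {μ : ℕ} (s : Finset ℂ)
    (h : ∀ r ∈ s, VanishesTo f r μ) {R A D : ℝ} (hR : 0 < R) (hD : 0 < D)
    (hA : ∀ z, ‖z‖ = R → ‖f z‖ ≤ A) (hs : ∀ z, ‖z‖ = R → D ≤ ‖∏ r ∈ s, (z - r)‖)
    {z : ℂ} (hz : ‖z‖ ≤ R) : ‖f z‖ ≤ ‖∏ r ∈ s, (z - r)‖ ^ μ * (A / D ^ μ) := by
  obtain ⟨g, hg, hg'⟩ := exists_eq_prod_mul hf s h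
  have hb : ∀ w ∈ frontier (Metric.ball (0 : ℂ) R), ‖g w‖ ≤ A / D ^ μ := by
    intro w hw
    rw [frontier_ball _ hR.ne', mem_sphere_zero_iff_norm] at hw
    rw [le_div_iff₀ (by positivity)]
    calc ‖g w‖ * D ^ μ ≤ ‖g w‖ * ‖∏ r ∈ s, (w - r)‖ ^ μ := by
          gcongr; exact hs w hw
      _ = ‖f w‖ := by rw [hg', norm_mul, norm_pow]; ring
      _ ≤ A := hA w hw
  have := Complex.norm_le_of_forall_mem_frontier_norm_le Metric.isBounded_ball
    hg.diffContOnCl hb (z := z) (by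
      rw [closure_ball _ hR.ne']; simpa using hz)
  rw [hg', norm_mul, norm_pow]
  gcongr

end

section

open Polynomial

theorem exists_taylor_remainder {f : ℂ → ℂ} (hf : Differentiable ℂ f) (μ : ℕ) :
    ∃ (e : ℕ → ℂ) (E : ℂ → ℂ), Differentiable ℂ E ∧
      ∀ w, f w = ∑ j ∈ Finset.range μ, e j * w ^ j + w ^ μ * E w := by
  induction μ with
  | zero => exact ⟨0, f, hf, fun w => by simp⟩
  | succ μ ih =>
    obtain ⟨e, E, hE, h⟩ := ih
    refine ⟨Function.update e μ (E 0), dslope E 0, hE.dslope_entire 0, fun w => ?_⟩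
    have hw : w * dslope E 0 w = E w - E 0 := by
      simpa using sub_smul_dslope E 0 w
    have hs : ∑ j ∈ Finset.range μ, Function.update e μ (E 0) j * w ^ j
        = ∑ j ∈ Finset.range μ, e j * w ^ j :=
      Finset.sum_congr rfl fun j hj => by
        rw [Function.update_of_ne (Finset.mem_range.1 hj).ne]
    rw [h, Finset.sum_range_succ, hs, Function.update_self, pow_succ]
    linear_combination (-w ^ μ) * hw

theorem vanishesTo_exp_sub_one {v : ℂ → ℂ} {r : ℂ} {μ : ℕ} (hv : VanishesTo v r μ) (τ : ℂ) :
    VanishesTo (fun z => Complex.exp (τ * v z) - 1) r μ := by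
  have hexp : Differentiable ℂ fun w : ℂ => Complex.exp (τ * w) := by fun_prop
  obtain ⟨e, E, hE, h⟩ := exists_taylor_remainder hexp 1
  have h0 : e 0 = 1 := by simpa using (h 0).symm
  obtain ⟨g, hg, hg'⟩ := hv
  have hvd : Differentiable ℂ v := by
    rw [funext hg']
    exact Differentiable.mul (by fun_prop) hg
  have hvE : Differentiable ℂ fun z => E (v z) := hE.comp hvd
  refine (VanishesTo.mul ⟨g, hg, hg'⟩ hvE).congr fun z => ?_
  rw [h (v z)]
  simp [h0]

theorem vanishesTo_sum_mul_exp_sub {ι : Type*} (C : Finset ι) (Q : ι → ℂ[X]) (θ a : ι → ℂ)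
    (r : ℂ) (μ : ℕ)
    (h : ∀ i j, i + j < μ → ∑ l ∈ C, (hasseDeriv i (Q l)).eval r * θ l ^ j * a l = 0) :
    VanishesTo (fun z => ∑ l ∈ C, (Q l).eval z * (a l * Complex.exp ((z - r) * θ l))) r μ := by
  obtain ⟨e, E, hE, hexp⟩ := exists_taylor_remainder Complex.differentiable_exp μ
  have hQ : ∀ l ∈ C, ∀ z, (Q l).eval z = ∑ i ∈ Finset.range (C.sup (fun l => (Q l).natDegree) + 1),
      (hasseDeriv i (Q l)).eval r * (z - r) ^ i := by
    intro l hl z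
    have hd : (taylor r (Q l)).natDegree < C.sup (fun l => (Q l).natDegree) + 1 := by
      rw [natDegree_taylor]
      exact Nat.lt_succ_of_le (Finset.le_sup (f := fun l => (Q l).natDegree) hl)
    have := eval_eq_sum_range' hd (z - r)
    rw [taylor_eval, sub_add_cancel] at this
    simpa only [taylor_coeff] using this
  set D := C.sup (fun l => (Q l).natDegree) + 1
  have h1 : VanishesTo (fun z => ∑ j ∈ Finset.range μ, ∑ i ∈ Finset.range D,
      (z - r) ^ (i + j) * (e j * ∑ l ∈ C, (hasseDeriv i (Q l)).eval r * θ l ^ j * a l)) r μ := by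
    refine VanishesTo.sum _ fun j _ => VanishesTo.sum _ fun i _ => ?_
    rcases lt_or_ge (i + j) μ with hij | hij
    · exact (VanishesTo.zero r μ).congr fun z => by simp [h i j hij]
    · exact (VanishesTo.pow r hij).mul (differentiable_const _)
  have h2 : VanishesTo (fun z => ∑ l ∈ C, (z - r) ^ μ *
      ((Q l).eval z * (a l * (θ l ^ μ * E ((z - r) * θ l))))) r μ := by
    refine VanishesTo.sum _ fun l _ => (VanishesTo.pow r le_rfl).mul ?_
    have := (Q l).differentiable
    fun_prop
  refine (h1.add h2).congr fun z => ?_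
  have h3 : ∑ j ∈ Finset.range μ, ∑ i ∈ Finset.range D,
      (z - r) ^ (i + j) * (e j * ∑ l ∈ C, (hasseDeriv i (Q l)).eval r * θ l ^ j * a l)
      = ∑ l ∈ C, (Q l).eval z * (a l * ∑ j ∈ Finset.range μ, e j * ((z - r) * θ l) ^ j) := by
    simp_rw [Finset.mul_sum]
    rw [Finset.sum_congr rfl fun j _ => Finset.sum_comm, Finset.sum_comm]
    refine Finset.sum_congr rfl fun l hl => Finset.sum_congr rfl fun j _ => ?_
    rw [hQ l hl z, Finset.sum_mul]
    refine Finset.sum_congr rfl fun i _ => ?_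
    rw [mul_pow, pow_add]; ring
  rw [h3, ← Finset.sum_add_distrib]
  refine Finset.sum_congr rfl fun l _ => ?_
  rw [hexp ((z - r) * θ l), mul_pow]; ring

theorem vanishesTo_main {ι : Type*} (C : Finset ι) (Q : ι → ℂ[X]) (θ τ : ι → ℂ)
    (V : ℂ → ℂ) (r κ : ℂ) (μ : ℕ)
    (hVr : VanishesTo (fun z => V z - r) r μ)
    (h : ∀ i j, i + j < μ → ∑ l ∈ C, (hasseDeriv i (Q l)).eval r * θ l ^ j *
      Complex.exp (r * (θ l + τ l)) = 0) :
    VanishesTo (fun z => ∑ l ∈ C, (Q l).eval z *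
      Complex.exp (z * (θ l - κ) + τ l * V z)) r μ := by
  have h1 := (vanishesTo_sum_mul_exp_sub C Q θ (fun l => Complex.exp (r * (θ l + τ l))) r μ h).mul
    (g := fun z => Complex.exp (-z * κ)) (by fun_prop)
  have h2 := VanishesTo.sum C (r := r) (μ := μ) (f := fun l z =>
    (Complex.exp (τ l * (V z - r)) - 1) *
      ((Q l).eval z * (Complex.exp (r * (θ l + τ l)) * Complex.exp ((z - r) * θ l)) *
        Complex.exp (-z * κ)))
    fun l _ => (vanishesTo_exp_sub_one hVr (τ l)).mul (by
      have := (Q l).differentiable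
      fun_prop)
  refine (h1.add h2).congr fun z => ?_
  rw [Finset.sum_mul, ← Finset.sum_add_distrib]
  refine Finset.sum_congr rfl fun l _ => ?_
  have : Complex.exp (z * (θ l - κ) + τ l * V z) = Complex.exp (τ l * (V z - r)) *
      (Complex.exp (r * (θ l + τ l)) * Complex.exp ((z - r) * θ l) * Complex.exp (-z * κ)) := by
    simp only [← Complex.exp_add]
    congr 1; ring
  rw [this]; ring

end

section

open Polynomial

theorem VanishesTo.of_apply_eq_zero {f : ℂ → ℂ} (hf : Differentiable ℂ f) {r : ℂ} (h : f r = 0) :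
    VanishesTo f r 1 :=
  ⟨dslope f r, hf.dslope_entire r, fun z => by
    have := sub_smul_dslope f r z
    rw [h, sub_zero, smul_eq_mul] at this
    rw [pow_one, this]⟩

theorem VanishesTo.pow_one {f : ℂ → ℂ} {r : ℂ} (h : VanishesTo f r 1) (μ : ℕ) :
    VanishesTo (fun z => f z ^ μ) r μ := by
  obtain ⟨g, hg, hg'⟩ := h
  exact ⟨fun z => g z ^ μ, hg.pow μ, fun z => by
    change f z ^ μ = (z - r) ^ μ * g z ^ μ
    rw [hg' z, _root_.pow_one, mul_pow]⟩

/-- A polynomial divisible by `w ^ μ` and congruent to `1` modulo `(1 - w) ^ μ`. -/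
noncomputable def bump (μ : ℕ) (w : ℂ) : ℂ :=
  ∑ i ∈ Finset.Ico μ (2 * μ), w ^ i * (1 - w) ^ (2 * μ - 1 - i) * ((2 * μ - 1).choose i)

theorem differentiable_bump (μ : ℕ) : Differentiable ℂ (bump μ) := by
  unfold bump; fun_prop

theorem sum_range_add_bump {μ : ℕ} (hμ : 0 < μ) (w : ℂ) :
    ∑ i ∈ Finset.range μ, w ^ i * (1 - w) ^ (2 * μ - 1 - i) * ((2 * μ - 1).choose i) + bump μ w
      = 1 := by
  rw [bump, Finset.sum_range_add_sum_Ico _ (by omega)]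
  have := add_pow w (1 - w) (2 * μ - 1)
  rw [add_sub_cancel, one_pow, show 2 * μ - 1 + 1 = 2 * μ by omega] at this
  exact this.symm

theorem norm_bump_le {μ : ℕ} (hμ : 0 < μ) (w : ℂ) : ‖bump μ w‖ ≤ (1 + 2 * ‖w‖) ^ (2 * μ) := by
  have h1 : ‖bump μ w‖ ≤ (‖w‖ + ‖1 - w‖) ^ (2 * μ - 1) := by
    rw [add_pow, show 2 * μ - 1 + 1 = 2 * μ by omega, bump]
    refine (norm_sum_le _ _).trans ?_
    refine le_trans (Finset.sum_le_sum fun i _ => ?_)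
      (Finset.sum_le_sum_of_subset_of_nonneg (s := Finset.Ico μ (2 * μ)) ?_ fun i _ _ => ?_)
    · simp
    · intro i hi
      simp only [Finset.mem_Ico, Finset.mem_range] at hi ⊢
      omega
    · positivity
  have h2 : ‖w‖ + ‖1 - w‖ ≤ 1 + 2 * ‖w‖ := by
    have := norm_sub_le (1 : ℂ) w
    rw [norm_one] at this
    linarith
  calc _ ≤ _ := h1
    _ ≤ (1 + 2 * ‖w‖) ^ (2 * μ - 1) := by gcongr
    _ ≤ _ := pow_le_pow_right₀ (by linarith [norm_nonneg w]) (by omega)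

theorem vanishesTo_bump {f : ℂ → ℂ} (hf : Differentiable ℂ f) {r : ℂ} (h : f r = 0) (μ : ℕ) :
    VanishesTo (fun z => bump μ (f z)) r μ := by
  unfold bump
  refine VanishesTo.sum _ fun i hi => ?_
  have hv := (VanishesTo.of_apply_eq_zero hf h).pow_one μ
  refine (hv.mul (g := fun z => f z ^ (i - μ) * (1 - f z) ^ (2 * μ - 1 - i) *
    ((2 * μ - 1).choose i)) (by fun_prop)).congr fun z => ?_
  rw [← mul_assoc, ← mul_assoc, ← pow_add, Nat.add_sub_cancel' (Finset.mem_Ico.1 hi).1]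

theorem vanishesTo_bump_sub_one {f : ℂ → ℂ} (hf : Differentiable ℂ f) {r : ℂ} (h : f r = 1)
    {μ : ℕ} (hμ : 0 < μ) : VanishesTo (fun z => bump μ (f z) - 1) r μ := by
  have hf' : Differentiable ℂ fun z => 1 - f z := by fun_prop
  have hv := (VanishesTo.of_apply_eq_zero hf' (r := r) (by simp [h])).pow_one μ
  have := VanishesTo.sum (Finset.range μ) (f := fun i z => (1 - f z) ^ μ *
    (-(f z ^ i * (1 - f z) ^ (μ - 1 - i) * ((2 * μ - 1).choose i)))) (r := r) (μ := μ)
    fun i _ => hv.mul (by fun_prop)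
  refine this.congr fun z => ?_
  have e : bump μ (f z) - 1 = -∑ i ∈ Finset.range μ,
      f z ^ i * (1 - f z) ^ (2 * μ - 1 - i) * ((2 * μ - 1).choose i) := by
    linear_combination sum_range_add_bump hμ (f z)
  rw [e, ← Finset.sum_neg_distrib]
  refine Finset.sum_congr rfl fun i hi => ?_
  have hi := Finset.mem_range.1 hi
  rw [show 2 * μ - 1 - i = μ + (μ - 1 - i) by omega, pow_add]; ring

/-- Interpolation basis polynomial at the node `x i`, as a function. -/
noncomputable def lagrangeBasis (n : ℕ) (x : ℕ → ℂ) (i : ℕ) (z : ℂ) : ℂ :=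
  ∏ j ∈ (Finset.range n).erase i, ((z - x j) / (x i - x j))

theorem differentiable_lagrangeBasis (n : ℕ) (x : ℕ → ℂ) (i : ℕ) :
    Differentiable ℂ (lagrangeBasis n x i) := by
  unfold lagrangeBasis; fun_prop

/-- An approximate identity which is constant to order `μ` at each node. -/
noncomputable def flatInterp (n μ : ℕ) (x : ℕ → ℂ) (z : ℂ) : ℂ :=
  ∑ i ∈ Finset.range n, bump μ (lagrangeBasis n x i z) * x i

theorem differentiable_flatInterp (n μ : ℕ) (x : ℕ → ℂ) : Differentiable ℂ (flatInterp n μ x) := by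
  have := fun i => (differentiable_bump μ).comp (differentiable_lagrangeBasis n x i)
  unfold flatInterp
  simp only [Function.comp_def] at this
  fun_prop

theorem vanishesTo_flatInterp {n μ : ℕ} (hμ : 0 < μ) {x : ℕ → ℂ} (hx : Function.Injective x)
    {i : ℕ} (hi : i < n) : VanishesTo (fun z => flatInterp n μ x z - x i) (x i) μ := by
  have hself : lagrangeBasis n x i (x i) = 1 := by
    refine Finset.prod_eq_one fun j hj => div_self (sub_ne_zero.2 fun h => ?_)
    exact (Finset.mem_erase.1 hj).1 (hx h).symm
  have hother : ∀ j, j ≠ i → lagrangeBasis n x j (x i) = 0 := fun j hj =>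
    Finset.prod_eq_zero (Finset.mem_erase.2 ⟨hj.symm, Finset.mem_range.2 hi⟩) (by simp)
  have h1 := (vanishesTo_bump_sub_one (differentiable_lagrangeBasis n x i) hself hμ).mul
    (differentiable_const (x i))
  have h2 := VanishesTo.sum ((Finset.range n).erase i) (f := fun j z =>
    bump μ (lagrangeBasis n x j z) * x j) (r := x i) (μ := μ) fun j hj =>
    (vanishesTo_bump (differentiable_lagrangeBasis n x j) (hother j (Finset.mem_erase.1 hj).1) μ).mul
      (differentiable_const (x j))
  refine (h1.add h2).congr fun z => ?_
  rw [flatInterp, ← Finset.add_sum_erase _ _ (Finset.mem_range.2 hi)]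
  ring

/-- `n` equally spaced points of `(0, S)`, symmetric about `S / 2`. -/
noncomputable def node (S : ℝ) (n i : ℕ) : ℂ := ((S * (2 * i + 1) / (2 * n) : ℝ) : ℂ)

theorem node_sub {S : ℝ} {n : ℕ} (hn : 0 < n) (i j : ℕ) :
    node S n i - node S n j = ((S / n * ((i : ℝ) - j) : ℝ) : ℂ) := by
  have : (n : ℝ) ≠ 0 := by positivity
  rw [node, node, ← Complex.ofReal_sub]
  congr 1
  field_simp; ring

theorem node_injective {S : ℝ} (hS : 0 < S) {n : ℕ} (hn : 0 < n) :
    Function.Injective (node S n) := by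
  intro i j h
  have h := sub_eq_zero.2 h
  have hn' : (0 : ℝ) < n := by positivity
  rw [node_sub hn, Complex.ofReal_eq_zero] at h
  have : (i : ℝ) - j = 0 := by
    rcases mul_eq_zero.1 h with h | h
    · exact absurd h (by positivity)
    · exact h
  exact_mod_cast sub_eq_zero.1 this

theorem norm_node_le {S : ℝ} (hS : 0 < S) {n i : ℕ} (hi : i < n) : ‖node S n i‖ ≤ S := by
  have hn' : (0 : ℝ) < n := by exact_mod_cast (by omega : 0 < n)
  have h1 : (i : ℝ) + 1 ≤ n := by exact_mod_cast hi
  rw [node, Complex.norm_real, Real.norm_of_nonneg (by positivity), div_le_iff₀ (by positivity)]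
  nlinarith

theorem prod_erase_abs_sub {n i : ℕ} (hi : i < n) :
    ∏ j ∈ (Finset.range n).erase i, |(i : ℝ) - j| = i.factorial * (n - 1 - i).factorial := by
  have h1 : (Finset.range n).erase i = Finset.range i ∪ Finset.Ico (i + 1) n := by
    ext j; simp; omega
  have hd : Disjoint (Finset.range i) (Finset.Ico (i + 1) n) := by
    rw [Finset.disjoint_left]; intro j; simp; omega
  rw [h1, Finset.prod_union hd]
  congr 1
  · rw [← Finset.prod_range_reflect, ← Finset.prod_range_add_one_eq_factorial, Nat.cast_prod]
    refine Finset.prod_congr rfl fun j hj => ?_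
    have hj := Finset.mem_range.1 hj
    rw [Nat.cast_sub (by omega), Nat.cast_sub (by omega)]
    push_cast
    rw [abs_of_nonneg] <;> [ring; (ring_nf; positivity)]
  · rw [Finset.prod_Ico_eq_prod_range, ← Finset.prod_range_add_one_eq_factorial, Nat.cast_prod,
      show n - (i + 1) = n - 1 - i by omega]
    refine Finset.prod_congr rfl fun j hj => ?_
    push_cast
    rw [abs_sub_comm, abs_of_nonneg] <;> [ring; (ring_nf; positivity)]

theorem pow_le_two_mul_exp_pow_mul {n i : ℕ} (hi : i < n) :
    (n : ℝ) ^ (n - 1) ≤ (2 * Real.exp 1) ^ n * (i.factorial * (n - 1 - i).factorial) := by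
  have h1 : ((n - 1).factorial : ℝ) ≤ 2 ^ n * (i.factorial * (n - 1 - i).factorial) := by
    have := Nat.choose_mul_factorial_mul_factorial (n := n - 1) (k := i) (by omega)
    have hc : (n - 1).choose i ≤ 2 ^ n :=
      (Nat.choose_le_two_pow _ _).trans (Nat.pow_le_pow_right (by norm_num) (by omega))
    rw [← this]
    have hc' : ((n - 1).choose i : ℝ) ≤ 2 ^ n := by exact_mod_cast hc
    push_cast
    rw [mul_assoc]
    gcongr
  have h2 : (n : ℝ) ^ (n - 1) ≤ Real.exp n * (n - 1).factorial := by
    have := Real.pow_div_factorial_le_exp (n : ℝ) (by positivity) (n - 1)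
    rwa [div_le_iff₀ (by positivity)] at this
  calc _ ≤ _ := h2
    _ ≤ Real.exp n * (2 ^ n * (i.factorial * (n - 1 - i).factorial)) := by gcongr
    _ = _ := by rw [mul_pow, ← Real.exp_nat_mul, mul_one]; ring

theorem norm_lagrangeBasis_le {S ρ : ℝ} (hS : 0 < S) (hρ : 0 ≤ ρ) {n i : ℕ} (hi : i < n) {z : ℂ}
    (hz : ‖z‖ ≤ ρ * S) :
    ‖lagrangeBasis n (node S n) i z‖ ≤ (2 * Real.exp 1 * (ρ + 1)) ^ n := by
  have hn : 0 < n := by omega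
  have hn' : (0 : ℝ) < n := by positivity
  have hcard : ((Finset.range n).erase i).card = n - 1 := by
    rw [Finset.card_erase_of_mem (Finset.mem_range.2 hi), Finset.card_range]
  rw [lagrangeBasis, Finset.prod_div_distrib, norm_div, norm_prod, norm_prod]
  have hden : ∏ j ∈ (Finset.range n).erase i, ‖node S n i - node S n j‖ =
      (S / n) ^ (n - 1) * (i.factorial * (n - 1 - i).factorial) := by
    rw [← prod_erase_abs_sub hi, ← hcard, ← Finset.prod_const, ← Finset.prod_mul_distrib]
    refine Finset.prod_congr rfl fun j _ => ?_
    rw [node_sub hn, Complex.norm_real, Real.norm_eq_abs, abs_mul, abs_of_pos (by positivity)]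
  have hnum : ∏ j ∈ (Finset.range n).erase i, ‖z - node S n j‖ ≤ ((ρ + 1) * S) ^ (n - 1) := by
    rw [← hcard, ← Finset.prod_const]
    refine Finset.prod_le_prod (fun _ _ => norm_nonneg _) fun j hj => ?_
    have := norm_node_le hS (Finset.mem_range.1 (Finset.mem_of_mem_erase hj))
    linarith [norm_sub_le z (node S n j)]
  rw [hden, div_le_iff₀ (by positivity)]
  refine hnum.trans ?_
  have key := pow_le_two_mul_exp_pow_mul hi
  have h1 : (ρ + 1) ^ (n - 1) ≤ (ρ + 1) ^ n := pow_le_pow_right₀ (by linarith) (by omega)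
  calc ((ρ + 1) * S) ^ (n - 1) = (ρ + 1) ^ (n - 1) * ((S / n) ^ (n - 1) * (n : ℝ) ^ (n - 1)) := by
        rw [← mul_pow, ← mul_pow]; congr 1; field_simp
    _ ≤ (ρ + 1) ^ n * ((S / n) ^ (n - 1) *
        ((2 * Real.exp 1) ^ n * (i.factorial * (n - 1 - i).factorial))) := by gcongr
    _ = _ := by rw [mul_pow (2 * Real.exp 1)]; ring

theorem norm_flatInterp_le {S ρ : ℝ} (hS : 0 < S) (hρ : 0 ≤ ρ) (n : ℕ) {μ : ℕ} (hμ : 0 < μ) {z : ℂ}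
    (hz : ‖z‖ ≤ ρ * S) :
    ‖flatInterp n μ (node S n) z‖ ≤
      n * S * (1 + 2 * (2 * Real.exp 1 * (ρ + 1)) ^ n) ^ (2 * μ) := by
  have : ∀ i ∈ Finset.range n, ‖bump μ (lagrangeBasis n (node S n) i z) * node S n i‖ ≤
      (1 + 2 * (2 * Real.exp 1 * (ρ + 1)) ^ n) ^ (2 * μ) * S := by
    intro i hi
    have hi := Finset.mem_range.1 hi
    rw [norm_mul]
    gcongr
    · refine (norm_bump_le hμ _).trans ?_
      gcongr
      exact norm_lagrangeBasis_le hS hρ hi hz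
    · exact norm_node_le hS hi
  refine (norm_sum_le _ _).trans ((Finset.sum_le_card_nsmul _ _ _ this).trans_eq ?_)
  rw [Finset.card_range, nsmul_eq_mul]; ring

theorem node_add_node_reflect {S : ℝ} {n i : ℕ} (hi : i < n) :
    node S n i + node S n (n - 1 - i) = S := by
  have hn' : (n : ℝ) ≠ 0 := by exact_mod_cast (by omega : n ≠ 0)
  rw [node, node, ← Complex.ofReal_add]
  congr 1
  rw [Nat.cast_sub (by omega), Nat.cast_sub (by omega)]
  push_cast
  field_simp; ring

theorem norm_prod_sub_node_le {S : ℝ} (hS : 0 < S) (n : ℕ) {t : ℝ} (ht0 : 0 ≤ t) (ht : t ≤ S) :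
    ‖∏ i ∈ Finset.range n, ((t : ℂ) - node S n i)‖ ≤ (S / 2) ^ n := by
  have hsq : ‖∏ i ∈ Finset.range n, ((t : ℂ) - node S n i)‖ ^ 2 ≤ ((S / 2) ^ n) ^ 2 := by
    have : (∏ i ∈ Finset.range n, ((t : ℂ) - node S n i)) ^ 2 =
        ∏ i ∈ Finset.range n, (((t : ℂ) - node S n i) * (t - node S n (n - 1 - i))) := by
      rw [Finset.prod_mul_distrib, Finset.prod_range_reflect (fun i => (t : ℂ) - node S n i), sq]
    rw [← norm_pow, this, norm_prod, ← pow_mul, mul_comm n 2, pow_mul]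
    conv_rhs => rw [← Finset.card_range n, ← Finset.prod_const]
    refine Finset.prod_le_prod (fun _ _ => norm_nonneg _) fun i hi => ?_
    have hi := Finset.mem_range.1 hi
    have e : node S n (n - 1 - i) = S - node S n i := by
      rw [← node_add_node_reflect hi]; ring
    have hn' : (0 : ℝ) < n := by exact_mod_cast (by omega : 0 < n)
    have h1 : (i : ℝ) + 1 ≤ n := by exact_mod_cast hi
    set a : ℝ := S * (2 * i + 1) / (2 * n) with ha
    have ha0 : 0 ≤ a := by positivity
    have ha1 : a ≤ S := by
      rw [ha, div_le_iff₀ (by positivity)]; nlinarith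
    rw [e, show node S n i = (a : ℂ) from rfl, ← Complex.ofReal_sub, ← Complex.ofReal_sub,
      ← Complex.ofReal_sub, ← Complex.ofReal_mul, Complex.norm_real, Real.norm_eq_abs, abs_le]
    constructor
    · nlinarith [sq_nonneg (t - S / 2), mul_nonneg ha0 (sub_nonneg.2 ha1), sq_nonneg (a - S / 2)]
    · nlinarith [sq_nonneg (a - S / 2), mul_nonneg ht0 (sub_nonneg.2 ht)]
  exact (sq_le_sq₀ (norm_nonneg _) (by positivity)).1 hsq

end

section

open Polynomial

theorem norm_sum_mul_exp_le {ι : Type*} (C : Finset ι) (Q : ι → ℂ[X]) (θ τ : ι → ℝ)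
    {n μ : ℕ} (hn : 0 < n) (hμ : 0 < μ) {S ρ w B ε Vm : ℝ} (hS : 0 < S) (hρ : 1 < ρ)
    (hB : 0 ≤ B)
    (h : ∀ k < n, ∀ i j, i + j < μ → ∑ l ∈ C, (hasseDeriv i (Q l)).eval (node S n k) *
      (θ l : ℂ) ^ j * Complex.exp (node S n k * (θ l + τ l)) = 0)
    (hQ : ∀ l ∈ C, ∀ z : ℂ, ‖z‖ ≤ ρ * S → ‖(Q l).eval z‖ ≤ B)
    (h0 : ∀ l ∈ C, 0 ≤ θ l + τ l) (hw : ∀ l ∈ C, θ l + τ l ≤ w) (hw0 : 0 ≤ w)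
    (hτ : ∀ l ∈ C, |τ l| ≤ ε)
    (hVm : n * S * (1 + 2 * (2 * Real.exp 1 * (ρ + 1)) ^ n) ^ (2 * μ) + ρ * S ≤ Vm)
    (hε : ε * Vm ≤ 1) {t : ℝ} (ht0 : 0 ≤ t) (ht : t ≤ S) :
    ‖∑ l ∈ C, (Q l).eval (t : ℂ) * Complex.exp (t * (θ l + τ l))‖ ≤
      C.card * B * (Real.exp (w * S * (1 + ρ) / 2 + 1) * (1 / (2 * (ρ - 1))) ^ (n * μ) +
        Real.exp (w * S) * (2 * (ε * Vm))) := by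
  rcases C.eq_empty_or_nonempty with rfl | ⟨l0, hl0⟩
  · simp
  have hε0 : 0 ≤ ε := (abs_nonneg _).trans (hτ l0 hl0)
  set V := flatInterp n μ (node S n) with hVdef
  have hVd : Differentiable ℂ V := differentiable_flatInterp _ _ _
  have hVb : ∀ z : ℂ, ‖z‖ ≤ ρ * S → ‖V z - z‖ ≤ Vm := fun z hz =>
    (norm_sub_le _ _).trans ((add_le_add (norm_flatInterp_le hS (by linarith) n hμ hz) hz).trans hVm)
  have hτV : ∀ l ∈ C, ∀ z : ℂ, ‖z‖ ≤ ρ * S → ‖(τ l : ℂ) * (V z - z)‖ ≤ ε * Vm := by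
    intro l hl z hz
    rw [norm_mul, Complex.norm_real, Real.norm_eq_abs]
    exact mul_le_mul (hτ l hl) (hVb z hz) (norm_nonneg _) hε0
  set G : ℂ → ℂ := fun z => ∑ l ∈ C, (Q l).eval z *
      Complex.exp (z * (θ l - (w / 2 : ℝ)) + τ l * V z) with hG
  have hGd : Differentiable ℂ G := by
    have := fun l => (Q l).differentiable
    rw [hG]; fun_prop
  have hGv : ∀ r ∈ (Finset.range n).image (node S n), VanishesTo G r μ := by
    intro r hr
    obtain ⟨k, hk, rfl⟩ := Finset.mem_image.1 hr
    have hk := Finset.mem_range.1 hk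
    exact vanishesTo_main C Q (fun l => θ l) (fun l => τ l) V _ _ μ
      (vanishesTo_flatInterp hμ (node_injective hS hn) hk) (h k hk)
  have hexpn : ∀ l ∈ C, ∀ z : ℂ, ‖z‖ ≤ ρ * S →
      ‖Complex.exp (z * (θ l - (w / 2 : ℝ)) + τ l * V z)‖ ≤ Real.exp (w / 2 * (ρ * S) + 1) := by
    intro l hl z hz
    refine (Complex.norm_exp_le_exp_norm _).trans (Real.exp_le_exp.2 ?_)
    have e : z * (θ l - (w / 2 : ℝ)) + τ l * V z =
        z * ((θ l + τ l - w / 2 : ℝ) : ℂ) + τ l * (V z - z) := by push_cast; ring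
    rw [e]
    refine (norm_add_le _ _).trans (add_le_add ?_ ((hτV l hl z hz).trans hε))
    rw [norm_mul, Complex.norm_real, Real.norm_eq_abs, mul_comm]
    refine mul_le_mul ?_ hz (norm_nonneg _) (by positivity)
    rw [abs_le]; constructor <;> linarith [h0 l hl, hw l hl]
  have hA : ∀ z, ‖z‖ = ρ * S → ‖G z‖ ≤ C.card * (B * Real.exp (w / 2 * (ρ * S) + 1)) := by
    intro z hz
    refine (norm_sum_le _ _).trans ((Finset.sum_le_card_nsmul _ _ _ fun l hl => ?_).trans_eq
      (nsmul_eq_mul _ _))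
    rw [norm_mul]
    exact mul_le_mul (hQ l hl z hz.le) (hexpn l hl z hz.le) (norm_nonneg _) hB
  have hprod : ∀ z, ∏ r ∈ (Finset.range n).image (node S n), (z - r) =
      ∏ i ∈ Finset.range n, (z - node S n i) := fun z =>
    Finset.prod_image ((node_injective hS hn).injOn)
  have hD : ∀ z : ℂ, ‖z‖ = ρ * S → ((ρ - 1) * S) ^ n ≤
      ‖∏ r ∈ (Finset.range n).image (node S n), (z - r)‖ := by
    intro z hz
    rw [hprod, norm_prod]
    conv_lhs => rw [← Finset.card_range n, ← Finset.prod_const]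
    refine Finset.prod_le_prod (fun _ _ => by nlinarith) fun i hi => ?_
    have := norm_node_le hS (Finset.mem_range.1 hi)
    linarith [norm_sub_norm_le z (node S n i)]
  have htn : ‖(t : ℂ)‖ = t := by rw [Complex.norm_real, Real.norm_of_nonneg ht0]
  have htρ : ‖(t : ℂ)‖ ≤ ρ * S := by rw [htn]; nlinarith
  have hρ0 : 0 < ρ - 1 := by linarith
  have hGt : ‖G t‖ ≤ C.card * B * (Real.exp (w / 2 * (ρ * S) + 1) *
      (1 / (2 * (ρ - 1))) ^ (n * μ)) := by
    refine (norm_le_of_vanishesTo hGd _ hGv (by nlinarith) (by positivity) hA hD htρ).trans ?_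
    rw [hprod]
    have hp := norm_prod_sub_node_le hS n ht0 ht
    calc _ ≤ ((S / 2) ^ n) ^ μ * (C.card * (B * Real.exp (w / 2 * (ρ * S) + 1)) /
          (((ρ - 1) * S) ^ n) ^ μ) := by gcongr
      _ = _ := by
        have : (1 / (2 * (ρ - 1))) = (S / 2) / ((ρ - 1) * S) := by field_simp
        rw [this, div_pow (S / 2), pow_mul, pow_mul]
        ring
  have hsplit : ∑ l ∈ C, (Q l).eval (t : ℂ) * Complex.exp (t * (θ l + τ l)) =
      Complex.exp (t * (w / 2 : ℝ)) * G t + ∑ l ∈ C, (Q l).eval (t : ℂ) *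
        Complex.exp (t * (θ l + τ l)) * -(Complex.exp (τ l * (V t - t)) - 1) := by
    rw [hG, Finset.mul_sum, ← Finset.sum_add_distrib]
    refine Finset.sum_congr rfl fun l _ => ?_
    have : Complex.exp (t * (w / 2 : ℝ)) * ((Q l).eval (t : ℂ) *
        Complex.exp (t * (θ l - (w / 2 : ℝ)) + τ l * V t)) = (Q l).eval (t : ℂ) *
        (Complex.exp (t * (θ l + τ l)) * Complex.exp (τ l * (V t - t))) := by
      rw [mul_left_comm, ← Complex.exp_add, ← Complex.exp_add]
      congr 2; ring
    rw [this]; ring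
  rw [hsplit]
  refine (norm_add_le _ _).trans ?_
  have h1 : ‖Complex.exp (t * (w / 2 : ℝ)) * G t‖ ≤ C.card * B *
      (Real.exp (w * S * (1 + ρ) / 2 + 1) * (1 / (2 * (ρ - 1))) ^ (n * μ)) := by
    have e1 : ‖Complex.exp (t * (w / 2 : ℝ))‖ ≤ Real.exp (S * (w / 2)) := by
      rw [← Complex.ofReal_mul, Complex.norm_exp_ofReal]
      gcongr
    rw [norm_mul]
    calc _ ≤ Real.exp (S * (w / 2)) * (C.card * B * (Real.exp (w / 2 * (ρ * S) + 1) *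
          (1 / (2 * (ρ - 1))) ^ (n * μ))) := by gcongr
      _ = C.card * B * ((Real.exp (S * (w / 2)) * Real.exp (w / 2 * (ρ * S) + 1)) *
          (1 / (2 * (ρ - 1))) ^ (n * μ)) := by ring
      _ = _ := by
        rw [← Real.exp_add,
          show S * (w / 2) + (w / 2 * (ρ * S) + 1) = w * S * (1 + ρ) / 2 + 1 by ring]
  have h2 : ‖∑ l ∈ C, (Q l).eval (t : ℂ) * Complex.exp (t * (θ l + τ l)) *
      -(Complex.exp (τ l * (V t - t)) - 1)‖ ≤
      C.card * (B * Real.exp (w * S) * (2 * (ε * Vm))) := by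
    refine (norm_sum_le _ _).trans ((Finset.sum_le_card_nsmul _ _ _ fun l hl => ?_).trans_eq
      (nsmul_eq_mul _ _))
    rw [norm_mul, norm_mul, norm_neg]
    have hv := hτV l hl t htρ
    have e2 : ‖Complex.exp (τ l * (V t - t)) - 1‖ ≤ 2 * (ε * Vm) :=
      (Complex.norm_exp_sub_one_le (hv.trans hε)).trans (by linarith)
    have e3 : ‖Complex.exp (t * (θ l + τ l))‖ ≤ Real.exp (w * S) := by
      rw [← Complex.ofReal_add, ← Complex.ofReal_mul, Complex.norm_exp_ofReal]
      refine Real.exp_le_exp.2 ?_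
      rw [mul_comm w]
      exact mul_le_mul ht (hw l hl) (h0 l hl) hS.le
    have hV0 : 0 ≤ ε * Vm := (norm_nonneg _).trans hv
    exact mul_le_mul (mul_le_mul (hQ l hl t htρ) e3 (norm_nonneg _) hB) e2 (norm_nonneg _)
      (by positivity)
  linarith

end

section

open Polynomial Nat

/-- The binomial coefficient polynomial `X (X - 1) ⋯ (X - r + 1) / r!`. -/
noncomputable def binomPoly (r : ℕ) : ℚ[X] :=
  C (r ! : ℚ)⁻¹ * ∏ i ∈ Finset.range r, (X - C (i : ℚ))

theorem smeval_descPochhammer_eq_prod (f : ℚ[X]) (r : ℕ) :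
    (descPochhammer ℤ r).smeval f = ∏ i ∈ Finset.range r, (f - C (i : ℚ)) := by
  induction r with
  | zero => simp
  | succ r ih =>
    rw [descPochhammer_succ_right, smeval_mul, ih, Finset.prod_range_succ, smeval_sub, smeval_X,
      smeval_natCast]
    simp

theorem ringChoose_eq_prod (f : ℚ[X]) (r : ℕ) :
    Ring.choose f r = C (r ! : ℚ)⁻¹ * ∏ i ∈ Finset.range r, (f - C (i : ℚ)) := by
  have h := Ring.descPochhammer_eq_factorial_smul_choose f r
  rw [smeval_descPochhammer_eq_prod] at h
  have h0 : (r ! : ℚ) ≠ 0 := by exact_mod_cast r.factorial_ne_zero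
  rw [h, nsmul_eq_mul, ← mul_assoc, ← C_eq_natCast, ← C_mul, inv_mul_cancel₀ h0, C_1, one_mul]

theorem binomPoly_comp (f : ℚ[X]) (r : ℕ) : (binomPoly r).comp f = Ring.choose f r := by
  rw [ringChoose_eq_prod, binomPoly, mul_comp, C_comp, prod_comp]
  simp

/-- Rational polynomials with integer coefficients. -/
noncomputable abbrev intPoly : Subring ℚ[X] := (mapRingHom (Int.castRingHom ℚ)).range

theorem C_int_mem_intPoly (n : ℤ) : C (n : ℚ) ∈ intPoly := ⟨C n, by simp⟩

theorem X_mem_intPoly : (X : ℚ[X]) ∈ intPoly := ⟨X, by simp⟩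

theorem exists_int_of_mem_intPoly {f : ℚ[X]} (hf : f ∈ intPoly) (m : ℕ) :
    ∃ c : ℤ, f.coeff m = c := by
  obtain ⟨g, rfl⟩ := hf
  exact ⟨g.coeff m, by simp⟩

theorem prod_range_C_mul_X_sub {d h : ℕ} (hd : ∀ t, 0 < t → t ≤ h → t ∣ d) (i : ℕ) (hi : i < h) :
    ∃ q ∈ intPoly, ∏ t ∈ Finset.range (i + 1), (C (d : ℚ) * X - C (t : ℚ)) =
      C (i ! : ℚ) * (C (d : ℚ) * q) := by
  induction i with
  | zero => exact ⟨X, X_mem_intPoly, by simp⟩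
  | succ i ih =>
    obtain ⟨q, hq, h1⟩ := ih (by omega)
    obtain ⟨e, he⟩ := hd (i + 1) (by omega) (by omega)
    refine ⟨q * (C ((e : ℤ) : ℚ) * X - 1), intPoly.mul_mem hq (intPoly.sub_mem
      (intPoly.mul_mem (C_int_mem_intPoly e) X_mem_intPoly) intPoly.one_mem), ?_⟩
    rw [Finset.prod_range_succ, h1, Nat.factorial_succ]
    have : C (d : ℚ) * X - C ((i + 1 : ℕ) : ℚ) =
        C ((i + 1 : ℕ) : ℚ) * (C ((e : ℤ) : ℚ) * X - 1) := by
      rw [he]; push_cast; simp only [C_mul]; ring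
    rw [this, Nat.cast_mul, C_mul]; ring

theorem ringChoose_C_mul_X_mem {d h : ℕ} (hd : ∀ t, 0 < t → t ≤ h → t ∣ d) {i : ℕ} (hi : i ≤ h) :
    Ring.choose (C (d : ℚ) * X : ℚ[X]) i ∈ intPoly := by
  rcases i with _ | i
  · rw [Ring.choose_zero_right]; exact intPoly.one_mem
  · obtain ⟨q, hq, h1⟩ := prod_range_C_mul_X_sub hd i (by omega)
    obtain ⟨e, he⟩ := hd (i + 1) (by omega) hi
    rw [ringChoose_eq_prod, h1]
    have : C (((i + 1)! : ℕ) : ℚ)⁻¹ * (C (i ! : ℚ) * (C (d : ℚ) * q)) = C ((e : ℤ) : ℚ) * q := by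
      rw [← mul_assoc, ← mul_assoc, ← C_mul, ← C_mul]
      congr 2
      rw [he, Nat.factorial_succ]
      have : (i ! : ℚ) ≠ 0 := by exact_mod_cast i.factorial_ne_zero
      have : ((i : ℚ) + 1) ≠ 0 := by positivity
      push_cast
      field_simp
    rw [this]
    exact intPoly.mul_mem (C_int_mem_intPoly e) hq

theorem factorial_dvd_two_pow_mul_prod (a : ℤ) (j r : ℕ) :
    (r ! : ℤ) ∣ 2 ^ r * ∏ i ∈ Finset.range r, (a - 2 ^ j * i) := by
  obtain ⟨v, o, ho, hvo⟩ := Nat.exists_eq_two_pow_mul_odd r.factorial_ne_zero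
  have hv : v ≤ r := by
    by_contra hlt
    have h1 : 2 ^ (r + 1) ∣ r ! :=
      (pow_dvd_pow 2 (by omega)).trans ⟨o, hvo⟩
    rcases Nat.eq_zero_or_pos r with rfl | hr
    · revert h1; decide
    · have h2 := Nat.emultiplicity_two_factorial_lt hr.ne'
      have h3 := le_emultiplicity_of_pow_dvd h1
      have := lt_of_le_of_lt h3 h2
      norm_cast at this
      omega
  have hop : (o : ℤ) ∣ ∏ i ∈ Finset.range r, (a - 2 ^ j * i) := by
    have hco : IsCoprime (2 ^ j : ℤ) o := by
      apply IsCoprime.pow_left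
      have : Nat.Coprime 2 o := (Nat.coprime_two_left).2 ho
      exact_mod_cast (Nat.isCoprime_iff_coprime.2 this)
    obtain ⟨u, w, huw⟩ := hco
    have hmod : ∏ i ∈ Finset.range r, (a - 2 ^ j * i) ≡
        ∏ i ∈ Finset.range r, (2 ^ j * (a * u - i)) [ZMOD o] := by
      refine Int.ModEq.prod fun i _ => ?_
      rw [Int.modEq_iff_dvd]
      exact ⟨-(a * w), by linear_combination a * huw⟩
    have hdv : (o : ℤ) ∣ ∏ i ∈ Finset.range r, (2 ^ j * (a * u - i)) := by
      rw [Finset.prod_mul_distrib]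
      refine Dvd.dvd.mul_left ?_ _
      have h1 : (o : ℤ) ∣ (r ! : ℤ) := by exact_mod_cast Dvd.intro_left _ hvo.symm
      refine h1.trans ?_
      have := Ring.descPochhammer_eq_factorial_smul_choose (a * u) r
      have h2 : (descPochhammer ℤ r).smeval (a * u) = ∏ i ∈ Finset.range r, (a * u - i) := by
        rw [← eval_eq_smeval, descPochhammer_eval_eq_prod_range]
      rw [← h2, this, nsmul_eq_mul]
      exact dvd_mul_right _ _
    exact hmod.dvd_iff.2 hdv
  rw [hvo]
  push_cast
  exact mul_dvd_mul (pow_dvd_pow 2 hv) hop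

theorem exists_int_two_pow_mul_choose (a : ℤ) (j r : ℕ) :
    ∃ c : ℤ, C ((2 : ℚ) ^ ((j + 1) * r)) * Ring.choose (C ((a : ℚ) / 2 ^ j)) r = C (c : ℚ) := by
  obtain ⟨c, hc⟩ := factorial_dvd_two_pow_mul_prod a j r
  refine ⟨c, ?_⟩
  have h1 : ∀ i : ℕ, C ((a : ℚ) / 2 ^ j) - C (i : ℚ) = C (((a - 2 ^ j * i : ℤ) : ℚ) / 2 ^ j) := by
    intro i
    rw [← C_sub]; congr 1; push_cast; field_simp
  rw [ringChoose_eq_prod]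
  simp_rw [h1]
  rw [← map_prod, ← C_mul, ← C_mul, Finset.prod_div_distrib, Finset.prod_const, Finset.card_range,
    ← Int.cast_prod]
  congr 1
  have h0 : (r ! : ℚ) ≠ 0 := by exact_mod_cast r.factorial_ne_zero
  have hc' : (2 : ℚ) ^ r * ((∏ i ∈ Finset.range r, (a - 2 ^ j * i) : ℤ) : ℚ) = r ! * c := by
    exact_mod_cast hc
  rw [add_mul, one_mul, pow_add, pow_mul]
  field_simp
  linear_combination hc'

theorem two_pow_mul_binomPoly_comp_mem {d h : ℕ} (hd : ∀ t, 0 < t → t ≤ h → t ∣ d) {r : ℕ}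
    (hr : r ≤ h) (a : ℤ) (j : ℕ) :
    C ((2 : ℚ) ^ ((j + 1) * r)) *
      (binomPoly r).comp (C ((a : ℚ) / 2 ^ j) + C (d : ℚ) * X) ∈ intPoly := by
  rw [binomPoly_comp, Ring.add_choose_eq _ (Commute.all _ _), Finset.mul_sum]
  refine intPoly.sum_mem fun x hx => ?_
  have hx := Finset.HasAntidiagonal.mem_antidiagonal.1 hx
  obtain ⟨c, hc⟩ := exists_int_two_pow_mul_choose a j x.1
  have : C ((2 : ℚ) ^ ((j + 1) * r)) = C (((2 ^ ((j + 1) * x.2) : ℤ)) : ℚ) *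
      C ((2 : ℚ) ^ ((j + 1) * x.1)) := by
    rw [← C_mul]; congr 1; push_cast; rw [← pow_add, ← hx]; congr 1; ring
  rw [this, mul_assoc, ← mul_assoc (C ((2 : ℚ) ^ ((j + 1) * x.1))), hc]
  exact intPoly.mul_mem (C_int_mem_intPoly _) (intPoly.mul_mem (C_int_mem_intPoly _)
    (ringChoose_C_mul_X_mem hd (by omega)))

theorem coeff_comp_C_add_C_mul_X (Q : ℚ[X]) (z d : ℚ) (m : ℕ) :
    (Q.comp (C z + C d * X)).coeff m = d ^ m * (hasseDeriv m Q).eval z := by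
  have : Q.comp (C z + C d * X) = (taylor z Q).comp (C d * X) := by
    rw [taylor_apply, comp_assoc]; congr 1; simp [add_comm]
  rw [this, comp_C_mul_X_coeff, taylor_coeff]; ring

theorem binomPoly_ne_zero (r : ℕ) : binomPoly r ≠ 0 := by
  refine mul_ne_zero ?_ (Finset.prod_ne_zero_iff.2 fun i _ => X_sub_C_ne_zero _)
  rw [C_ne_zero]
  exact inv_ne_zero (by exact_mod_cast r.factorial_ne_zero)

theorem natDegree_binomPoly (r : ℕ) : (binomPoly r).natDegree = r := by
  have h0 : (r ! : ℚ)⁻¹ ≠ 0 := inv_ne_zero (by exact_mod_cast r.factorial_ne_zero)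
  rw [binomPoly, natDegree_C_mul h0, natDegree_prod_of_monic _ _ fun i _ => monic_X_sub_C _]
  simp only [natDegree_X_sub_C, Finset.sum_const, Finset.card_range, smul_eq_mul, mul_one]

/-- Feldman's polynomials: products of binomial polynomials, of degree `i`. -/
noncomputable def feldPoly (h i : ℕ) : ℚ[X] := binomPoly h ^ (i / h) * binomPoly (i % h)

theorem feldPoly_ne_zero (h i : ℕ) : feldPoly h i ≠ 0 :=
  mul_ne_zero (pow_ne_zero _ (binomPoly_ne_zero _)) (binomPoly_ne_zero _)

theorem natDegree_feldPoly (h i : ℕ) : (feldPoly h i).natDegree = i := by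
  rw [feldPoly, natDegree_mul (pow_ne_zero _ (binomPoly_ne_zero _)) (binomPoly_ne_zero _),
    natDegree_pow, natDegree_binomPoly, natDegree_binomPoly, mul_comm, Nat.div_add_mod]

theorem exists_int_hasseDeriv_feldPoly {h : ℕ} (hh : 0 < h) {d : ℕ}
    (hd : ∀ t, 0 < t → t ≤ h → t ∣ d) (i m : ℕ) (a : ℤ) (j : ℕ) :
    ∃ c : ℤ, (2 : ℚ) ^ ((j + 1) * i) * ((d : ℚ) ^ m *
      (hasseDeriv m (feldPoly h i)).eval ((a : ℚ) / 2 ^ j)) = c := by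
  have h1 := two_pow_mul_binomPoly_comp_mem hd le_rfl a j
  have h2 := two_pow_mul_binomPoly_comp_mem hd (Nat.mod_lt i hh).le a j
  have h3 := exists_int_of_mem_intPoly (intPoly.mul_mem (intPoly.pow_mem h1 (i / h)) h2) m
  obtain ⟨c, hc⟩ := h3
  refine ⟨c, hc ▸ ?_⟩
  rw [← coeff_comp_C_add_C_mul_X, ← coeff_C_mul, feldPoly, mul_comp, pow_comp, mul_pow, ← C_pow,
    ← pow_mul]
  congr 1
  have : (j + 1) * i = (j + 1) * h * (i / h) + (j + 1) * (i % h) := by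
    conv_lhs => rw [← Nat.div_add_mod i h]
    ring
  rw [this, pow_add, C_mul]; ring

end

section

open Polynomial Nat

theorem iteratedDeriv_polynomial (Q : ℂ[X]) (m : ℕ) (z : ℂ) :
    iteratedDeriv m (fun w => Q.eval w) z = m ! * (hasseDeriv m Q).eval z := by
  have h : ∀ (Q : ℂ[X]), iteratedDeriv m (fun w => Q.eval w) =
      fun z => ((derivative^[m]) Q).eval z := by
    induction m with
    | zero => intro Q; simp
    | succ m ih =>
      intro Q
      rw [iteratedDeriv_succ']
      have : deriv (fun w => Q.eval w) = fun w => (derivative Q).eval w := by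
        ext w; exact Q.deriv
      rw [this, ih, Function.iterate_succ_apply]
  rw [h, ← factorial_smul_hasseDeriv]
  simp

theorem norm_hasseDeriv_eval_le (Q : ℂ[X]) (m : ℕ) {R M : ℝ}
    (hQ : ∀ z : ℂ, ‖z‖ ≤ R + 1 → ‖Q.eval z‖ ≤ M) {z : ℂ} (hz : ‖z‖ ≤ R) :
    ‖(hasseDeriv m Q).eval z‖ ≤ M := by
  have h := Complex.norm_iteratedDeriv_le_of_forall_mem_sphere_norm_le (c := z) (C := M) m
    one_pos (Q.differentiable.diffContOnCl) fun w hw => hQ w (by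
      have : ‖w - z‖ = 1 := by simpa [mem_sphere_iff_norm] using hw
      linarith [norm_sub_norm_le w z])
  rw [iteratedDeriv_polynomial, norm_mul, one_pow, div_one, Complex.norm_natCast] at h
  exact le_of_mul_le_mul_left h (by positivity)

theorem norm_binomPoly_le {h r : ℕ} (hh : 0 < h) (hr : r ≤ h) {A : ℝ} {z : ℂ} (hz : ‖z‖ ≤ A) :
    ‖((binomPoly r).map (algebraMap ℚ ℂ)).eval z‖ ≤ (Real.exp 1 * (A + h) / h) ^ h := by
  have hA : 0 ≤ A := (norm_nonneg z).trans hz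
  have hh' : (0 : ℝ) < h := by exact_mod_cast hh
  have h1 : ‖((binomPoly r).map (algebraMap ℚ ℂ)).eval z‖ ≤ (A + h) ^ r / r ! := by
    rw [binomPoly, Polynomial.map_mul, Polynomial.map_prod, eval_mul, eval_prod, norm_mul, norm_prod]
    simp only [map_C, eval_C, Polynomial.map_sub, map_X, eval_sub, eval_X]
    have e1 : ‖(algebraMap ℚ ℂ) (r ! : ℚ)⁻¹‖ = (r ! : ℝ)⁻¹ := by simp
    rw [e1, div_eq_inv_mul]
    gcongr
    conv_rhs => rw [← Finset.card_range r, ← Finset.prod_const]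
    refine Finset.prod_le_prod (fun _ _ => norm_nonneg _) fun i hi => ?_
    have hi : (i : ℝ) ≤ h := by exact_mod_cast (Finset.mem_range.1 hi).le.trans hr
    refine (norm_sub_le _ _).trans (add_le_add hz ?_)
    simpa using hi
  refine h1.trans ?_
  have h2 := Real.pow_div_factorial_le_exp (h : ℝ) hh'.le r
  have h3 : (A + h) ^ r / r ! = ((A + h) / h) ^ r * ((h : ℝ) ^ r / r !) := by
    rw [div_pow]; field_simp
  have h4 : 1 ≤ (A + h) / h := by rw [le_div_iff₀ hh']; linarith
  calc (A + h) ^ r / r ! = ((A + h) / h) ^ r * ((h : ℝ) ^ r / r !) := h3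
    _ ≤ ((A + h) / h) ^ h * Real.exp h := by
      gcongr
    _ = _ := by rw [mul_div_assoc, mul_pow, ← Real.exp_nat_mul, mul_one, mul_comm]

theorem norm_feldPoly_le {h i k : ℕ} (hh : 0 < h) (hi : i < k * h) {A : ℝ} {z : ℂ}
    (hz : ‖z‖ ≤ A) :
    ‖((feldPoly h i).map (algebraMap ℚ ℂ)).eval z‖ ≤ (Real.exp 1 * (A + h) / h) ^ (k * h) := by
  have hA : 0 ≤ A := (norm_nonneg z).trans hz
  have hh' : (0 : ℝ) < h := by exact_mod_cast hh
  have hY : 1 ≤ Real.exp 1 * (A + h) / h := by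
    rw [le_div_iff₀ hh']
    have : 1 ≤ Real.exp 1 := Real.one_le_exp (by norm_num)
    nlinarith
  have hd : i / h + 1 ≤ k := (Nat.div_lt_iff_lt_mul hh).2 hi
  rw [feldPoly, Polynomial.map_mul, Polynomial.map_pow, eval_mul, eval_pow, norm_mul, norm_pow]
  calc _ ≤ ((Real.exp 1 * (A + h) / h) ^ h) ^ (i / h) * (Real.exp 1 * (A + h) / h) ^ h := by
        gcongr
        · exact norm_binomPoly_le hh le_rfl hz
        · exact norm_binomPoly_le hh (Nat.mod_lt i hh).le hz
    _ = (Real.exp 1 * (A + h) / h) ^ (h * (i / h + 1)) := by rw [← pow_mul, ← pow_add]; ring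
    _ ≤ _ := pow_le_pow_right₀ hY (by rw [mul_comm k]; gcongr)

/-- Integer combination of Feldman's polynomials of degree less than `N`. -/
noncomputable def auxPoly (h N : ℕ) (p : ℕ → ℤ) : ℚ[X] :=
  ∑ i ∈ Finset.range N, (p i : ℚ) • feldPoly h i

theorem degree_feldPoly (h i : ℕ) : (feldPoly h i).degree = i := by
  rw [degree_eq_natDegree (feldPoly_ne_zero h i), natDegree_feldPoly]

theorem auxPoly_ne_zero (h : ℕ) {N : ℕ} {p : ℕ → ℤ} {i : ℕ} (hi : i < N) (hp : p i ≠ 0) :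
    auxPoly h N p ≠ 0 := by
  intro h0
  let F : Polynomial.Sequence ℚ := ⟨feldPoly h, degree_feldPoly h⟩
  have hli := F.linearIndependent
  rw [linearIndependent_iff'] at hli
  have := hli (Finset.range N) (fun i => (p i : ℚ)) h0 i (Finset.mem_range.2 hi)
  exact hp (by exact_mod_cast this)

theorem natDegree_auxPoly_lt (h : ℕ) {N : ℕ} (hN : 0 < N) (p : ℕ → ℤ) :
    (auxPoly h N p).natDegree < N := by
  rw [Nat.lt_iff_le_pred hN]
  refine natDegree_sum_le_of_forall_le _ _ fun i hi => ?_
  refine (natDegree_smul_le _ _).trans ?_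
  rw [natDegree_feldPoly]
  have := Finset.mem_range.1 hi
  omega

theorem exists_int_hasseDeriv_auxPoly {h : ℕ} (hh : 0 < h) {d : ℕ}
    (hd : ∀ t, 0 < t → t ≤ h → t ∣ d) (N : ℕ) (p : ℕ → ℤ) {m M : ℕ} (hm : m ≤ M) (a : ℤ) (j : ℕ) :
    ∃ c : ℤ, (2 : ℚ) ^ ((j + 1) * N) * (d : ℚ) ^ M *
      (hasseDeriv m (auxPoly h N p)).eval ((a : ℚ) / 2 ^ j) = c := by
  choose c hc using fun i => exists_int_hasseDeriv_feldPoly hh hd i m a j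
  refine ⟨∑ i ∈ Finset.range N, 2 ^ ((j + 1) * (N - i)) * d ^ (M - m) * (p i * c i), ?_⟩
  rw [auxPoly, map_sum, eval_finsetSum, Finset.mul_sum]
  push_cast
  refine Finset.sum_congr rfl fun i hi => ?_
  have hi := Finset.mem_range.1 hi
  rw [← hc i, map_smul, eval_smul, smul_eq_mul]
  obtain ⟨e, rfl⟩ := Nat.exists_eq_add_of_le hi.le
  obtain ⟨f, rfl⟩ := Nat.exists_eq_add_of_le hm
  rw [Nat.add_sub_cancel_left, Nat.add_sub_cancel_left, mul_add, pow_add, pow_add]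
  ring

theorem norm_hasseDeriv_auxPoly_le {h k : ℕ} (hh : 0 < h) {p : ℕ → ℤ} {B : ℝ}
    (hp : ∀ i < k * h, |(p i : ℝ)| ≤ B) (m : ℕ) {R : ℝ} {z : ℂ} (hz : ‖z‖ ≤ R) :
    ‖((hasseDeriv m (auxPoly h (k * h) p)).map (algebraMap ℚ ℂ)).eval z‖ ≤
      (k * h : ℕ) * B * (Real.exp 1 * (R + 1 + h) / h) ^ (k * h) := by
  have hm : (hasseDeriv m (auxPoly h (k * h) p)).map (algebraMap ℚ ℂ) =
      hasseDeriv m ((auxPoly h (k * h) p).map (algebraMap ℚ ℂ)) := by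
    ext n; simp [hasseDeriv_coeff]
  rw [hm]
  refine norm_hasseDeriv_eval_le _ m (R := R) (fun w hw => ?_) hz
  rw [auxPoly, Polynomial.map_sum, eval_finsetSum]
  have hR : 0 ≤ R + 1 := (norm_nonneg w).trans hw
  refine (norm_sum_le _ _).trans ((Finset.sum_le_card_nsmul _ _
    (B * (Real.exp 1 * (R + 1 + h) / h) ^ (k * h)) fun i hi => ?_).trans_eq ?_)
  · have hi := Finset.mem_range.1 hi
    rw [Polynomial.map_smul, eval_smul, smul_eq_mul, norm_mul]
    have hpi := hp i hi
    have : ‖(algebraMap ℚ ℂ) (p i)‖ = |(p i : ℝ)| := by simp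
    rw [this]
    exact mul_le_mul hpi (norm_feldPoly_le hh hi hw) (norm_nonneg _) ((abs_nonneg _).trans hpi)
  · rw [Finset.card_range, nsmul_eq_mul, mul_assoc]

theorem lcmUpto_le_exp {h : ℕ} (hh : 0 < h) :
    (lcmUpto h : ℝ) ≤ Real.exp (2.86 * h) := by
  have hh' : (1 : ℝ) ≤ h := by exact_mod_cast hh
  have h1 := Chebyshev.psi_le hh'
  rw [Chebyshev.psi_eq_log_lcmUpto, Real.log_le_iff_le_exp
    (by exact_mod_cast lcmUpto_pos h)] at h1
  refine h1.trans (Real.exp_le_exp.2 ?_)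
  have h4 : Real.log 4 = 2 * Real.log 2 := by
    rw [show (4 : ℝ) = 2 ^ 2 by norm_num, Real.log_pow]; norm_num
  have hs : 0 < √(h : ℝ) := by positivity
  have hlog : Real.log h = 2 * Real.log √(h : ℝ) := by
    rw [Real.log_sqrt (by linarith)]; ring
  have he : Real.log √(h : ℝ) ≤ √(h : ℝ) / Real.exp 1 := by
    have := Real.log_le_sub_one_of_pos (x := √(h : ℝ) / Real.exp 1) (by positivity)
    rw [Real.log_div hs.ne' (Real.exp_pos 1).ne', Real.log_exp] at this
    linarith
  have he2 : √(h : ℝ) / Real.exp 1 ≤ √(h : ℝ) * 0.368 := by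
    rw [div_le_iff₀ (Real.exp_pos 1), mul_assoc]
    nlinarith [Real.exp_one_gt_d9]
  have hsq : √(h : ℝ) * √(h : ℝ) = h := Real.mul_self_sqrt (by linarith)
  rw [h4, hlog]
  nlinarith [Real.log_two_lt_d9, mul_le_mul_of_nonneg_left (he.trans he2) hs.le]

end

section

namespace Subfield

/-- The quadratic extension `F(r)` of a subfield `F` by a square root `r` of an element of `F`. -/
def adjoinSqrt {E : Type*} [Field E] (F : Subfield E) (r : E) (hr : r ^ 2 ∈ F) : Subfield E where
  carrier := {z | ∃ a ∈ F, ∃ b ∈ F, z = a + b * r}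
  mul_mem' := by
    rintro _ _ ⟨a, ha, b, hb, rfl⟩ ⟨c, hc, d, hd, rfl⟩
    exact ⟨a * c + b * d * r ^ 2, F.add_mem (F.mul_mem ha hc) (F.mul_mem (F.mul_mem hb hd) hr),
      a * d + b * c, F.add_mem (F.mul_mem ha hd) (F.mul_mem hb hc), by ring⟩
  one_mem' := ⟨1, F.one_mem, 0, F.zero_mem, by ring⟩
  add_mem' := by
    rintro _ _ ⟨a, ha, b, hb, rfl⟩ ⟨c, hc, d, hd, rfl⟩
    exact ⟨a + c, F.add_mem ha hc, b + d, F.add_mem hb hd, by ring⟩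
  zero_mem' := ⟨0, F.zero_mem, 0, F.zero_mem, by ring⟩
  neg_mem' := by
    rintro _ ⟨a, ha, b, hb, rfl⟩
    exact ⟨-a, F.neg_mem ha, -b, F.neg_mem hb, by ring⟩
  inv_mem' := by
    rintro _ ⟨a, ha, b, hb, rfl⟩
    by_cases h : (a + b * r) * (a - b * r) = 0
    · refine ⟨(a + b * r)⁻¹, ?_, 0, F.zero_mem, by ring⟩
      rcases mul_eq_zero.1 h with h | h
      · rw [h, inv_zero]; exact F.zero_mem
      · have : b * r = a := (sub_eq_zero.1 h).symm
        rw [this]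
        exact F.inv_mem (F.add_mem ha ha)
    · have hN : (a + b * r) * (a - b * r) ∈ F := by
        have : (a + b * r) * (a - b * r) = a * a - b * b * r ^ 2 := by ring
        rw [this]
        exact F.sub_mem (F.mul_mem ha ha) (F.mul_mem (F.mul_mem hb hb) hr)
      refine ⟨a * ((a + b * r) * (a - b * r))⁻¹, F.mul_mem ha (F.inv_mem hN),
        -b * ((a + b * r) * (a - b * r))⁻¹, F.mul_mem (F.neg_mem hb) (F.inv_mem hN), ?_⟩
      have h1 := left_ne_zero_of_mul h
      have h2 := right_ne_zero_of_mul h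
      field_simp
      ring

variable {E : Type*} [Field E] {F : Subfield E} {r : E} {hr : r ^ 2 ∈ F}

theorem mem_adjoinSqrt_of_mem {a : E} (ha : a ∈ F) : a ∈ F.adjoinSqrt r hr :=
  ⟨a, ha, 0, F.zero_mem, by ring⟩

theorem eq_zero_of_add_mul_eq_zero (hrF : r ∉ F) {a b : E} (ha : a ∈ F) (hb : b ∈ F)
    (h : a + b * r = 0) : a = 0 ∧ b = 0 := by
  have hb0 : b = 0 := by
    by_contra hb0
    refine hrF ?_
    have : r = -a / b := by field_simp; linear_combination h
    rw [this]
    exact F.div_mem (F.neg_mem ha) hb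
  exact ⟨by simpa [hb0] using h, hb0⟩

theorem notMem_adjoinSqrt [CharZero E] (hrF : r ∉ F) {s : E} (hs : s ^ 2 ∈ F) (hsF : s ∉ F)
    (hrs : r * s ∉ F) : s ∉ F.adjoinSqrt r hr := by
  rintro ⟨a, ha, b, hb, h⟩
  have h2 : a * b = 0 := by
    have h1 := eq_zero_of_add_mul_eq_zero hrF (a := a * a + b * b * r ^ 2 - s ^ 2) (b := 2 * (a * b))
      (F.sub_mem (F.add_mem (F.mul_mem ha ha) (F.mul_mem (F.mul_mem hb hb) hr)) hs)
      (F.mul_mem (by exact_mod_cast natCast_mem F 2) (F.mul_mem ha hb)) (by rw [h]; ring)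
    simpa using h1.2
  rcases mul_eq_zero.1 h2 with rfl | rfl
  · refine hrs ?_
    rw [h, show r * (0 + b * r) = b * r ^ 2 by ring]
    exact F.mul_mem hb hr
  · exact hsF (by rw [h]; simpa using ha)

end Subfield

open Real Subfield
open scoped goldenRatio

/-- The rationals inside the reals. -/
noncomputable abbrev ratField : Subfield ℝ := (algebraMap ℚ ℝ).fieldRange

theorem natCast_mem_ratField (n : ℕ) : (n : ℝ) ∈ ratField := natCast_mem _ n

theorem sqrt_notMem_ratField {n : ℕ} (h : ¬ IsSquare n) : √(n : ℝ) ∉ ratField := by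
  rintro ⟨q, hq⟩
  exact (irrational_sqrt_natCast_iff.2 h) ⟨q, by simpa using hq⟩

theorem sq_sqrt_natCast (n : ℕ) : √(n : ℝ) ^ 2 = n := Real.sq_sqrt n.cast_nonneg

theorem sq_sqrt_mem (F : Subfield ℝ) (n : ℕ) : √(n : ℝ) ^ 2 ∈ F := by
  rw [sq_sqrt_natCast]; exact natCast_mem F n

theorem sqrt_mul_sqrt_natCast (m n : ℕ) : √(m : ℝ) * √(n : ℝ) = √((m * n : ℕ) : ℝ) := by
  rw [Nat.cast_mul, Real.sqrt_mul m.cast_nonneg]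

/-- `ℚ(√5)` -/
noncomputable def quinticField : Subfield ℝ := ratField.adjoinSqrt √(5 : ℕ) (sq_sqrt_mem _ 5)

theorem not_isSquare_of_lt {n : ℕ} (k : ℕ) (h1 : k * k < n) (h2 : n < (k + 1) * (k + 1)) :
    ¬ IsSquare n := by
  rintro ⟨m, rfl⟩
  have := Nat.mul_self_lt_mul_self_iff.1 h1
  have := Nat.mul_self_lt_mul_self_iff.1 h2
  omega

theorem sqrt_notMem_quinticField {n : ℕ} (h1 : ¬ IsSquare n) (h5 : ¬ IsSquare (5 * n)) :
    √(n : ℝ) ∉ quinticField :=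
  notMem_adjoinSqrt (sqrt_notMem_ratField (not_isSquare_of_lt 2 (by norm_num) (by norm_num)))
    (sq_sqrt_mem _ n) (sqrt_notMem_ratField h1)
    (by rw [sqrt_mul_sqrt_natCast]; exact sqrt_notMem_ratField h5)

theorem goldenRatio_mem_quinticField : φ ∈ quinticField := by
  refine ⟨1 / 2, ?_, 1 / 2, ?_, ?_⟩
  · exact ratField.div_mem ratField.one_mem (by exact_mod_cast natCast_mem_ratField 2)
  · exact ratField.div_mem ratField.one_mem (by exact_mod_cast natCast_mem_ratField 2)
  · rw [goldenRatio]; push_cast; ring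

theorem sqrt_mul_goldenRatio_notMem {d : ℕ} (hd : 0 < d) : √(d : ℝ) * √φ ∉ quinticField := by
  rintro ⟨_, ⟨a, rfl⟩, _, ⟨b, rfl⟩, h⟩
  have hsq : (√(d : ℝ) * √φ) ^ 2 = d * φ := by
    rw [mul_pow, sq_sqrt_natCast, Real.sq_sqrt goldenRatio_pos.le]
  have h5 : √((5 : ℕ) : ℝ) ^ 2 = 5 := by rw [sq_sqrt_natCast]; norm_num
  have hF := sqrt_notMem_ratField (not_isSquare_of_lt 2 (n := 5) (by norm_num) (by norm_num))
  have key := eq_zero_of_add_mul_eq_zero hF (a := ((a ^ 2 + 5 * b ^ 2 - d / 2 : ℚ) : ℝ))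
    (b := ((2 * a * b - d / 2 : ℚ) : ℝ)) ⟨_, rfl⟩ ⟨_, rfl⟩ (by
      rw [h, goldenRatio] at hsq
      simp only [eq_ratCast] at hsq
      push_cast at hsq h5 ⊢
      linear_combination hsq - b ^ 2 * h5)
  have h1 : a ^ 2 + 5 * b ^ 2 - d / 2 = 0 := by exact_mod_cast key.1
  have h2 : 2 * a * b - d / 2 = 0 := by exact_mod_cast key.2
  have hd' : (0 : ℚ) < d := by exact_mod_cast hd
  nlinarith [sq_nonneg (a - b), sq_nonneg b, sq_nonneg (a - 2 * b)]

/-- `ℚ(√5, √2)` -/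
noncomputable def quarticField : Subfield ℝ := quinticField.adjoinSqrt √(2 : ℕ) (sq_sqrt_mem _ 2)

/-- `ℚ(√5, √2, √3)` -/
noncomputable def octicField : Subfield ℝ := quarticField.adjoinSqrt √(3 : ℕ) (sq_sqrt_mem _ 3)

theorem sqrt_two_notMem : √((2 : ℕ) : ℝ) ∉ quinticField :=
  sqrt_notMem_quinticField (not_isSquare_of_lt 1 (by norm_num) (by norm_num))
    (not_isSquare_of_lt 3 (by norm_num) (by norm_num))

theorem sqrt_three_notMem : √((3 : ℕ) : ℝ) ∉ quarticField :=
  notMem_adjoinSqrt sqrt_two_notMem (sq_sqrt_mem _ 3)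
    (sqrt_notMem_quinticField (not_isSquare_of_lt 1 (by norm_num) (by norm_num))
      (not_isSquare_of_lt 3 (by norm_num) (by norm_num)))
    (by
      rw [sqrt_mul_sqrt_natCast]
      exact sqrt_notMem_quinticField (not_isSquare_of_lt 2 (by norm_num) (by norm_num))
        (not_isSquare_of_lt 5 (by norm_num) (by norm_num)))

theorem sqrt_mul_goldenRatio_sq_mem (d : ℕ) : (√(d : ℝ) * √φ) ^ 2 ∈ quinticField := by
  rw [mul_pow, sq_sqrt_natCast, Real.sq_sqrt goldenRatio_pos.le]
  exact quinticField.mul_mem (natCast_mem _ d) goldenRatio_mem_quinticField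

theorem sqrt_mul_goldenRatio_notMem_quarticField {d : ℕ} (hd : 0 < d) :
    √(d : ℝ) * √φ ∉ quarticField :=
  notMem_adjoinSqrt sqrt_two_notMem (sqrt_mul_goldenRatio_sq_mem d)
    (sqrt_mul_goldenRatio_notMem hd) (by
      rw [← mul_assoc, sqrt_mul_sqrt_natCast]
      exact sqrt_mul_goldenRatio_notMem (by omega))

theorem sqrt_goldenRatio_notMem : √φ ∉ octicField := by
  have h1 : √((1 : ℕ) : ℝ) * √φ = √φ := by simp
  refine notMem_adjoinSqrt sqrt_three_notMem ?_ ?_ ?_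
  · rw [← h1]; exact mem_adjoinSqrt_of_mem (sqrt_mul_goldenRatio_sq_mem 1)
  · rw [← h1]; exact sqrt_mul_goldenRatio_notMem_quarticField one_pos
  · exact sqrt_mul_goldenRatio_notMem_quarticField (by norm_num)

theorem independent_sqrt {A : Bool → Bool → Bool → ℝ} (hA : ∀ i j l, A i j l ∈ quinticField)
    (h : ∑ l : Bool, ∑ j : Bool, ∑ i : Bool,
      A i j l * √((2 : ℕ) : ℝ) ^ i.toNat * √((3 : ℕ) : ℝ) ^ j.toNat * √φ ^ l.toNat = 0)
    (i j l : Bool) : A i j l = 0 := by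
  set U : Bool → Bool → ℝ := fun j l => A false j l + A true j l * √((2 : ℕ) : ℝ) with hU
  have hUm : ∀ j l, U j l ∈ quarticField := fun j l => ⟨_, hA _ _ _, _, hA _ _ _, rfl⟩
  set W : Bool → ℝ := fun l => U false l + U true l * √((3 : ℕ) : ℝ) with hW
  have hWm : ∀ l, W l ∈ octicField := fun l => ⟨_, hUm _ _, _, hUm _ _, rfl⟩
  have h0 : W false + W true * √φ = 0 := by
    rw [← h]
    simp only [Fintype.sum_bool, hW, hU, Bool.toNat_true, Bool.toNat_false, pow_one, pow_zero]
    ring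
  have hW0 := eq_zero_of_add_mul_eq_zero sqrt_goldenRatio_notMem (hWm _) (hWm _) h0
  have hW1 : W l = 0 := by cases l <;> simp [hW0]
  have hU0 := eq_zero_of_add_mul_eq_zero sqrt_three_notMem (hUm _ _) (hUm _ _) hW1
  have hU1 : U j l = 0 := by cases j <;> simp [hU0]
  have hA0 := eq_zero_of_add_mul_eq_zero sqrt_two_notMem (hA _ _ _) (hA _ _ _) hU1
  cases i <;> simp [hA0]

theorem sqrt_pow_eq {r : ℝ} (hr : 0 ≤ r) (a : ℕ) : √r ^ a = r ^ (a / 2) * √r ^ (a % 2) := by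
  conv_lhs => rw [← Nat.div_add_mod a 2, pow_add, pow_mul, Real.sq_sqrt hr]

/-- A vanishing sum of integer multiples of `√2 ^ a √3 ^ b √φ ^ e` vanishes on each parity class. -/
theorem sum_parity_class_eq_zero {ι : Type*} (I : Finset ι) (c : ι → ℤ) (a b e : ι → ℕ)
    (h : ∑ i ∈ I, (c i : ℝ) * (√2 ^ a i * √3 ^ b i * √φ ^ e i) = 0) (i₀ : ι) :
    ∑ i ∈ I with a i % 2 = a i₀ % 2 ∧ b i % 2 = b i₀ % 2 ∧ e i % 2 = e i₀ % 2,
      (c i : ℝ) * (√2 ^ a i * √3 ^ b i * √φ ^ e i) = 0 := by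
  set g : ι → ℝ := fun t => c t * (2 ^ (a t / 2) * 3 ^ (b t / 2) * φ ^ (e t / 2)) with hg
  have hgc : ∀ t, (c t : ℝ) * (√2 ^ a t * √3 ^ b t * √φ ^ e t) =
      g t * (√2 ^ (a t % 2) * √3 ^ (b t % 2) * √φ ^ (e t % 2)) := by
    intro t
    rw [sqrt_pow_eq zero_le_two (a t), sqrt_pow_eq zero_le_three (b t),
      sqrt_pow_eq goldenRatio_pos.le (e t)]
    ring
  simp_rw [hgc] at h ⊢
  set A : Bool → Bool → Bool → ℝ := fun i j l => ∑ t ∈ I with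
    a t % 2 = i.toNat ∧ b t % 2 = j.toNat ∧ e t % 2 = l.toNat, g t with hA
  have hAm : ∀ i j l, A i j l ∈ quinticField := fun i j l => by
    refine sum_mem fun t _ => ?_
    refine quinticField.mul_mem (intCast_mem _ _) (quinticField.mul_mem (quinticField.mul_mem
      (pow_mem ?_ _) (pow_mem ?_ _)) (pow_mem goldenRatio_mem_quinticField _))
    · exact_mod_cast natCast_mem quinticField 2
    · exact_mod_cast natCast_mem quinticField 3
  have hsum : ∑ l : Bool, ∑ j : Bool, ∑ i : Bool,
      A i j l * √((2 : ℕ) : ℝ) ^ i.toNat * √((3 : ℕ) : ℝ) ^ j.toNat * √φ ^ l.toNat = 0 := by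
    rw [← h]
    simp only [Fintype.sum_bool, hA, Finset.sum_filter, Finset.sum_mul, ← Finset.sum_add_distrib]
    refine Finset.sum_congr rfl fun t _ => ?_
    rcases Nat.mod_two_eq_zero_or_one (a t) with h1 | h1 <;>
    rcases Nat.mod_two_eq_zero_or_one (b t) with h2 | h2 <;>
    rcases Nat.mod_two_eq_zero_or_one (e t) with h3 | h3 <;>
    simp [h1, h2, h3, mul_assoc]
  have hz := independent_sqrt hAm hsum (a i₀ % 2 == 1) (b i₀ % 2 == 1) (e i₀ % 2 == 1)
  have ht : ∀ m : ℕ, (m % 2 == 1).toNat = m % 2 := fun m => by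
    rcases Nat.mod_two_eq_zero_or_one m with h1 | h1 <;> simp [h1]
  simp only [hA, ht] at hz
  calc _ = ∑ t ∈ I with a t % 2 = a i₀ % 2 ∧ b t % 2 = b i₀ % 2 ∧ e t % 2 = e i₀ % 2,
        g t * (√2 ^ (a i₀ % 2) * √3 ^ (b i₀ % 2) * √φ ^ (e i₀ % 2)) := by
        refine Finset.sum_congr rfl fun t ht => ?_
        obtain ⟨_, h1, h2, h3⟩ := Finset.mem_filter.1 ht
        rw [h1, h2, h3]
    _ = 0 := by rw [← Finset.sum_mul, hz, zero_mul]

end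

section

open Real Polynomial
open scoped goldenRatio

theorem isIntegral_sqrt_two : IsIntegral ℤ √2 :=
  ⟨X ^ 2 - C 2, monic_X_pow_sub_C _ two_ne_zero, by simp⟩

theorem isIntegral_sqrt_three : IsIntegral ℤ √3 :=
  ⟨X ^ 2 - C 3, monic_X_pow_sub_C _ two_ne_zero, by simp⟩

theorem sqrt_goldenRatio_pow_four : √φ ^ 4 = √φ ^ 2 + 1 := by
  rw [show √φ ^ 4 = (√φ ^ 2) ^ 2 by ring, Real.sq_sqrt goldenRatio_pos.le, goldenRatio_sq]

theorem isIntegral_sqrt_goldenRatio : IsIntegral ℤ √φ :=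
  ⟨X ^ 4 - (X ^ 2 + C 1), monic_X_pow_sub (by compute_degree!), by
    simp only [eval₂_sub, eval₂_add, eval₂_X_pow, map_one, eval₂_one, sqrt_goldenRatio_pow_four,
      sub_self]⟩

/-- The field `ℚ(√2, √3, √φ)`. -/
noncomputable def kummerField : IntermediateField ℚ ℝ := IntermediateField.adjoin ℚ {√2, √3, √φ}

theorem finiteDimensional_kummerField : FiniteDimensional ℚ kummerField := by
  refine IntermediateField.finiteDimensional_adjoin fun x hx => ?_
  rcases hx with rfl | rfl | rfl
  · exact isIntegral_sqrt_two.tower_top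
  · exact isIntegral_sqrt_three.tower_top
  · exact isIntegral_sqrt_goldenRatio.tower_top

noncomputable def kummerTwo : kummerField := ⟨√2, IntermediateField.subset_adjoin _ _ (by simp)⟩
noncomputable def kummerThree : kummerField := ⟨√3, IntermediateField.subset_adjoin _ _ (by simp)⟩
noncomputable def kummerPhi : kummerField := ⟨√φ, IntermediateField.subset_adjoin _ _ (by simp)⟩

variable (σ : kummerField →ₐ[ℚ] ℂ)

theorem map_kummerTwo_sq : σ kummerTwo ^ 2 = 2 := by
  rw [← map_pow, show kummerTwo ^ 2 = 2 from Subtype.ext (by simp [kummerTwo]; rfl), map_ofNat]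

theorem map_kummerThree_sq : σ kummerThree ^ 2 = 3 := by
  rw [← map_pow, show kummerThree ^ 2 = 3 from Subtype.ext (by simp [kummerThree]; rfl), map_ofNat]

theorem map_kummerPhi_pow : σ kummerPhi ^ 4 = σ kummerPhi ^ 2 + 1 := by
  rw [← map_pow, show kummerPhi ^ 4 = kummerPhi ^ 2 + 1 from
    Subtype.ext (by simpa [kummerPhi] using sqrt_goldenRatio_pow_four), map_add, map_pow, map_one]

theorem norm_map_kummerTwo : ‖σ kummerTwo‖ = √2 := by
  rw [eq_comm, Real.sqrt_eq_iff_mul_self_eq zero_le_two (norm_nonneg _), ← norm_mul, ← sq,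
    map_kummerTwo_sq]; simp

theorem norm_map_kummerThree : ‖σ kummerThree‖ = √3 := by
  rw [eq_comm, Real.sqrt_eq_iff_mul_self_eq zero_le_three (norm_nonneg _), ← norm_mul, ← sq,
    map_kummerThree_sq]; simp

theorem norm_map_kummerPhi_le : ‖σ kummerPhi‖ ≤ √φ := by
  refine Real.le_sqrt_of_sq_le ?_
  set t := ‖σ kummerPhi‖ ^ 2 with ht
  have h : t ^ 2 ≤ t + 1 := by
    rw [ht, ← pow_mul, ← norm_pow, ← norm_pow, map_kummerPhi_pow]
    exact (norm_add_le _ _).trans (by simp)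
  by_contra! hlt
  nlinarith [goldenRatio_sq, one_lt_goldenRatio]

theorem card_kummerField_algHom_le [Fintype (kummerField →ₐ[ℚ] ℂ)] :
    Fintype.card (kummerField →ₐ[ℚ] ℂ) ≤ 16 := by
  classical
  set r2 : Finset ℂ := (X ^ 2 - C (2 : ℂ)).roots.toFinset
  set r3 : Finset ℂ := (X ^ 2 - C (3 : ℂ)).roots.toFinset
  set r4 : Finset ℂ := (X ^ 4 - (X ^ 2 + C (1 : ℂ))).roots.toFinset
  have hm2 : (X ^ 2 - C (2 : ℂ)).Monic := monic_X_pow_sub_C _ two_ne_zero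
  have hm3 : (X ^ 2 - C (3 : ℂ)).Monic := monic_X_pow_sub_C _ two_ne_zero
  have hm4 : (X ^ 4 - (X ^ 2 + C (1 : ℂ))).Monic := monic_X_pow_sub (by compute_degree!)
  have h2 : r2.card ≤ 2 := (Multiset.toFinset_card_le _).trans
    ((card_roots' _).trans (by compute_degree!))
  have h3 : r3.card ≤ 2 := (Multiset.toFinset_card_le _).trans
    ((card_roots' _).trans (by compute_degree!))
  have h4 : r4.card ≤ 4 := (Multiset.toFinset_card_le _).trans
    ((card_roots' _).trans (by compute_degree!))
  have hle : (Finset.univ : Finset (kummerField →ₐ[ℚ] ℂ)).card ≤ (r2 ×ˢ r3 ×ˢ r4).card := by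
    refine Finset.card_le_card_of_injOn (fun σ => (σ kummerTwo, σ kummerThree, σ kummerPhi)) ?_ ?_
    · intro σ _
      simp only [Finset.coe_product, Set.mem_prod, Finset.mem_coe, Multiset.mem_toFinset, r2, r3,
        r4, mem_roots hm2.ne_zero, mem_roots hm3.ne_zero, mem_roots hm4.ne_zero, IsRoot.def]
      simp [map_kummerTwo_sq, map_kummerThree_sq, map_kummerPhi_pow]
    · intro σ _ τ _ h
      simp only [Prod.mk.injEq] at h
      refine IntermediateField.algHom_ext_of_eq_adjoin _ (s := {√2, √3, √φ}) rfl ?_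
      intro x hx
      rcases hx with rfl | rfl | rfl
      · exact h.1
      · exact h.2.1
      · exact h.2.2
  rw [Finset.card_univ, Finset.card_product, Finset.card_product] at hle
  calc _ ≤ _ := hle
    _ ≤ 2 * (2 * 4) := by gcongr

/-- Liouville's inequality in `ℚ(√2, √3, √φ)`. -/
theorem liouville_kummerField {ι : Type*} (I : Finset ι) (c : ι → ℤ) (a b e : ι → ℕ) {H : ℝ}
    (hH1 : 1 ≤ H) (hH : ∑ i ∈ I, |(c i : ℝ)| * (√2 ^ a i * √3 ^ b i * √φ ^ e i) ≤ H)
    (h0 : ∑ i ∈ I, (c i : ℝ) * (√2 ^ a i * √3 ^ b i * √φ ^ e i) ≠ 0) :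
    1 ≤ |∑ i ∈ I, (c i : ℝ) * (√2 ^ a i * √3 ^ b i * √φ ^ e i)| * H ^ 15 := by
  classical
  have := finiteDimensional_kummerField
  set α : kummerField := ∑ i ∈ I, (c i : kummerField) *
    (kummerTwo ^ a i * kummerThree ^ b i * kummerPhi ^ e i) with hα
  have hval : (α : ℝ) = ∑ i ∈ I, (c i : ℝ) * (√2 ^ a i * √3 ^ b i * √φ ^ e i) := by
    simp [hα, kummerTwo, kummerThree, kummerPhi]
  rw [← hval] at h0 ⊢
  have hα0 : α ≠ 0 := fun h => h0 (by simp [h])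
  have hint : IsIntegral ℤ α := by
    have hinj : Function.Injective (algebraMap kummerField ℝ) := (algebraMap kummerField ℝ).injective
    have key : ∀ x : kummerField, IsIntegral ℤ (x : ℝ) → IsIntegral ℤ x := fun x hx =>
      (isIntegral_algebraMap_iff (A := kummerField) (B := ℝ) hinj).1 hx
    refine IsIntegral.sum _ fun i _ => ?_
    have hc : IsIntegral ℤ (c i : kummerField) := by
      simpa using isIntegral_algebraMap (R := ℤ) (A := kummerField) (x := c i)
    exact hc.mul ((((key kummerTwo isIntegral_sqrt_two).pow _).mul
      ((key kummerThree isIntegral_sqrt_three).pow _)).mul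
      ((key kummerPhi isIntegral_sqrt_goldenRatio).pow _))
  obtain ⟨N, hN⟩ := IsIntegrallyClosed.isIntegral_iff.1 (Algebra.isIntegral_norm ℚ hint)
  have hN0 : N ≠ 0 := by
    rintro rfl
    exact hα0 (Algebra.norm_eq_zero_iff.1 (by rw [← hN]; simp))
  have hprod := Algebra.norm_eq_prod_embeddings ℚ ℂ α
  have hone : 1 ≤ ∏ σ : kummerField →ₐ[ℚ] ℂ, ‖σ α‖ := by
    rw [← norm_prod, ← hprod, ← hN]
    have := Int.one_le_abs hN0
    simp only [eq_intCast, map_intCast, Complex.norm_intCast]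
    exact_mod_cast this
  have hle : ∀ σ : kummerField →ₐ[ℚ] ℂ, ‖σ α‖ ≤ H := by
    intro σ
    refine le_trans ?_ hH
    rw [hα, map_sum]
    refine (norm_sum_le _ _).trans (Finset.sum_le_sum fun i _ => ?_)
    simp only [map_mul, map_pow, map_intCast, norm_mul, norm_pow, norm_map_kummerTwo,
      norm_map_kummerThree, Complex.norm_intCast]
    gcongr
    exact norm_map_kummerPhi_le σ
  set σ₀ : kummerField →ₐ[ℚ] ℂ := (Complex.ofRealAm.restrictScalars ℚ).comp kummerField.val with hσ₀
  rw [← Finset.mul_prod_erase _ _ (Finset.mem_univ σ₀)] at hone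
  refine hone.trans (mul_le_mul ?_ ?_ (Finset.prod_nonneg fun _ _ => norm_nonneg _) (abs_nonneg _))
  · rw [show σ₀ α = ((α : ℝ) : ℂ) from rfl, Complex.norm_real, Real.norm_eq_abs]
  · calc _ ≤ ∏ _σ ∈ Finset.univ.erase σ₀, H :=
          Finset.prod_le_prod (fun _ _ => norm_nonneg _) fun σ _ => hle σ
      _ = H ^ (Finset.univ.erase σ₀).card := by rw [Finset.prod_const]
      _ ≤ H ^ 15 := by
        refine pow_le_pow_right₀ hH1 ?_
        rw [Finset.card_erase_of_mem (Finset.mem_univ _), Finset.card_univ]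
        have := card_kummerField_algHom_le
        omega

end

section

open Polynomial Real
open scoped goldenRatio

/-- `λ₁ log 2 + λ₂ log 3 + λ₃ log φ` -/
noncomputable def logForm (l : ℕ × ℕ × ℕ) : ℝ := l.1 * log 2 + l.2.1 * log 3 + l.2.2 * log φ

theorem logForm_nonneg (l : ℕ × ℕ × ℕ) : 0 ≤ logForm l := by
  have h1 : 0 ≤ log φ := log_nonneg one_lt_goldenRatio.le
  have h2 : 0 ≤ log 2 := log_nonneg (by norm_num)
  have h3 : 0 ≤ log 3 := log_nonneg (by norm_num)
  unfold logForm
  positivity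

/-- The value at `z` of the derivative of order `m` of the auxiliary function restricted to `C`. -/
noncomputable def auxSum (P : ℕ × ℕ × ℕ → ℚ[X]) (n x y : ℕ) (C : Finset (ℕ × ℕ × ℕ))
    (m : ℕ × ℕ × ℕ) (z : ℚ) : ℝ :=
  ∑ l ∈ C, (((hasseDeriv m.1 (P l)).eval z : ℚ) : ℝ) *
    (((n * l.1 + x * l.2.2) ^ m.2.1 * (n * l.2.1 + y * l.2.2) ^ m.2.2 : ℕ) : ℝ) *
    rexp (z * logForm l)

/-- The auxiliary function vanishes to order `T` at the points `u / 2 ^ J`, `u` odd,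
`u < 2 ^ J * S`. -/
def AuxVanishes (P : ℕ × ℕ × ℕ → ℚ[X]) (n x y : ℕ) (C : Finset (ℕ × ℕ × ℕ)) (T J S : ℕ) : Prop :=
  ∀ m : ℕ × ℕ × ℕ, m.1 + m.2.1 + m.2.2 < T → ∀ u : ℕ, Odd u → u < 2 ^ J * S →
    auxSum P n x y C m (u / 2 ^ J) = 0

theorem eval_map_ofReal_ratCast (P : ℚ[X]) (q : ℚ) :
    (P.map (algebraMap ℚ ℂ)).eval (q : ℂ) = ((P.eval q : ℚ) : ℂ) := by
  rw [show (q : ℂ) = algebraMap ℚ ℂ q from rfl, eval_map_algebraMap, aeval_algebraMap_apply]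
  simp

theorem hasseDeriv_map {R S : Type*} [Semiring R] [Semiring S] (f : R →+* S) (k : ℕ) (P : R[X]) :
    hasseDeriv k (P.map f) = (hasseDeriv k P).map f := by
  ext i
  simp [hasseDeriv_coeff]

theorem abs_auxSum_le {P : ℕ × ℕ × ℕ → ℚ[X]} {n x y : ℕ} {C : Finset (ℕ × ℕ × ℕ)} {T J S : ℕ}
    (hn : 0 < n) (hS : 0 < S) (h : AuxVanishes P n x y C T J (2 * S)) {m : ℕ × ℕ × ℕ} {μ : ℕ}
    (hμ : 0 < μ) (hm : m.1 + m.2.1 + m.2.2 + μ ≤ T) {ρ w B ε Vm : ℝ} (hρ : 1 < ρ) (hB : 0 ≤ B)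
    (hQ : ∀ l ∈ C, ∀ z : ℂ, ‖z‖ ≤ ρ * (2 * S : ℕ) →
      ‖((hasseDeriv m.1 (P l)).map (algebraMap ℚ ℂ)).eval z‖ *
        ((n * l.1 + x * l.2.2) ^ m.2.1 * (n * l.2.1 + y * l.2.2) ^ m.2.2 : ℕ) ≤ B)
    (hw : ∀ l ∈ C, logForm l ≤ w) (hw0 : 0 ≤ w)
    (hτ : ∀ l ∈ C, |l.2.2 * (n * log φ - x * log 2 - y * log 3) / n| ≤ ε)
    (hVm : (2 ^ J * S : ℕ) * (2 * S : ℕ) *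
      (1 + 2 * (2 * Real.exp 1 * (ρ + 1)) ^ (2 ^ J * S)) ^ (2 * μ) + ρ * (2 * S : ℕ) ≤ Vm)
    (hε : ε * Vm ≤ 1) {t : ℚ} (ht0 : 0 ≤ t) (ht : t ≤ (2 * S : ℕ)) :
    |auxSum P n x y C m t| ≤
      C.card * B * (Real.exp (w * (2 * S : ℕ) * (1 + ρ) / 2 + 1) *
        (1 / (2 * (ρ - 1))) ^ (2 ^ J * S * μ) + Real.exp (w * (2 * S : ℕ)) * (2 * (ε * Vm))) := by
  have hn' : (n : ℝ) ≠ 0 := by exact_mod_cast hn.ne'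
  have hS' : (S : ℝ) ≠ 0 := by exact_mod_cast hS.ne'
  set θ : ℕ × ℕ × ℕ → ℝ := fun l =>
    ((n * l.1 + x * l.2.2 : ℕ) * log 2 + (n * l.2.1 + y * l.2.2 : ℕ) * log 3) / n with hθ
  set τ : ℕ × ℕ × ℕ → ℝ := fun l => l.2.2 * (n * log φ - x * log 2 - y * log 3) / n with hτd
  have hΘ : ∀ l, θ l + τ l = logForm l := by
    intro l
    simp only [hθ, hτd, logForm]
    push_cast
    field_simp
    ring
  have hΘ0 : ∀ l, 0 ≤ logForm l := logForm_nonneg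
  set γ : ℕ × ℕ × ℕ → ℂ := fun l =>
    (((n * l.1 + x * l.2.2) ^ m.2.1 * (n * l.2.1 + y * l.2.2) ^ m.2.2 : ℕ) : ℂ) with hγ
  set Q : ℕ × ℕ × ℕ → ℂ[X] := fun l => γ l • (hasseDeriv m.1 (P l)).map (algebraMap ℚ ℂ) with hQd
  have key := norm_sum_mul_exp_le C Q θ τ (n := 2 ^ J * S) (μ := μ) (by positivity) hμ
    (S := (2 * S : ℕ)) (ρ := ρ) (w := w) (B := B) (ε := ε) (Vm := Vm) (by positivity) hρ hB
    ?_ ?_ (fun l _ => by rw [hΘ]; exact hΘ0 l) (fun l hl => by rw [hΘ]; exact hw l hl) hw0 hτ hVm hε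
    (t := t) (by exact_mod_cast ht0) (by exact_mod_cast ht)
  · refine le_trans (le_of_eq ?_) key
    rw [← Real.norm_eq_abs, ← Complex.norm_real, auxSum]
    push_cast
    congr 1
    refine Finset.sum_congr rfl fun l _ => ?_
    simp only [hQd, hγ, eval_smul, smul_eq_mul]
    rw [eval_map_ofReal_ratCast, ← Complex.ofReal_add, hΘ]
    push_cast
    ring
  · intro k hk i j hij
    set u : ℚ := ((2 * k + 1 : ℕ) : ℚ) / 2 ^ J with hu
    have hnode : node ((2 * S : ℕ) : ℝ) (2 ^ J * S) k = (u : ℂ) := by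
      rw [node, hu, ← Complex.ofReal_ratCast]
      congr 1
      push_cast
      field_simp
    have hz : ∀ b ≤ j, auxSum P n x y C (m.1 + i, m.2.1 + b, m.2.2 + (j - b)) u = 0 := by
      intro b hb
      refine h _ (by simp only; omega) (2 * k + 1) ⟨k, rfl⟩ ?_
      have : 2 ^ J * (2 * S) = 2 * (2 ^ J * S) := by ring
      omega
    have hcomb : ∑ b ∈ Finset.range (j + 1), (((j.choose b : ℝ) * log 2 ^ b * log 3 ^ (j - b) *
        ((m.1 + i).choose i : ℝ) / n ^ j : ℝ) : ℂ) *
        (auxSum P n x y C (m.1 + i, m.2.1 + b, m.2.2 + (j - b)) u : ℂ) = 0 := by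
      refine Finset.sum_eq_zero fun b hb => ?_
      rw [hz b (by have := Finset.mem_range.1 hb; omega)]; simp
    rw [← hcomb]
    simp only [auxSum]
    push_cast
    simp only [Finset.mul_sum]
    rw [Finset.sum_comm]
    refine Finset.sum_congr rfl fun l _ => ?_
    have e1 : (hasseDeriv i (Q l)).eval (node ((2 * S : ℕ) : ℝ) (2 ^ J * S) k) =
        γ l * ((m.1 + i).choose i : ℂ) * ((hasseDeriv (m.1 + i) (P l)).eval u : ℚ) := by
      have hc : hasseDeriv i (hasseDeriv m.1 (P l)) =
          ((m.1 + i).choose i) • hasseDeriv (m.1 + i) (P l) := by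
        have := LinearMap.congr_fun (hasseDeriv_comp (R := ℚ) i m.1) (P l)
        simpa [add_comm i m.1] using this
      rw [hnode, hQd]
      simp only [map_smul, hasseDeriv_map, hc, eval_smul, smul_eq_mul,
        nsmul_eq_mul, Polynomial.map_mul, Polynomial.map_natCast, eval_mul, eval_natCast,
        eval_map_ofReal_ratCast]
      ring
    push_cast at e1 hnode
    rw [e1, hnode, ← Complex.ofReal_add, hΘ]
    simp only [hθ, hγ]
    push_cast
    generalize (n * l.1 + x * l.2.2 : ℂ) = g₁
    generalize (n * l.2.1 + y * l.2.2 : ℂ) = g₂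
    rw [div_pow, add_pow, Finset.sum_div, Finset.mul_sum, Finset.sum_mul]
    refine Finset.sum_congr rfl fun b _ => ?_
    rw [pow_add, pow_add, mul_pow, mul_pow]
    ring
  · intro l hl z hz
    refine le_trans (le_of_eq ?_) (hQ l hl z hz)
    simp only [hQd, hγ, eval_smul, smul_eq_mul, norm_mul, Complex.norm_natCast]
    ring

end

section

open Polynomial Real
open scoped goldenRatio

/-- The elements of `I` congruent to `l₀` modulo `2 ^ J`. -/
def residueClass (I : Finset (ℕ × ℕ × ℕ)) (l₀ : ℕ × ℕ × ℕ) (J : ℕ) : Finset (ℕ × ℕ × ℕ) :=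
  {l ∈ I | l.1 % 2 ^ J = l₀.1 % 2 ^ J ∧ l.2.1 % 2 ^ J = l₀.2.1 % 2 ^ J ∧
    l.2.2 % 2 ^ J = l₀.2.2 % 2 ^ J}

theorem mod_two_pow_succ_eq_iff (a b J : ℕ) : a % 2 ^ (J + 1) = b % 2 ^ (J + 1) ↔
    a % 2 ^ J = b % 2 ^ J ∧ (a / 2 ^ J) % 2 = (b / 2 ^ J) % 2 := by
  rw [Nat.mod_pow_succ, Nat.mod_pow_succ]
  have ha := Nat.mod_lt a (Nat.two_pow_pos J)
  have hb := Nat.mod_lt b (Nat.two_pow_pos J)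
  constructor
  · intro h
    rcases Nat.mod_two_eq_zero_or_one (a / 2 ^ J) with h1 | h1 <;>
    rcases Nat.mod_two_eq_zero_or_one (b / 2 ^ J) with h2 | h2 <;>
    rw [h1, h2] at h ⊢ <;> omega
  · rintro ⟨h1, h2⟩
    rw [h1, h2]

theorem odd_mul_mod_two {u : ℕ} (hu : Odd u) (a : ℕ) : (u * a) % 2 = a % 2 := by
  rw [Nat.mul_mod, Nat.odd_iff.1 hu]; simp

theorem residueClass_succ (I : Finset (ℕ × ℕ × ℕ)) (l₀ : ℕ × ℕ × ℕ) (J : ℕ) {u : ℕ} (hu : Odd u) :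
    residueClass I l₀ (J + 1) = {l ∈ residueClass I l₀ J |
      (u * (l.1 / 2 ^ J)) % 2 = (u * (l₀.1 / 2 ^ J)) % 2 ∧
      (u * (l.2.1 / 2 ^ J)) % 2 = (u * (l₀.2.1 / 2 ^ J)) % 2 ∧
      (u * (l.2.2 / 2 ^ J)) % 2 = (u * (l₀.2.2 / 2 ^ J)) % 2} := by
  ext l
  simp only [residueClass, Finset.mem_filter, mod_two_pow_succ_eq_iff, odd_mul_mod_two hu]
  tauto

theorem exp_half_mul_log {r : ℝ} (hr : 0 < r) (a : ℕ) : rexp (a / 2 * log r) = √r ^ a := by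
  rw [show (a : ℝ) / 2 * log r = a * (log r / 2) by ring, exp_nat_mul, exp_half, exp_log hr]

theorem exp_mul_logForm {I : Finset (ℕ × ℕ × ℕ)} {l l₀ : ℕ × ℕ × ℕ} {J : ℕ}
    (hl : l ∈ residueClass I l₀ J) (u : ℕ) :
    rexp (((u / 2 ^ (J + 1) : ℚ) : ℝ) * logForm l) = rexp (((u / 2 ^ (J + 1) : ℚ) : ℝ) *
      logForm (l₀.1 % 2 ^ J, l₀.2.1 % 2 ^ J, l₀.2.2 % 2 ^ J)) *
      (√2 ^ (u * (l.1 / 2 ^ J)) * √3 ^ (u * (l.2.1 / 2 ^ J)) * √φ ^ (u * (l.2.2 / 2 ^ J))) := by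
  obtain ⟨-, h1, h2, h3⟩ := Finset.mem_filter.1 hl
  have e : ∀ a b : ℕ, a % 2 ^ J = b → (a : ℝ) = b + 2 ^ J * (a / 2 ^ J : ℕ) := by
    rintro a b rfl
    exact_mod_cast (Nat.mod_add_div a (2 ^ J)).symm
  rw [← exp_half_mul_log two_pos, ← exp_half_mul_log three_pos, ← exp_half_mul_log goldenRatio_pos,
    ← exp_add, ← exp_add, ← exp_add, logForm, logForm, e _ _ h1, e _ _ h2, e _ _ h3]
  congr 1
  push_cast
  field_simp
  ring

theorem AuxVanishes.succ {P : ℕ × ℕ × ℕ → ℚ[X]} {n x y : ℕ} {I : Finset (ℕ × ℕ × ℕ)}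
    {l₀ : ℕ × ℕ × ℕ} {T T' J S : ℕ} (hn : 0 < n) (hS : 0 < S)
    (h : AuxVanishes P n x y (residueClass I l₀ J) T J (2 * S)) {μ : ℕ} (hμ : 0 < μ)
    (hT : T' + μ ≤ T + 1) {ρ w B ε Vm : ℝ} (hρ : 1 < ρ)
    (hQ : ∀ m : ℕ × ℕ × ℕ, m.1 + m.2.1 + m.2.2 < T' → ∀ l ∈ I, ∀ z : ℂ, ‖z‖ ≤ ρ * (2 * S : ℕ) →
      ‖((hasseDeriv m.1 (P l)).map (algebraMap ℚ ℂ)).eval z‖ *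
        ((n * l.1 + x * l.2.2) ^ m.2.1 * (n * l.2.1 + y * l.2.2) ^ m.2.2 : ℕ) ≤ B)
    (hw : ∀ l ∈ I, logForm l ≤ w) (hw0 : 0 ≤ w)
    (hτ : ∀ l ∈ I, |l.2.2 * (n * log φ - x * log 2 - y * log 3) / n| ≤ ε) (hε0 : 0 ≤ ε)
    (hVm : (2 ^ J * S : ℕ) * (2 * S : ℕ) *
      (1 + 2 * (2 * Real.exp 1 * (ρ + 1)) ^ (2 ^ J * S)) ^ (2 * μ) + ρ * (2 * S : ℕ) ≤ Vm)
    (hε : ε * Vm ≤ 1) {D : ℕ}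
    (hint : ∀ m₀ < T', ∀ l ∈ I, ∀ u : ℤ, ∃ c : ℤ,
      (D : ℚ) * (hasseDeriv m₀ (P l)).eval ((u : ℚ) / 2 ^ (J + 1)) = c)
    (hH : 1 ≤ I.card * (D * B * Real.exp (w * (2 * S : ℕ))))
    (hnum : D * (I.card * B * (Real.exp (w * (2 * S : ℕ) * (1 + ρ) / 2 + 1) *
        (1 / (2 * (ρ - 1))) ^ (2 ^ J * S * μ) + Real.exp (w * (2 * S : ℕ)) * (2 * (ε * Vm)))) *
      (I.card * (D * B * Real.exp (w * (2 * S : ℕ)))) ^ 15 < 1) :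
    AuxVanishes P n x y (residueClass I l₀ (J + 1)) T' (J + 1) (2 * S) := by
  intro m hm u hu hlt
  set C := residueClass I l₀ J with hC
  have hCI : C ⊆ I := Finset.filter_subset _ _
  set z : ℚ := u / 2 ^ (J + 1) with hz
  have hz0 : 0 ≤ z := by positivity
  have hzS : z ≤ (2 * S : ℕ) := by
    rw [hz, div_le_iff₀ (by positivity)]
    have := hlt.le
    rw [mul_comm] at this
    exact_mod_cast this
  have hzR0 : (0 : ℝ) ≤ z := by exact_mod_cast hz0
  have hzRS : (z : ℝ) ≤ (2 * S : ℕ) := by exact_mod_cast hzS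
  have hnormz : ‖(z : ℂ)‖ ≤ ρ * (2 * S : ℕ) := by
    rw [← Complex.ofReal_ratCast, Complex.norm_real, Real.norm_of_nonneg hzR0]
    refine hzRS.trans (le_mul_of_one_le_left (Nat.cast_nonneg _) hρ.le)
  by_cases hI : I = ∅
  · have : residueClass I l₀ (J + 1) = ∅ := by rw [hI]; rfl
    simp [auxSum, this]
  obtain ⟨i₁, hi₁⟩ := Finset.nonempty_iff_ne_empty.2 hI
  have hB : 0 ≤ B := (by positivity : (0 : ℝ) ≤ _).trans (hQ m hm i₁ hi₁ z hnormz)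
  have hD : 0 < D := by
    rcases Nat.eq_zero_or_pos D with rfl | hD
    · norm_num at hH
    · exact hD
  have hbound := abs_auxSum_le hn hS h hμ (m := m) (by omega) hρ hB
    (fun l hl => hQ m hm l (hCI hl)) (fun l hl => hw l (hCI hl)) hw0 (fun l hl => hτ l (hCI hl))
    hVm hε hz0 hzS
  choose! c₀ hc₀ using fun l (hl : l ∈ I) => hint m.1 (by omega) l hl u
  set c : ℕ × ℕ × ℕ → ℤ := fun l =>
    c₀ l * ((n * l.1 + x * l.2.2) ^ m.2.1 * (n * l.2.1 + y * l.2.2) ^ m.2.2 : ℕ) with hc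
  set E : ℝ := rexp ((z : ℝ) * logForm (l₀.1 % 2 ^ J, l₀.2.1 % 2 ^ J, l₀.2.2 % 2 ^ J)) with hE
  have hE1 : 1 ≤ E := one_le_exp (mul_nonneg hzR0 (logForm_nonneg _))
  have hEabs : |E| = E := abs_of_pos (exp_pos _)
  set R : ℕ × ℕ × ℕ → ℝ := fun l => √2 ^ (u * (l.1 / 2 ^ J)) * √3 ^ (u * (l.2.1 / 2 ^ J)) *
    √φ ^ (u * (l.2.2 / 2 ^ J)) with hR
  have hexp : ∀ l ∈ C, rexp ((z : ℝ) * logForm l) = E * R l := fun l hl => exp_mul_logForm hl u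
  have hterm : ∀ l ∈ C, (D : ℝ) * ((((hasseDeriv m.1 (P l)).eval z : ℚ) : ℝ) *
      (((n * l.1 + x * l.2.2) ^ m.2.1 * (n * l.2.1 + y * l.2.2) ^ m.2.2 : ℕ) : ℝ) *
      rexp (z * logForm l)) = E * (c l * R l) := by
    intro l hl
    have := hc₀ l (hCI hl)
    rw [Int.cast_natCast, ← hz] at this
    have h2 : (D : ℝ) * ((hasseDeriv m.1 (P l)).eval z : ℚ) = c₀ l := by exact_mod_cast this
    rw [hexp l hl, hc, Int.cast_mul, ← h2, Int.cast_natCast]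
    ring
  have hsum : ∀ C' ⊆ C, (D : ℝ) * auxSum P n x y C' m z = E * ∑ l ∈ C', c l * R l := by
    intro C' hC'
    rw [auxSum, Finset.mul_sum, Finset.mul_sum]
    exact Finset.sum_congr rfl fun l hl => hterm l (hC' hl)
  have hX : ∑ l ∈ C, (c l : ℝ) * R l = 0 := by
    by_contra hX
    have hcR : ∀ l ∈ C, |(c l : ℝ)| * R l ≤ D * B * rexp (w * (2 * S : ℕ)) := by
      intro l hl
      have hR0 : 0 ≤ R l := by simp only [hR]; positivity
      have h1 := hQ m hm l (hCI hl) z hnormz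
      rw [eval_map_ofReal_ratCast, ← Complex.ofReal_ratCast, Complex.norm_real,
        Real.norm_eq_abs] at h1
      calc |(c l : ℝ)| * R l = |(c l : ℝ) * R l| := by rw [abs_mul, abs_of_nonneg hR0]
        _ ≤ E * |(c l : ℝ) * R l| := le_mul_of_one_le_left (abs_nonneg _) hE1
        _ = |E * (c l * R l)| := by rw [abs_mul E, hEabs]
        _ ≤ D * (B * rexp (w * (2 * S : ℕ))) := by
          rw [← hterm l hl, abs_mul, abs_mul, abs_mul, Nat.abs_cast, Nat.abs_cast, abs_exp]
          rw [mul_comm w]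
          gcongr
          · exact logForm_nonneg l
          · exact hw l (hCI hl)
        _ = _ := by ring
    have hliou := liouville_kummerField C c (fun l => u * (l.1 / 2 ^ J))
      (fun l => u * (l.2.1 / 2 ^ J)) (fun l => u * (l.2.2 / 2 ^ J)) hH
      (by
        refine (Finset.sum_le_card_nsmul _ _ _ hcR).trans ?_
        rw [nsmul_eq_mul]
        have : (C.card : ℝ) ≤ I.card := by exact_mod_cast Finset.card_le_card hCI
        gcongr) hX
    refine absurd hnum (not_lt.2 (hliou.trans ?_))
    gcongr
    calc |∑ l ∈ C, (c l : ℝ) * R l| ≤ E * |∑ l ∈ C, (c l : ℝ) * R l| :=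
          le_mul_of_one_le_left (abs_nonneg _) hE1
      _ = D * |auxSum P n x y C m z| := by
          rw [← hEabs, ← abs_mul, ← hsum C subset_rfl, abs_mul, Nat.abs_cast]
      _ ≤ _ := by
          gcongr
          refine hbound.trans ?_
          have : (C.card : ℝ) ≤ I.card := by exact_mod_cast Finset.card_le_card hCI
          have hVm0 : 0 ≤ Vm := le_trans (by positivity) hVm
          have : 0 ≤ 1 / (2 * (ρ - 1)) := by have : 0 < ρ - 1 := by linarith
                                             positivity
          gcongr
  have hpar := sum_parity_class_eq_zero C c (fun l => u * (l.1 / 2 ^ J))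
      (fun l => u * (l.2.1 / 2 ^ J)) (fun l => u * (l.2.2 / 2 ^ J)) hX l₀
  rw [← residueClass_succ I l₀ J hu] at hpar
  have hsub : residueClass I l₀ (J + 1) ⊆ C := by
    rw [residueClass_succ I l₀ J hu]; exact Finset.filter_subset _ _
  have := hsum _ hsub
  rw [hpar, mul_zero] at this
  exact (mul_eq_zero.1 this).resolve_left (by positivity)

end

section

open Polynomial Real Matrix
open scoped goldenRatio

/-- Siegel's lemma with a fixed bound for the exponent. -/
theorem exists_small_solution {α β : Type*} [Fintype α] [Fintype β] (A : Matrix α β ℤ) {a : ℝ}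
    (ha : 1 ≤ a) (hA : ∀ i j, |(A i j : ℝ)| ≤ a) (hα : 0 < Fintype.card α)
    (hcard : 6 * Fintype.card α ≤ Fintype.card β) :
    ∃ t : β → ℤ, t ≠ 0 ∧ A *ᵥ t = 0 ∧
      ∀ j, |(t j : ℝ)| ≤ (Fintype.card β * a) ^ (1 / 5 : ℝ) := by
  letI : SeminormedAddCommGroup (Matrix α β ℤ) := Matrix.seminormedAddCommGroup
  obtain ⟨t, ht, hAt, hb⟩ := Int.Matrix.exists_ne_zero_int_vec_norm_le A (by omega) hα
  refine ⟨t, ht, hAt, fun j => ?_⟩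
  have hα' : (0 : ℝ) < Fintype.card α := by exact_mod_cast hα
  have hcard' : 6 * (Fintype.card α : ℝ) ≤ Fintype.card β := by exact_mod_cast hcard
  have hβ1 : (1 : ℝ) ≤ Fintype.card β := by
    have : 1 ≤ Fintype.card β := by omega
    exact_mod_cast this
  have hnA : max 1 ‖A‖ ≤ a := max_le ha ((Matrix.norm_le_iff (by linarith)).2 fun i j => by
    rw [Int.norm_eq_abs]; exact hA i j)
  calc |(t j : ℝ)| = ‖t j‖ := (Int.norm_eq_abs _).symm
    _ ≤ ‖t‖ := norm_le_pi_norm t j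
    _ ≤ _ := hb
    _ ≤ (Fintype.card β * a) ^ ((Fintype.card α : ℝ) / (Fintype.card β - Fintype.card α)) := by
      have : 0 ≤ (Fintype.card α : ℝ) / (Fintype.card β - Fintype.card α) :=
        div_nonneg hα'.le (by linarith)
      gcongr
    _ ≤ _ := by
      refine rpow_le_rpow_of_exponent_le (one_le_mul_of_one_le_of_one_le hβ1 ha) ?_
      rw [div_le_div_iff₀ (by linarith) (by norm_num)]
      linarith

theorem two_mul_sum_range_sub (t : ℕ) : 2 * ∑ b ∈ Finset.range t, (t - b) = t * (t + 1) := by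
  induction t with
  | zero => simp
  | succ t ih =>
    rw [Finset.sum_range_succ']
    simp only [Nat.add_sub_add_right, Nat.sub_zero, mul_add, ih]
    ring

theorem six_mul_sum_range_sum_range_sub (t : ℕ) :
    6 * ∑ a ∈ Finset.range t, ∑ b ∈ Finset.range (t - a), (t - a - b) =
      t * (t + 1) * (t + 2) := by
  induction t with
  | zero => simp
  | succ t ih =>
    rw [Finset.sum_range_succ']
    simp only [Nat.add_sub_add_right, Nat.sub_zero, mul_add, ih]
    have := two_mul_sum_range_sub (t + 1)
    linarith

/-- The triples of natural numbers with sum less than `T`. -/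
abbrev SumLT (T : ℕ) : Type := Σ a : Fin T, Σ b : Fin (T - a), Fin (T - a - b)

theorem six_mul_card_sumLT (T : ℕ) : 6 * Fintype.card (SumLT T) = T * (T + 1) * (T + 2) := by
  rw [← six_mul_sum_range_sum_range_sub]
  simp only [Fintype.card_sigma, Fintype.card_fin]
  rw [← Fin.sum_univ_eq_sum_range (fun a => ∑ b ∈ Finset.range (T - a), (T - a - b)) T]
  congr 1
  refine Finset.sum_congr rfl fun a _ => ?_
  exact Fin.sum_univ_eq_sum_range (fun b => T - a - b) (T - a)

/-- The coordinates of `φ ^ e` in the basis `φ, 1`. -/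
def phiCoord (e : ℕ) (b : Fin 2) : ℤ := if b = 0 then Nat.fib e else Nat.fib (e + 1) - Nat.fib e

theorem phiCoord_add (e : ℕ) : (phiCoord e 0 : ℝ) * φ + phiCoord e 1 = φ ^ e := by
  cases e with
  | zero => simp [phiCoord]
  | succ e =>
    have := goldenRatio_mul_fib_succ_add_fib e
    simp only [phiCoord, if_true, one_ne_zero, if_false, Nat.fib_add_two (n := e)]
    push_cast
    linarith

theorem phiCoord_nonneg (e : ℕ) (b : Fin 2) : 0 ≤ phiCoord e b := by
  unfold phiCoord
  split_ifs
  · positivity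
  · have := Nat.fib_le_fib_succ (n := e)
    omega

theorem phiCoord_le (e : ℕ) (b : Fin 2) : (phiCoord e b : ℝ) ≤ φ ^ e := by
  have h := phiCoord_add e
  have h0 : (0 : ℝ) ≤ phiCoord e 0 := by exact_mod_cast phiCoord_nonneg e 0
  have h1 : (0 : ℝ) ≤ phiCoord e 1 := by exact_mod_cast phiCoord_nonneg e 1
  have := one_lt_goldenRatio
  fin_cases b
  · simp only [Fin.zero_eta]; nlinarith
  · simp only [Fin.mk_one]; nlinarith

theorem exp_natCast_mul_logForm (u : ℕ) (l : ℕ × ℕ × ℕ) :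
    rexp (u * logForm l) = 2 ^ (u * l.1) * 3 ^ (u * l.2.1) * φ ^ (u * l.2.2) := by
  have e : ∀ {r : ℝ} (_ : 0 < r) (a : ℕ), r ^ a = rexp (a * log r) := fun hr a => by
    rw [exp_nat_mul, exp_log hr]
  rw [e two_pos, e three_pos, e goldenRatio_pos, ← exp_add, ← exp_add, logForm]
  congr 1
  push_cast
  ring

theorem exists_auxVanishes {h N n x y T S D : ℕ} {I : Finset (ℕ × ℕ × ℕ)} (hT : 0 < T) (hS : 0 < S)
    {A : ℝ} (hA1 : 1 ≤ A)
    (hint : ∀ m₀ < T, ∀ i < N, ∀ u : ℤ, ∃ c : ℤ,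
      (D : ℚ) * (hasseDeriv m₀ (feldPoly h i)).eval (u : ℚ) = c)
    (hA : ∀ m : ℕ × ℕ × ℕ, m.1 + m.2.1 + m.2.2 < T → ∀ l ∈ I, ∀ i < N, ∀ u < 2 * S,
      D * |(((hasseDeriv m.1 (feldPoly h i)).eval (u : ℚ) : ℚ) : ℝ)| *
        ((n * l.1 + x * l.2.2) ^ m.2.1 * (n * l.2.1 + y * l.2.2) ^ m.2.2 : ℕ) *
        rexp (u * logForm l) ≤ A)
    (hD : 0 < D) (hcard : 2 * S * (T * (T + 1) * (T + 2)) ≤ I.card * N) :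
    ∃ p : ℕ × ℕ × ℕ → ℕ → ℤ, (∃ l ∈ I, ∃ i < N, p l i ≠ 0) ∧
      (∀ l i, |(p l i : ℝ)| ≤ (I.card * N * A) ^ (1 / 5 : ℝ)) ∧
      AuxVanishes (fun l => auxPoly h N (p l)) n x y I T 0 (2 * S) := by
  classical
  choose! c hc using hint
  set g : ℕ × ℕ × ℕ → ℕ × ℕ × ℕ → ℕ := fun m l =>
    (n * l.1 + x * l.2.2) ^ m.2.1 * (n * l.2.1 + y * l.2.2) ^ m.2.2 with hg
  set M : Matrix (SumLT T × Fin S × Fin 2) (I × Fin N) ℤ := Matrix.of fun r q =>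
    c r.1.1 q.2 (2 * r.2.1 + 1 : ℕ) * g (r.1.1, r.1.2.1, r.1.2.2) q.1 *
      (2 ^ ((2 * r.2.1 + 1) * q.1.1.1) * 3 ^ ((2 * r.2.1 + 1) * q.1.1.2.1) *
        phiCoord ((2 * r.2.1 + 1) * q.1.1.2.2) r.2.2) with hM
  have hMA : ∀ i j, |(M i j : ℝ)| ≤ A := by
    rintro ⟨⟨m₁, m₂, m₃⟩, v, b⟩ ⟨l, i⟩
    have hm1 := m₁.2
    have hm2 := m₂.2
    have hm3 := m₃.2
    have h1 := hc m₁ m₁.2 i i.2 (2 * v + 1 : ℕ)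
    rw [Int.cast_natCast] at h1
    have h2 : (D : ℝ) * |(((hasseDeriv m₁ (feldPoly h i)).eval ((2 * v + 1 : ℕ) : ℚ) : ℚ) : ℝ)| =
        |(c m₁ i (2 * v + 1 : ℕ) : ℝ)| := by
      rw [← Rat.cast_intCast, ← h1, Rat.cast_mul, abs_mul]
      simp
    refine le_trans ?_ (hA (m₁, m₂, m₃) (by simp only; omega) l l.2 i i.2 (2 * v + 1)
      (by have := v.2; omega))
    rw [h2, exp_natCast_mul_logForm]
    simp only [hM, Matrix.of_apply]
    have h3 := phiCoord_le ((2 * (v : ℕ) + 1) * l.1.2.2) b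
    have h4 := phiCoord_nonneg ((2 * (v : ℕ) + 1) * l.1.2.2) b
    generalize 2 * (v : ℕ) + 1 = W at h3 h4 ⊢
    rw [Int.cast_mul, Int.cast_mul, abs_mul, abs_mul, Int.cast_natCast, Nat.abs_cast,
      abs_of_nonneg (Int.cast_nonneg (mul_nonneg (by positivity) h4))]
    refine mul_le_mul_of_nonneg_left ?_ (mul_nonneg (abs_nonneg _) (Nat.cast_nonneg _))
    push_cast
    exact mul_le_mul_of_nonneg_left h3 (by positivity)
  have hM0 : 0 < Fintype.card (SumLT T × Fin S × Fin 2) := by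
    have : 0 < Fintype.card (SumLT T) := by
      have h1 := six_mul_card_sumLT T
      have : 0 < T * (T + 1) * (T + 2) := by positivity
      omega
    simp only [Fintype.card_prod, Fintype.card_fin]
    positivity
  have hM6 : 6 * Fintype.card (SumLT T × Fin S × Fin 2) ≤ Fintype.card (I × Fin N) := by
    simp only [Fintype.card_prod, Fintype.card_fin, Fintype.card_coe]
    calc 6 * (Fintype.card (SumLT T) * (S * 2)) = 2 * S * (6 * Fintype.card (SumLT T)) := by ring
      _ ≤ _ := by rw [six_mul_card_sumLT]; exact hcard
  obtain ⟨t, ht0, hMt, ht⟩ := exists_small_solution M hA1 hMA hM0 hM6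
  set p : ℕ × ℕ × ℕ → ℕ → ℤ := fun l i =>
    if hli : l ∈ I ∧ i < N then t (⟨l, hli.1⟩, ⟨i, hli.2⟩) else 0 with hp
  have hpt : ∀ (l : I) (i : Fin N), p l i = t (l, i) := fun l i => by
    simp [hp, l.2, i.2]
  refine ⟨p, ?_, ?_, ?_⟩
  · obtain ⟨⟨l, i⟩, hli⟩ := Function.ne_iff.1 ht0
    exact ⟨l, l.2, i, i.2, by rw [hpt]; exact hli⟩
  · intro l i
    have hcardeq : (Fintype.card (I × Fin N) : ℝ) = I.card * N := by simp
    rw [hcardeq] at ht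
    by_cases hli : l ∈ I ∧ i < N
    · simp only [hp, dif_pos hli]
      exact ht _
    · simp only [hp, dif_neg hli]
      rw [Int.cast_zero, abs_zero]
      positivity
  · intro m hm u hu hlt
    obtain ⟨v, rfl⟩ := hu
    rw [pow_zero, one_mul] at hlt
    have hrow : ∀ b : Fin 2, ∑ q : I × Fin N, M (⟨⟨m.1, by omega⟩, ⟨m.2.1, by simp only; omega⟩,
        ⟨m.2.2, by simp only; omega⟩⟩, ⟨v, by omega⟩, b) q * t q = 0 := fun b => congrFun hMt _
    have hcomb : ∀ b : Fin 2, ∑ l ∈ I, ∑ i ∈ Finset.range N,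
        (c m.1 i (2 * v + 1 : ℕ) * g m l * (2 ^ ((2 * v + 1) * l.1) * 3 ^ ((2 * v + 1) * l.2.1) *
          phiCoord ((2 * v + 1) * l.2.2) b) * p l i : ℤ) = 0 := by
      intro b
      rw [← hrow b, Fintype.sum_prod_type, ← Finset.sum_coe_sort]
      refine Finset.sum_congr rfl fun l _ => ?_
      rw [← Fin.sum_univ_eq_sum_range (fun i => c m.1 i (2 * v + 1 : ℕ) * g m l *
        (2 ^ ((2 * v + 1) * l.1.1) * 3 ^ ((2 * v + 1) * l.1.2.1) *
          phiCoord ((2 * v + 1) * l.1.2.2) b) * p l i) N]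
      refine Finset.sum_congr rfl fun i _ => ?_
      rw [hpt]
      rfl
    have hz : (((2 * v + 1 : ℕ) / 2 ^ 0 : ℚ)) = ((2 * v + 1 : ℕ) : ℚ) := by simp
    rw [hz]
    generalize 2 * v + 1 = W at hcomb ⊢
    have hc0 := congrArg (Int.cast : ℤ → ℝ) (hcomb 0)
    have hc1 := congrArg (Int.cast : ℤ → ℝ) (hcomb 1)
    have key : (D : ℝ) * auxSum (fun l => auxPoly h N (p l)) n x y I m (W : ℚ) = 0 := by
      rw [← mul_zero φ, ← Int.cast_zero, ← hc0, ← add_zero (φ * _), ← Int.cast_zero, ← hc1]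
      push_cast
      rw [auxSum, Finset.mul_sum, Finset.mul_sum, ← Finset.sum_add_distrib]
      refine Finset.sum_congr rfl fun l _ => ?_
      rw [Rat.cast_natCast, exp_natCast_mul_logForm, ← phiCoord_add, auxPoly, map_sum,
        eval_finsetSum, Rat.cast_sum, Finset.mul_sum, ← Finset.sum_add_distrib, Finset.sum_mul,
        Finset.sum_mul, Finset.mul_sum]
      refine Finset.sum_congr rfl fun i hi => ?_
      have h1 := hc m.1 (by omega) i (Finset.mem_range.1 hi) W
      rw [Int.cast_natCast] at h1
      have h2 : (D : ℝ) * (((hasseDeriv m.1 (feldPoly h i)).eval (W : ℚ) : ℚ) : ℝ) =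
          c m.1 i W := by
        rw [← Rat.cast_intCast, ← h1]
        push_cast
        ring
      rw [← h2, map_smul, eval_smul, smul_eq_mul]
      simp only [hg]
      push_cast
      ring
    exact (mul_eq_zero.1 key).resolve_left (by positivity)

end

section

open Polynomial Real
open scoped goldenRatio

theorem le_exp_of_pow_le {a : ℝ} {p q : ℕ} (hq : q ≠ 0) (h : a ^ q ≤ 2.718281828 ^ p) :
    a ≤ rexp (p / q) := by
  refine le_of_pow_le_pow_left₀ hq (exp_pos _).le (h.trans ?_)
  rw [← exp_nat_mul, mul_div_cancel₀ _ (by exact_mod_cast hq), ← exp_one_pow]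
  exact pow_le_pow_left₀ (by norm_num) (by linarith [exp_one_gt_d9]) p

theorem log_goldenRatio_lt : log φ < 0.48125 := by
  rw [log_lt_iff_lt_exp goldenRatio_pos]
  have h5 : √5 < 2.23606798 := by
    rw [sqrt_lt' (by norm_num)]; norm_num
  have h := le_exp_of_pow_le (a := 1.618034) (p := 77) (q := 160) (by norm_num) (by norm_num)
  norm_num at h
  norm_num [goldenRatio]
  linarith

/-- The set of exponents `(λ₁, λ₂, λ₃)` occurring in the auxiliary function. -/
def exponentBox : Finset (ℕ × ℕ × ℕ) :=
  Finset.range (2 ^ 25) ×ˢ (Finset.range 23500000 ×ˢ Finset.range (2 ^ 25))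

theorem mem_exponentBox (l : ℕ × ℕ × ℕ) :
    l ∈ exponentBox ↔ l.1 < 2 ^ 25 ∧ l.2.1 < 23500000 ∧ l.2.2 < 2 ^ 25 := by
  simp only [exponentBox, Finset.mem_product, Finset.mem_range]

theorem card_exponentBox : exponentBox.card = 2 ^ 25 * (23500000 * 2 ^ 25) := by
  simp only [exponentBox, Finset.card_product, Finset.card_range]

theorem two_pow_le_exp (m : ℕ) : (2 : ℝ) ^ m ≤ rexp (0.6932 * m) := by
  rw [mul_comm, exp_nat_mul]
  refine pow_le_pow_left₀ (by norm_num) ?_ m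
  rw [← log_le_iff_le_exp (by norm_num)]
  linarith [log_two_lt_d9]

attribute [irreducible] exponentBox

theorem card_exponentBox_le : (exponentBox.card : ℝ) ≤ rexp 55 := by
  rw [card_exponentBox]
  refine le_trans ?_ ((two_pow_le_exp 75).trans (exp_le_exp.2 (by norm_num)))
  norm_num

theorem residueClass_zero (I : Finset (ℕ × ℕ × ℕ)) (l₀ : ℕ × ℕ × ℕ) : residueClass I l₀ 0 = I := by
  simp [residueClass, Nat.mod_one]

theorem residueClass_exponentBox {l₀ : ℕ × ℕ × ℕ} (h : l₀ ∈ exponentBox) :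
    residueClass exponentBox l₀ 25 = {l₀} := by
  ext l
  simp only [residueClass, Finset.mem_filter, Finset.mem_singleton]
  rw [mem_exponentBox] at h
  constructor
  · rintro ⟨hl, h1, h2, h3⟩
    rw [mem_exponentBox] at hl
    rw [Nat.mod_eq_of_lt (by omega), Nat.mod_eq_of_lt (by omega)] at h1 h2 h3
    exact Prod.ext h1 (Prod.ext h2 h3)
  · rintro rfl
    exact ⟨(mem_exponentBox _).2 h, rfl, rfl, rfl⟩

theorem logForm_le {l : ℕ × ℕ × ℕ} (h : l ∈ exponentBox) : logForm l ≤ 65300000 := by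
  have h0 := (mem_exponentBox _).1 h
  obtain ⟨h1, h2, h3⟩ := h0
  have h1' : (l.1 : ℝ) ≤ 2 ^ 25 := by exact_mod_cast h1.le
  have h2' : (l.2.1 : ℝ) ≤ 23500000 := by exact_mod_cast h2.le
  have h3' : (l.2.2 : ℝ) ≤ 2 ^ 25 := by exact_mod_cast h3.le
  have e1 : (l.1 : ℝ) * log 2 ≤ 2 ^ 25 * 0.69315 :=
    mul_le_mul h1' (by linarith [log_two_lt_d9]) (log_nonneg (by norm_num)) (by norm_num)
  have e2 : (l.2.1 : ℝ) * log 3 ≤ 23500000 * 1.09862 :=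
    mul_le_mul h2' (by linarith [log_three_lt_d9]) (log_nonneg (by norm_num)) (by norm_num)
  have e3 : (l.2.2 : ℝ) * log φ ≤ 2 ^ 25 * 0.48125 :=
    mul_le_mul h3' log_goldenRatio_lt.le (log_nonneg one_lt_goldenRatio.le) (by norm_num)
  unfold logForm
  norm_num at e1 e2 e3
  linarith

section
variable {h n x y : ℕ}

theorem monomial_le_exp (hh : 5 ≤ h) (hn : 0 < n) (hx : x ≤ n) (hy : y ≤ n)
    (hnh : (n : ℝ) ≤ rexp (8 * h)) {l : ℕ × ℕ × ℕ} (hl : l ∈ exponentBox) {a b t : ℕ}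
    (hab : a + b ≤ t) :
    (((n * l.1 + x * l.2.2) ^ a * (n * l.2.1 + y * l.2.2) ^ b : ℕ) : ℝ) ≤
      rexp (11.61 * t * h) := by
  obtain ⟨h1, h2, h3⟩ := (mem_exponentBox _).1 hl
  have hh' : (5 : ℝ) ≤ h := by exact_mod_cast hh
  have key : ∀ {u v : ℕ}, u < 2 ^ 25 → v ≤ n → ((n * u + v * l.2.2 : ℕ) : ℝ) ≤
      rexp (11.61 * h) := fun {u v} hu hv => by
    have e1 : n * u + v * l.2.2 ≤ n * 2 ^ 26 := by
      calc n * u + v * l.2.2 ≤ n * 2 ^ 25 + n * 2 ^ 25 :=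
            add_le_add (Nat.mul_le_mul_left n hu.le) (Nat.mul_le_mul hv h3.le)
        _ = n * 2 ^ 26 := by ring
    calc ((n * u + v * l.2.2 : ℕ) : ℝ) ≤ (n * 2 ^ 26 : ℕ) := by exact_mod_cast e1
      _ = n * 2 ^ 26 := by push_cast; ring
      _ ≤ rexp (8 * h) * rexp (0.6932 * (26 : ℕ)) :=
        mul_le_mul hnh (two_pow_le_exp 26) (by positivity) (exp_pos _).le
      _ ≤ rexp (11.61 * h) := by
        rw [← exp_add, exp_le_exp]
        push_cast
        linarith
  push_cast
  have e1 := key h1 hx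
  have e2 := key (h2.trans (by norm_num)) hy
  push_cast at e1 e2
  calc _ ≤ rexp (11.61 * h) ^ a * rexp (11.61 * h) ^ b := by gcongr
    _ = rexp (11.61 * h) ^ (a + b) := (pow_add _ _ _).symm
    _ ≤ rexp (11.61 * h) ^ t := pow_le_pow_right₀ (one_le_exp (by positivity)) hab
    _ = rexp (11.61 * t * h) := by rw [← exp_nat_mul]; congr 1; ring

theorem degree_le_exp (hh : 5 ≤ h) : ((1640000000 * h : ℕ) : ℝ) ≤ rexp (6 * h) := by
  have hh' : (5 : ℝ) ≤ h := by exact_mod_cast hh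
  have e1 : (1640000000 : ℝ) ≤ rexp 25 := by
    have := le_exp_of_pow_le (a := 1640000000) (p := 25) (q := 1) (by norm_num) (by norm_num)
    simpa using this
  calc ((1640000000 * h : ℕ) : ℝ) = 1640000000 * h := by push_cast; ring
    _ ≤ rexp 25 * rexp h :=
      mul_le_mul e1 (by linarith [add_one_le_exp (h : ℝ)]) (by positivity) (exp_pos _).le
    _ ≤ rexp (6 * h) := by rw [← exp_add, exp_le_exp]; linarith

theorem growth_le_exp (hh : 5 ≤ h) {r c : ℝ} (hr : 0 ≤ r) (hc : r + 1.2 ≤ rexp (c - 1)) (N : ℕ) :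
    (rexp 1 * (r * h + 1 + h) / h) ^ N ≤ rexp (c * N) := by
  have hh' : (5 : ℝ) ≤ h := by exact_mod_cast hh
  rw [mul_comm c, exp_nat_mul]
  refine pow_le_pow_left₀ (by positivity) ?_ N
  have e1 : (r * h + 1 + h) / h ≤ rexp (c - 1) := by
    refine le_trans ?_ hc
    rw [div_le_iff₀ (by linarith)]
    linarith
  rw [mul_div_assoc]
  refine (mul_le_mul_of_nonneg_left e1 (exp_pos _).le).trans ?_
  rw [← exp_add, add_sub_cancel]

theorem norm_hasseDeriv_auxPoly_le_exp (hh : 5 ≤ h) {p : ℕ → ℤ} {B : ℝ}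
    (hp : ∀ i < 1640000000 * h, |(p i : ℝ)| ≤ B) (m : ℕ) {r c : ℝ} (hr : 0 ≤ r)
    (hc : r + 1.2 ≤ rexp (c - 1)) {z : ℂ} (hz : ‖z‖ ≤ r * h) :
    ‖((hasseDeriv m (auxPoly h (1640000000 * h) p)).map (algebraMap ℚ ℂ)).eval z‖ ≤
      B * rexp ((6 + c * 1640000000) * h) := by
  have hB : 0 ≤ B := (abs_nonneg _).trans (hp 0 (by omega))
  refine (norm_hasseDeriv_auxPoly_le (by omega) hp m hz).trans ?_
  calc _ ≤ rexp (6 * h) * B * rexp (c * (1640000000 * h : ℕ)) := by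
        gcongr
        · exact degree_le_exp hh
        · exact growth_le_exp hh hr hc _
    _ = B * rexp ((6 + c * 1640000000) * h) := by
        rw [mul_comm (rexp (6 * h)), mul_assoc, ← exp_add]
        push_cast
        ring_nf

theorem two_pow_mul_lcmUpto_pow_le_exp (hh : 0 < h) (a t : ℕ) :
    ((2 ^ (a * (1640000000 * h)) * Nat.lcmUpto h ^ t : ℕ) : ℝ) ≤
      rexp ((0.6932 * 1640000000 * a + 2.86 * t) * h) := by
  push_cast
  calc _ ≤ rexp (0.6932 * (a * (1640000000 * h) : ℕ)) * rexp (2.86 * h) ^ t := by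
        gcongr
        · exact two_pow_le_exp _
        · exact lcmUpto_le_exp hh
    _ = _ := by
        rw [← exp_nat_mul, ← exp_add]
        push_cast
        ring_nf

theorem dvd_lcmUpto {h t : ℕ} (ht : 0 < t) (hth : t ≤ h) : t ∣ Nat.lcmUpto h :=
  Finset.dvd_lcm (f := id) (Finset.mem_Icc.2 ⟨ht, hth⟩)

theorem auxPoly_single (h : ℕ) {N i : ℕ} (hi : i < N) :
    auxPoly h N (Pi.single i 1) = feldPoly h i := by
  rw [auxPoly, Finset.sum_eq_single i]
  · simp
  · intro j _ hj
    simp [hj]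
  · intro hi'
    exact absurd (Finset.mem_range.2 hi) hi'

theorem abs_hasseDeriv_feldPoly_le_exp (hh : 5 ≤ h) {i : ℕ} (hi : i < 1640000000 * h) (m : ℕ) {u : ℕ}
    (hu : u < 1024 * h) :
    |(((hasseDeriv m (feldPoly h i)).eval (u : ℚ) : ℚ) : ℝ)| ≤
      rexp ((6 + 7.95 * 1640000000) * h) := by
  have hc := le_exp_of_pow_le (a := 1024 + 1.2) (p := 139) (q := 20) (by norm_num) (by norm_num)
  have h1 := norm_hasseDeriv_auxPoly_le_exp hh (p := Pi.single i 1) (B := 1) (fun j _ => by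
      rcases eq_or_ne j i with rfl | hj
      · simp
      · simp [hj]) m (r := 1024) (c := 7.95) (by norm_num)
    (hc.trans_eq (by norm_num)) (z := ((u : ℚ) : ℂ)) (by
      rw [Rat.cast_natCast, Complex.norm_natCast]
      exact_mod_cast hu.le)
  rw [auxPoly_single h hi, eval_map_ofReal_ratCast, one_mul] at h1
  refine le_trans (le_of_eq ?_) h1
  rw [← Complex.ofReal_ratCast, Complex.norm_real, norm_eq_abs]

theorem exists_auxVanishes_exponentBox (hh : 5 ≤ h) (hn : 0 < n) (hx : x ≤ n) (hy : y ≤ n)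
    (hnh : (n : ℝ) ≤ rexp (8 * h)) :
    ∃ p : ℕ × ℕ × ℕ → ℕ → ℤ, (∃ l ∈ exponentBox, ∃ i < 1640000000 * h, p l i ≠ 0) ∧
      (∀ l i, |(p l i : ℝ)| ≤ rexp (25810000000 * h)) ∧
      AuxVanishes (fun l => auxPoly h (1640000000 * h) (p l)) n x y exponentBox 3288334336 0
        (2 * (512 * h)) := by
  have hh' : (5 : ℝ) ≤ h := by exact_mod_cast hh
  have hd := Nat.lcmUpto_pos h
  obtain ⟨p, hp0, hp, hv⟩ := exists_auxVanishes (h := h) (N := 1640000000 * h) (n := n) (x := x)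
    (y := y) (T := 3288334336) (S := 512 * h) (I := exponentBox)
    (D := 2 ^ (1 * (1640000000 * h)) * Nat.lcmUpto h ^ 3288334336) (A := rexp (129000000000 * h))
    (by norm_num) (by omega) (one_le_exp (by positivity))
    (fun m₀ hm₀ i hi u => by
      obtain ⟨c, hc⟩ := exists_int_hasseDeriv_auxPoly (h := h) (by omega)
        (fun t ht hth => dvd_lcmUpto ht hth) (1640000000 * h) (Pi.single i 1) hm₀.le u 0
      rw [auxPoly_single h hi, pow_zero, div_one] at hc
      refine ⟨c, ?_⟩
      rw [← hc]
      push_cast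
      rfl)
    (fun m hm l hl i hi u hu => by
      have e1 := two_pow_mul_lcmUpto_pow_le_exp (h := h) (by omega) 1 3288334336
      have e2 := abs_hasseDeriv_feldPoly_le_exp hh hi m.1 (u := u) (by omega)
      have e3 := monomial_le_exp hh hn hx hy hnh hl (a := m.2.1) (b := m.2.2) (t := 3288334336)
        (by omega)
      have e4 : (u : ℝ) * logForm l ≤ 1024 * h * 65300000 :=
        mul_le_mul (by exact_mod_cast (by omega : u ≤ 1024 * h)) (logForm_le hl) (logForm_nonneg l)
          (by positivity)
      refine (mul_le_mul (mul_le_mul (mul_le_mul e1 e2 (abs_nonneg _) (exp_pos _).le) e3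
        (Nat.cast_nonneg _) (by positivity)) (exp_le_exp.2 e4) (exp_pos _).le (by positivity)).trans ?_
      rw [← exp_add, ← exp_add, ← exp_add, exp_le_exp]
      push_cast
      linarith)
    (by positivity)
    (by
      rw [card_exponentBox]
      norm_num
      omega)
  refine ⟨p, hp0, fun l i => (hp l i).trans ?_, hv⟩
  calc _ ≤ (rexp 55 * rexp (6 * h) * rexp (129000000000 * h)) ^ (1 / 5 : ℝ) := by
        gcongr
        · exact card_exponentBox_le
        · exact degree_le_exp hh
    _ ≤ rexp (25810000000 * h) := by
        rw [← exp_add, ← exp_add, ← exp_mul, exp_le_exp]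
        linarith
end

end

section

open Polynomial Real
open scoped goldenRatio

theorem step_cost_le {J : ℕ} (hJ : J < 25) :
    0.6932 * 1640000000 * ((J + 2 : ℕ) : ℝ) + 14.47 * (98 * 2 ^ (24 - J) : ℕ) ≤ 29600000000 := by
  interval_cases J <;> norm_num

theorem two_pow_mul_two_pow_sub {J : ℕ} (hJ : J < 25) : 2 ^ J * 2 ^ (24 - J) = 2 ^ 24 := by
  rw [← pow_add]
  congr 1
  omega

theorem interpolation_factor_le {h J : ℕ} (hh : 5 ≤ h) (hJ : J < 25) :
    ((2 ^ J * (512 * h) : ℕ) : ℝ) * (2 * (512 * h) : ℕ) *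
      (1 + 2 * (2 * rexp 1 * (23.5 + 1)) ^ (2 ^ J * (512 * h))) ^ (2 * (98 * 2 ^ (24 - J))) +
      23.5 * (2 * (512 * h) : ℕ) ≤ rexp (9000000000000 * h) := by
  have hh' : (5 : ℝ) ≤ h := by exact_mod_cast hh
  have hz : 2 * rexp 1 * (23.5 + 1) ≤ rexp 4.9 := by
    have h1 := le_exp_of_pow_le (a := 2 * 2.7182818286 * (23.5 + 1)) (p := 49) (q := 10)
      (by norm_num) (by norm_num)
    have h2 : ((49 : ℕ) : ℝ) / (10 : ℕ) = 4.9 := by norm_num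
    rw [h2] at h1
    refine le_trans ?_ h1
    linarith [exp_one_lt_d9]
  have h3 : (3 : ℝ) ≤ rexp 1.28 := by
    have := le_exp_of_pow_le (a := 3) (p := 32) (q := 25) (by norm_num) (by norm_num)
    norm_num at this ⊢
    exact this
  set M : ℕ := 2 ^ J * (512 * h) with hM
  have hM1 : 512 * h ≤ M := Nat.le_mul_of_pos_left _ (by positivity)
  have hM' : (2560 : ℝ) ≤ M := by
    exact_mod_cast (by omega : 2560 ≤ M)
  have hpow : 1 + 2 * (2 * rexp 1 * (23.5 + 1)) ^ M ≤ rexp (4.91 * M) := by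
    have h1 : (2 * rexp 1 * (23.5 + 1)) ^ M ≤ rexp (4.9 * M) := by
      rw [mul_comm 4.9, exp_nat_mul]
      exact pow_le_pow_left₀ (by positivity) hz M
    have h2 : 1 ≤ rexp (4.9 * M) := one_le_exp (by positivity)
    calc _ ≤ 3 * rexp (4.9 * M) := by linarith
      _ ≤ rexp 1.28 * rexp (4.9 * M) := by gcongr
      _ ≤ _ := by rw [← exp_add, exp_le_exp]; linarith
  have hMt : M * (98 * 2 ^ (24 - J)) = 841813590016 * h := by
    calc M * (98 * 2 ^ (24 - J)) = (2 ^ J * 2 ^ (24 - J)) * (512 * 98 * h) := by rw [hM]; ring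
      _ = _ := by rw [two_pow_mul_two_pow_sub hJ]; ring
  have hMt' : (M : ℝ) * (98 * 2 ^ (24 - J) : ℕ) = 841813590016 * h := by exact_mod_cast hMt
  have hpow2 : (1 + 2 * (2 * rexp 1 * (23.5 + 1)) ^ M) ^ (2 * (98 * 2 ^ (24 - J))) ≤
      rexp (8300000000000 * h) := by
    refine (pow_le_pow_left₀ (by positivity) hpow _).trans ?_
    rw [← exp_nat_mul, exp_le_exp]
    push_cast at hMt' ⊢
    nlinarith
  have hM2 : (M : ℝ) ≤ 2 ^ 34 * h := by
    have : M ≤ 2 ^ 25 * (512 * h) := Nat.mul_le_mul_right _ (Nat.pow_le_pow_right (by norm_num) hJ.le)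
    have h' : (M : ℝ) ≤ (2 ^ 25 * (512 * h) : ℕ) := by exact_mod_cast this
    push_cast at h'
    linarith
  have hh2 : (h : ℝ) ≤ rexp h := by linarith [add_one_le_exp (h : ℝ)]
  have hX : 1 ≤ rexp (8300000000000 * h) := one_le_exp (by positivity)
  have h45 : (2 : ℝ) ^ 45 ≤ rexp (0.6932 * (45 : ℕ)) := two_pow_le_exp 45
  push_cast
  calc (M : ℝ) * (2 * (512 * h)) * (1 + 2 * (2 * rexp 1 * (23.5 + 1)) ^ M) ^ (2 * (98 * 2 ^ (24 - J)))
        + 23.5 * (2 * (512 * h))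
      ≤ 2 ^ 34 * h * (2 * (512 * h)) * rexp (8300000000000 * h) + 2 ^ 44 * (h * h) *
        rexp (8300000000000 * h) := by
        gcongr ?_ + ?_
        · gcongr
        · have : 23.5 * (2 * (512 * h)) ≤ 2 ^ 44 * ((h : ℝ) * h) := by nlinarith
          nlinarith [mul_nonneg (by positivity : (0 : ℝ) ≤ 2 ^ 44 * ((h : ℝ) * h)) (sub_nonneg.2 hX)]
    _ = 2 ^ 45 * (h * h) * rexp (8300000000000 * h) := by ring
    _ ≤ rexp (0.6932 * (45 : ℕ)) * (rexp h * rexp h) * rexp (8300000000000 * h) := by gcongr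
    _ ≤ _ := by
      rw [← exp_add, ← exp_add, ← exp_add, exp_le_exp]
      push_cast
      linarith

section
variable {h n x y : ℕ}

theorem AuxVanishes.succ_exponentBox (hh : 5 ≤ h) (hn : 0 < n) (hx : x ≤ n) (hy : y ≤ n)
    (hnh : (n : ℝ) ≤ rexp (8 * h))
    (hΛ : |n * log φ - x * log 2 - y * log 3| ≤ rexp (-(12280000000000 * h)))
    {p : ℕ × ℕ × ℕ → ℕ → ℤ} (hp : ∀ l i, |(p l i : ℝ)| ≤ rexp (25810000000 * h))
    {l₀ : ℕ × ℕ × ℕ} (hl₀ : l₀ ∈ exponentBox) {J : ℕ} (hJ : J < 25)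
    (H : AuxVanishes (fun l => auxPoly h (1640000000 * h) (p l)) n x y
      (residueClass exponentBox l₀ J) (98 * 2 ^ (25 - J)) J (2 * (512 * h))) :
    AuxVanishes (fun l => auxPoly h (1640000000 * h) (p l)) n x y
      (residueClass exponentBox l₀ (J + 1)) (98 * 2 ^ (25 - (J + 1))) (J + 1) (2 * (512 * h)) := by
  have hh' : (5 : ℝ) ≤ h := by exact_mod_cast hh
  have hn' : (1 : ℝ) ≤ n := by exact_mod_cast hn
  have hJ1 : 25 - (J + 1) = 24 - J := by omega
  have hJ2 : 25 - J = 24 - J + 1 := by omega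
  have hcost := step_cost_le hJ
  have hVm := interpolation_factor_le hh hJ
  have hpt := two_pow_mul_two_pow_sub hJ
  rw [hJ1]
  rw [hJ2] at H
  set t : ℕ := 98 * 2 ^ (24 - J) with ht
  have ht0 : 0 < t := by positivity
  have hμ : 2 ^ J * (512 * h) * t = 841813590016 * h := by
    calc 2 ^ J * (512 * h) * t = (2 ^ J * 2 ^ (24 - J)) * (512 * 98 * h) := by rw [ht]; ring
      _ = _ := by rw [hpt]; ring
  set D : ℕ := 2 ^ ((J + 2) * (1640000000 * h)) * Nat.lcmUpto h ^ t with hD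
  set B : ℝ := rexp (25810000000 * h) * rexp ((6 + 11.1 * 1640000000) * h) * rexp (11.61 * t * h)
    with hB
  have hD1 : (1 : ℝ) ≤ D := by
    have : 0 < D := by have := Nat.lcmUpto_pos h; positivity
    exact_mod_cast this
  have hB1 : 1 ≤ B := by
    rw [hB, ← exp_add, ← exp_add]
    exact one_le_exp (by positivity)
  have hI1 : (1 : ℝ) ≤ exponentBox.card := by
    exact_mod_cast Finset.card_pos.2 ⟨l₀, hl₀⟩
  have hDB : exponentBox.card * (D * B) ≤ rexp (73630000000 * h) := by
    have e1 := two_pow_mul_lcmUpto_pow_le_exp (h := h) (by omega) (J + 2) t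
    refine (mul_le_mul card_exponentBox_le (mul_le_mul e1 le_rfl (by positivity) (exp_pos _).le)
      (by positivity) (exp_pos _).le).trans ?_
    rw [hB, ← exp_add, ← exp_add, ← exp_add, ← exp_add, exp_le_exp]
    nlinarith
  have hX : exponentBox.card * (D * B * rexp (65300000 * (2 * (512 * h) : ℕ))) ≤
      rexp (140500000000 * h) := by
    rw [← mul_assoc]
    refine (mul_le_mul_of_nonneg_right hDB (exp_pos _).le).trans ?_
    rw [← exp_add, exp_le_exp]
    push_cast
    linarith
  refine AuxVanishes.succ (T := 98 * 2 ^ (24 - J + 1)) (μ := t) (ρ := 23.5) (w := 65300000)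
    (B := B) (ε := rexp (-(12270000000000 * h))) (Vm := rexp (9000000000000 * h)) (D := D)
    hn (by omega) H ht0 ?_ (by norm_num) ?_ (fun l hl => logForm_le hl) (by norm_num) ?_
    (exp_pos _).le ?_ ?_ ?_ ?_ ?_
  · rw [ht, pow_succ]; omega
  · intro m hm l hl z hz
    have hc := le_exp_of_pow_le (a := 23.5 * 1024 + 1.2) (p := 101) (q := 10) (by norm_num)
      (by norm_num)
    refine mul_le_mul (norm_hasseDeriv_auxPoly_le_exp hh (fun i _ => hp l i) _
      (r := 23.5 * 1024) (by norm_num) (hc.trans_eq (by norm_num)) (hz.trans_eq ?_))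
      (monomial_le_exp hh hn hx hy hnh hl (by omega)) (Nat.cast_nonneg _) (by positivity)
    push_cast
    ring
  · intro l hl
    have h3 : (l.2.2 : ℝ) ≤ 2 ^ 25 := by
      exact_mod_cast ((mem_exponentBox _).1 hl).2.2.le
    rw [abs_div, abs_mul, Nat.abs_cast, Nat.abs_cast]
    refine (div_le_self (by positivity) hn').trans ?_
    calc _ ≤ rexp (0.6932 * (25 : ℕ)) * rexp (-(12280000000000 * h)) :=
          mul_le_mul (h3.trans (two_pow_le_exp 25)) hΛ (abs_nonneg _) (exp_pos _).le
      _ ≤ _ := by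
        rw [← exp_add, exp_le_exp]
        push_cast
        linarith
  · exact_mod_cast hVm
  · rw [← exp_add]
    exact exp_le_one_iff.2 (by linarith)
  · intro m₀ hm₀ l hl u
    obtain ⟨c, hc⟩ := exists_int_hasseDeriv_auxPoly (h := h) (by omega)
      (fun t ht hth => dvd_lcmUpto ht hth) (1640000000 * h) (p l) hm₀.le u (J + 1)
    refine ⟨c, ?_⟩
    rw [← hc, hD]
    push_cast
    rfl
  · exact one_le_mul_of_one_le_of_one_le hI1 (one_le_mul_of_one_le_of_one_le
      (one_le_mul_of_one_le_of_one_le hD1 hB1) (one_le_exp (by positivity)))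
  · rw [hμ]
    have hg : (1 / (2 * (23.5 - 1)) : ℝ) ^ (841813590016 * h) ≤
        rexp (-(3.8 * (841813590016 * h))) := by
      have h1 : rexp 3.8 ≤ 45 := by
        have h2 : rexp 3.8 ^ 5 ≤ 45 ^ 5 := by
          rw [← exp_nat_mul, show ((5 : ℕ) : ℝ) * 3.8 = (19 : ℕ) by norm_num, ← exp_one_pow]
          refine (pow_le_pow_left₀ (exp_pos _).le exp_one_lt_d9.le 19).trans ?_
          norm_num
        exact le_of_pow_le_pow_left₀ (by norm_num) (by norm_num) h2
      have h2 : (1 / (2 * (23.5 - 1)) : ℝ) ≤ rexp (-3.8) := by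
        rw [exp_neg, show (1 / (2 * (23.5 - 1)) : ℝ) = 45⁻¹ by norm_num]
        exact inv_anti₀ (exp_pos _) h1
      refine (pow_le_pow_left₀ (by norm_num) h2 _).trans_eq ?_
      rw [← exp_nat_mul]
      push_cast
      ring_nf
    set X := exponentBox.card * (D * B * rexp (65300000 * (2 * (512 * h) : ℕ))) with hXd
    have hX0 : 0 ≤ X := by positivity
    have hX15 : X ^ 15 ≤ rexp (2107500000000 * h) := by
      refine (pow_le_pow_left₀ hX0 hX 15).trans_eq ?_
      rw [← exp_nat_mul]
      push_cast
      ring_nf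
    calc _ = (exponentBox.card * (D * B)) * rexp (65300000 * (2 * (512 * h) : ℕ) * (1 + 23.5) / 2 + 1)
          * (1 / (2 * (23.5 - 1))) ^ (841813590016 * h) * X ^ 15 +
          2 * (X * (rexp (-(12270000000000 * h)) * rexp (9000000000000 * h)) * X ^ 15) := by
          rw [hXd]; ring
      _ ≤ rexp (73630000000 * h) * rexp (65300000 * (2 * (512 * h) : ℕ) * (1 + 23.5) / 2 + 1) *
          rexp (-(3.8 * (841813590016 * h))) * rexp (2107500000000 * h) +
          2 * (rexp (140500000000 * h) * (rexp (-(12270000000000 * h)) * rexp (9000000000000 * h)) *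
            rexp (2107500000000 * h)) := by gcongr
      _ ≤ rexp (-2) + 2 * rexp (-2) := by
        rw [← exp_add, ← exp_add, ← exp_add, ← exp_add, ← exp_add, ← exp_add]
        gcongr <;> push_cast <;> linarith
      _ < 1 := by
        have h1 : rexp (-2) * rexp 2 = 1 := by rw [← exp_add]; norm_num
        have h2 : rexp 2 = rexp 1 * rexp 1 := by rw [← exp_add]; norm_num
        nlinarith [exp_one_gt_d9, exp_pos (-2)]

theorem abs_linearForm_gt (hh : 5 ≤ h) (hn : 0 < n) (hx : x ≤ n) (hy : y ≤ n)
    (hnh : (n : ℝ) ≤ rexp (8 * h)) :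
    rexp (-(12280000000000 * h)) < |n * log φ - x * log 2 - y * log 3| := by
  by_contra! hΛ
  obtain ⟨p, ⟨l₀, hl₀, i, hi, hpi⟩, hp, hv⟩ := exists_auxVanishes_exponentBox hh hn hx hy hnh
  have key : ∀ J ≤ 25, AuxVanishes (fun l => auxPoly h (1640000000 * h) (p l)) n x y
      (residueClass exponentBox l₀ J) (98 * 2 ^ (25 - J)) J (2 * (512 * h)) := by
    intro J
    induction J with
    | zero =>
      intro _
      rw [residueClass_zero]
      exact hv
    | succ J ih => exact fun hJ => (ih (by omega)).succ_exponentBox hh hn hx hy hnh hΛ hp hl₀ hJ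
  have hlast := key 25 le_rfl
  rw [residueClass_exponentBox hl₀] at hlast
  have hne := auxPoly_ne_zero h hi hpi
  have hroot : ∀ v < 1640000000 * h, (auxPoly h (1640000000 * h) (p l₀)).eval
      (((2 * v + 1 : ℕ) : ℚ) / 2 ^ 25) = 0 := by
    intro v hv
    have h0 := hlast (0, 0, 0) (by norm_num) (2 * v + 1) ⟨v, rfl⟩ (by omega)
    rw [auxSum, Finset.sum_singleton] at h0
    simpa [exp_ne_zero] using h0
  refine hne (eq_zero_of_natDegree_lt_card_of_eval_eq_zero _
    (f := fun v : Fin (1640000000 * h) => ((2 * (v : ℕ) + 1 : ℕ) : ℚ) / 2 ^ 25) ?_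
    (fun v => hroot v v.2) ?_)
  · intro a b hab
    have h1 : ((2 * (a : ℕ) + 1 : ℕ) : ℚ) = (2 * (b : ℕ) + 1 : ℕ) :=
      (div_left_inj' (by norm_num)).1 hab
    have h2 : 2 * (a : ℕ) + 1 = 2 * (b : ℕ) + 1 := by exact_mod_cast h1
    exact Fin.ext (by omega)
  · rw [Fintype.card_fin]
    exact natDegree_auxPoly_lt h (by omega) _
end

end

section
open Real
open scoped goldenRatio

theorem cast_lucas (n : ℕ) : (lucas n : ℝ) = φ ^ n + ψ ^ n := by
  induction n using Nat.twoStepInduction with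
  | zero => norm_num [lucas]
  | one => simp [lucas, goldenRatio_add_goldenConj]
  | more n h0 h1 =>
    rw [lucas, Int.cast_add, h0, h1, pow_add φ n 2, pow_add ψ n 2, goldenRatio_sq, goldenConj_sq]
    ring

theorem lucas_le_two_pow {n : ℕ} (hn : 0 < n) : lucas n ≤ 2 ^ n := by
  induction n using Nat.twoStepInduction with
  | zero => omega
  | one => norm_num [lucas]
  | more n h0 h1 =>
    have h1 := h1 n.succ_pos
    rcases n.eq_zero_or_pos with rfl | hn
    · norm_num [lucas]
    · have h0 := h0 hn
      rw [lucas, pow_succ]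
      rw [pow_succ] at h1 ⊢
      have : (0 : ℤ) < 2 ^ n := by positivity
      linarith

theorem abs_goldenConj_pow_le_one (n : ℕ) : |ψ ^ n| ≤ 1 := by
  rw [abs_pow]
  exact pow_le_one₀ (abs_nonneg _)
    (abs_le.2 ⟨neg_one_lt_goldenConj.le, goldenConj_neg.le.trans zero_le_one⟩)

theorem abs_log_le_two_mul {t : ℝ} (ht : |t - 1| ≤ 1 / 2) : |log t| ≤ 2 * |t - 1| := by
  have h := abs_le.1 ht
  have ht0 : 0 < t := by linarith
  refine abs_le.2 ⟨?_, ?_⟩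
  · have h1 := one_sub_inv_le_log_of_pos ht0
    have h2 : 1 - t⁻¹ = (t - 1) / t := by field_simp
    rw [h2] at h1
    refine le_trans ?_ h1
    rw [le_div_iff₀ ht0]
    rcases abs_cases (t - 1) with ⟨e, _⟩ | ⟨e, _⟩ <;> rw [e] <;> nlinarith
  · linarith [log_le_sub_one_of_pos ht0, le_abs_self (t - 1), abs_nonneg (t - 1)]

theorem lt_log_goldenRatio : 0.48 < log φ := by
  rw [lt_log_iff_exp_lt goldenRatio_pos]
  have h1 : rexp 0.48 ≤ 1.618 := by
    refine le_of_pow_le_pow_left₀ (n := 25) (by norm_num) (by norm_num) ?_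
    rw [← exp_nat_mul, show ((25 : ℕ) : ℝ) * 0.48 = (12 : ℕ) by norm_num, ← exp_one_pow]
    exact (pow_le_pow_left₀ (exp_pos _).le exp_one_lt_d9.le 12).trans (by norm_num)
  have h5 : 2.2360 < √5 := by
    rw [lt_sqrt (by norm_num)]; norm_num
  refine h1.trans_lt ?_
  norm_num [goldenRatio] at h5 ⊢
  linarith

theorem abs_linearForm_le {n n₁ x y : ℕ} (h0 : (0 : ℤ) < lucas n - 2 ^ x * 3 ^ y)
    (h1 : lucas n - 2 ^ x * 3 ^ y < lucas n₁) (hd : 4 ≤ (n : ℝ) - n₁) :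
    |n * log φ - x * log 2 - y * log 3| ≤ 6 * rexp (-(0.48 * ((n : ℝ) - n₁))) := by
  have hφ : (1 : ℝ) ≤ φ := one_lt_goldenRatio.le
  have hlog := lt_log_goldenRatio
  have h0' : (0 : ℝ) < (lucas n : ℝ) - 2 ^ x * 3 ^ y := by exact_mod_cast h0
  have h1' : (lucas n : ℝ) - 2 ^ x * 3 ^ y < lucas n₁ := by exact_mod_cast h1
  rw [cast_lucas] at h0' h1'
  rw [cast_lucas] at h1'
  have hψ := abs_le.1 (abs_goldenConj_pow_le_one n)
  have hψ₁ := abs_le.1 (abs_goldenConj_pow_le_one n₁)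
  have hp : 1 ≤ φ ^ n₁ := one_le_pow₀ hφ
  have hpn : 0 < φ ^ n := by positivity
  set t : ℝ := 2 ^ x * 3 ^ y / φ ^ n with ht
  have hquot : φ ^ n₁ / φ ^ n ≤ rexp (-(0.48 * ((n : ℝ) - n₁))) := by
    rw [← exp_log goldenRatio_pos, ← exp_nat_mul, ← exp_nat_mul, ← exp_sub, exp_le_exp]
    nlinarith
  have hsub : |t - 1| ≤ 3 * rexp (-(0.48 * ((n : ℝ) - n₁))) := by
    refine le_trans ?_ (mul_le_mul_of_nonneg_left hquot (by norm_num))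
    rw [ht, div_sub_one hpn.ne', abs_div, abs_of_pos hpn, ← mul_div_assoc]
    gcongr
    exact abs_le.2 ⟨by linarith, by linarith⟩
  have hexp : 3 * rexp (-(0.48 * ((n : ℝ) - n₁))) ≤ 1 / 2 := by
    have h6 : 6 ≤ rexp 1.92 := by
      have := le_exp_of_pow_le (a := 6) (p := 48) (q := 25) (by norm_num) (by norm_num)
      norm_num at this ⊢
      exact this
    have h7 : rexp (-(0.48 * ((n : ℝ) - n₁))) ≤ rexp (-1.92) := exp_le_exp.2 (by linarith)
    have h8 : rexp (-1.92) * rexp 1.92 = 1 := by rw [← exp_add]; norm_num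
    nlinarith [exp_pos (-1.92)]
  have hΛ : n * log φ - x * log 2 - y * log 3 = -log t := by
    rw [ht, log_div (by positivity) hpn.ne', log_mul (by positivity) (by positivity), log_pow,
      log_pow, log_pow]
    ring
  rw [hΛ, abs_neg]
  linarith [abs_log_le_two_mul (hsub.trans hexp)]

theorem lt_log_of_mul_log_le {n : ℕ} (hn : 1500 < n) (h : 4 * 10 ^ 12 * log n ≤ n) :
    32 < log n := by
  have hn0 : (0 : ℝ) < n := by exact_mod_cast (by omega : 0 < n)
  have hstep : ∀ {m b : ℕ}, (m : ℝ) ≤ log n → 2.7182818286 ^ b < (4 * 10 ^ 12 * m : ℝ) →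
      (b : ℝ) < log n := fun {m b} hm hb => by
    rw [lt_log_iff_exp_lt hn0, ← exp_one_pow]
    refine (pow_le_pow_left₀ (exp_pos _).le exp_one_lt_d9.le b).trans_lt (hb.trans_le ?_)
    linarith
  have h1 : ((1 : ℕ) : ℝ) ≤ log n := by
    rw [le_log_iff_exp_le hn0]
    have : (1500 : ℝ) < n := by exact_mod_cast hn
    push_cast
    linarith [exp_one_lt_d9]
  have h2 := hstep (b := 29) h1 (by norm_num)
  have h3 := hstep (b := 32) h2.le (by norm_num)
  exact_mod_cast h3

end

theorem pos_c_gap_n_bound (c : ℤ) (hc : 0 < c) (n n₁ x x₁ y y₁ : ℕ)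
    (h1 : c = lucas n - 2 ^ x * 3 ^ y) (h2 : c = lucas n₁ - 2 ^ x₁ * 3 ^ y₁)
    (hnn : n₁ < n) (hn : 1500 < n) :
    (n : ℝ) - n₁ < 4 * 10 ^ 12 * Real.log n := by
  by_contra! hd
  have hn0 : (0 : ℝ) < n := by exact_mod_cast (by omega : 0 < n)
  have hlog := lt_log_of_mul_log_le hn (hd.trans (by linarith [(Nat.cast_nonneg n₁ : (0 : ℝ) ≤ n₁)]))
  have hΛ := abs_linearForm_le (n := n) (n₁ := n₁) (x := x) (y := y) (h1 ▸ hc) (by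
    rw [← h1, h2]
    have : (0 : ℤ) < 2 ^ x₁ * 3 ^ y₁ := by positivity
    linarith) (by linarith)
  have hpow := lucas_le_two_pow (n := n) (by omega)
  have hlt : 2 ^ x * 3 ^ y < 2 ^ n := by
    have : (2 : ℤ) ^ x * 3 ^ y < 2 ^ n := by linarith
    exact_mod_cast this
  have hx : x ≤ n := ((Nat.pow_lt_pow_iff_right (by norm_num)).1
    ((Nat.le_mul_of_pos_right _ (by positivity)).trans_lt hlt)).le
  have hy : y ≤ n := ((Nat.pow_lt_pow_iff_right (a := 2) (by norm_num)).1
    (((Nat.pow_le_pow_left (by norm_num) y).trans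
      (Nat.le_mul_of_pos_left _ (by positivity))).trans_lt hlt)).le
  set h : ℕ := ⌈Real.log n / 8⌉₊ with hh
  have hle : Real.log n / 8 ≤ h := Nat.le_ceil _
  have hlt' : (h : ℝ) < Real.log n / 8 + 1 := Nat.ceil_lt_add_one (by linarith)
  have hh4 : 4 < h := by
    have : (4 : ℝ) < h := by linarith
    exact_mod_cast this
  have hh5 : (5 : ℝ) ≤ h := by exact_mod_cast hh4
  have hnh : (n : ℝ) ≤ Real.exp (8 * h) := by
    rw [← Real.log_le_iff_le_exp hn0]
    linarith
  refine absurd (abs_linearForm_gt hh4 (by omega) hx hy hnh) (not_lt.2 (hΛ.trans ?_))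
  have h6 : (6 : ℝ) ≤ Real.exp 5 := by linarith [Real.add_one_le_exp (5 : ℝ)]
  calc _ ≤ Real.exp 5 * Real.exp (-(0.48 * ((n : ℝ) - n₁))) := by gcongr
    _ ≤ _ := by
      rw [← Real.exp_add, Real.exp_le_exp]
      linarith
end
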